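/- For every ε > 0 and every δ > 0 there exist C > 0 and x₀ such that for all x > x₀ and all N satisfying exp( (log₃ x · log₄ x)/(δ·log₅ x) ) ≤ N ≤ exp( (log₂ x · log₃ x)/(3·log₄ x) ), the probability, over a prime p chosen uniformly from (x, 2x], that there exists a real y ≥ N with ∑_{n ≤ y} χ_p(n)/n ≤ 0, is at most C·exp( −exp( (log N · log₃ N)/((1 + ε)·log₂ N) ) ). -/

import Mathlib

open Finset
open scoped Classical

/-- The finite set of primes `p` with `x < p ≤ 2x`. -/
noncomputable def primesIn (x : ℝ) : Finset ℕ :=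
  (Finset.range (⌊2 * x⌋₊ + 1)).filter fun p => p.Prime ∧ x < (p : ℝ) ∧ (p : ℝ) ≤ 2 * x

/-! The Legendre symbol `χ_p` of a random prime `p ∈ (x, 2x]` is modelled by random completely
multiplicative signs. A Selberg majorant of the primes, combined with the cancellation of
`(n / l)` over odd `l` when `n` is not a square, bounds the even moments of `∑ a(n) χ_p(n)`, for
`n ≤ t` and `|a(n)| ≤ 1`, by those of the model, which in turn are controlled through random Euler
products and smooth numbers.

As `1 * χ_p` is nonnegative, `∑_{n ≤ t} χ_p(n) / n` can only fail to exceed `1 / (8 log t)` if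
another sum `∑_{n ≤ t} a(n) χ_p(n)` with `|a(n)| ≤ 1` has size at least `t / (16 log t)`. The high
moments make this unlikely, and a union bound over `N ≤ t ≤ t₀` with `log t₀ ≍ √(log x)` yields the
doubly exponential saving. From `t₀` on the partial sums hardly change any more for all but a few
primes: a large sieve inequality controls them along a grid of ratio about `1 + 1 / log x`, and
the periodicity of `χ_p` takes care of the tail. -/

open scoped BigOperators

/-! ### Random signs -/

/-- The completely multiplicative sign that is `-1` exactly at the primes belonging to `A`. Choosing
`A` uniformly among the subsets of a finite set `P` of primes gives a random completely
multiplicative function, the model for the Legendre symbol; expectations in this model are averages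
over `P.powerset`. The junk value at `n = 0` is `1`. -/
noncomputable def primeSign (A : Finset ℕ) (n : ℕ) : ℝ :=
  ∏ q ∈ A, (-1 : ℝ) ^ n.factorization q

/-- The `m`-th moment of the partial sums up to `t` of the random multiplicative function which is
random at the primes in `P` and trivial at all others. -/
noncomputable def signMoment (P : Finset ℕ) (t m : ℕ) : ℝ :=
  𝔼 A ∈ P.powerset, (∑ n ∈ Icc 1 t, primeSign A n) ^ m

section PrimeSign

variable {A P : Finset ℕ} {n : ℕ}

@[simp]
lemma primeSign_one : primeSign A 1 = 1 := by simp [primeSign]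

lemma primeSign_mul {m : ℕ} (hm : m ≠ 0) (hn : n ≠ 0) :
    primeSign A (m * n) = primeSign A m * primeSign A n := by
  simp only [primeSign, ← prod_mul_distrib, Nat.factorization_mul hm hn, Finsupp.add_apply, pow_add]

lemma primeSign_mul_self : primeSign A n * primeSign A n = 1 := by
  simp only [primeSign, ← prod_mul_distrib, ← mul_pow, neg_mul_neg, one_mul, one_pow,
    prod_const_one]

lemma abs_primeSign : |primeSign A n| = 1 := by
  simp [primeSign, abs_prod]

lemma primeSign_of_isSquare (h : IsSquare n) : primeSign A n = 1 := by
  obtain ⟨m, rfl⟩ := h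
  rcases eq_or_ne m 0 with rfl | hm
  · simp [primeSign]
  · rw [primeSign_mul hm hm, primeSign_mul_self]

lemma primeSign_of_prime {q : ℕ} (hq : q.Prime) : primeSign A q = if q ∈ A then -1 else 1 := by
  have h (p : ℕ) : (-1 : ℝ) ^ q.factorization p = if p = q then -1 else 1 := by
    rcases eq_or_ne p q with rfl | h
    · simp [hq.factorization]
    · simp [hq.factorization, h]
  simp only [primeSign, h, prod_ite_eq']

lemma prod_primeSign {ι : Type*} (s : Finset ι) {v : ι → ℕ} (hv : ∀ i ∈ s, v i ≠ 0) :
    ∏ i ∈ s, primeSign A (v i) = primeSign A (∏ i ∈ s, v i) := by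
  induction s using Finset.induction with
  | empty => simp
  | insert a s ha ih =>
    have hs : ∀ i ∈ s, v i ≠ 0 := fun i hi ↦ hv i (mem_insert_of_mem hi)
    rw [prod_insert ha, prod_insert ha, ih hs,
      primeSign_mul (hv a (mem_insert_self a s)) (prod_ne_zero_iff.2 hs)]

lemma expect_powerset_prod_ite {α : Type*} [DecidableEq α] (P : Finset α) (f g : α → ℝ) :
    𝔼 A ∈ P.powerset, ∏ q ∈ P, (if q ∈ A then f q else g q) = ∏ q ∈ P, (f q + g q) / 2 := by
  rw [expect_eq_sum_div_card, card_powerset, prod_div_distrib, prod_const, prod_add]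
  push_cast
  congr 1
  refine sum_congr rfl fun A hA ↦ ?_
  rw [prod_ite, filter_mem_eq_inter, inter_eq_right.2 (mem_powerset.1 hA), ← sdiff_eq_filter]

lemma primeSign_eq_prod_ite (hA : A ⊆ P) (n : ℕ) :
    primeSign A n = ∏ q ∈ P, if q ∈ A then (-1 : ℝ) ^ n.factorization q else 1 := by
  rw [prod_ite, filter_mem_eq_inter, inter_eq_right.2 hA, prod_const_one, mul_one, primeSign]

lemma expect_primeSign_nonneg (P : Finset ℕ) (n : ℕ) :
    0 ≤ 𝔼 A ∈ P.powerset, primeSign A n := by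
  rw [expect_congr rfl fun A hA ↦ primeSign_eq_prod_ite (mem_powerset.1 hA) n,
    expect_powerset_prod_ite]
  refine prod_nonneg fun q _ ↦ ?_
  rcases neg_one_pow_eq_or ℝ (n.factorization q) with h | h <;> norm_num [h]

end PrimeSign

section Moments

variable {P J : Finset ℕ} {c d : ℕ → ℝ}

lemma expect_pow_sum_mul_primeSign (P : Finset ℕ) (c : ℕ → ℝ) (h0 : 0 ∉ J) (m : ℕ) :
    𝔼 A ∈ P.powerset, (∑ n ∈ J, c n * primeSign A n) ^ m =
      ∑ v ∈ Fintype.piFinset fun _ : Fin m ↦ J,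
        (∏ i, c (v i)) * 𝔼 A ∈ P.powerset, primeSign A (∏ i, v i) := by
  simp_rw [sum_pow', expect_sum_comm, mul_expect, prod_mul_distrib]
  refine sum_congr rfl fun v hv ↦ expect_congr rfl fun A _ ↦ ?_
  rw [prod_primeSign univ fun i _ hi ↦ h0 (hi ▸ Fintype.mem_piFinset.1 hv i)]

/-- Moments are monotone in the coefficients because every mixed moment is nonnegative. -/
lemma expect_pow_sum_mul_primeSign_mono {J' : Finset ℕ} (P : Finset ℕ) (h0 : 0 ∉ J') (m : ℕ)
    (hJ : J ⊆ J') (hc : ∀ n ∈ J, 0 ≤ c n) (hcd : ∀ n ∈ J, c n ≤ d n) (hd : ∀ n ∈ J', 0 ≤ d n) :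
    𝔼 A ∈ P.powerset, (∑ n ∈ J, c n * primeSign A n) ^ m ≤
      𝔼 A ∈ P.powerset, (∑ n ∈ J', d n * primeSign A n) ^ m := by
  rw [expect_pow_sum_mul_primeSign P c (fun h ↦ h0 (hJ h)), expect_pow_sum_mul_primeSign P d h0]
  have hmem {I : Finset ℕ} {v : Fin m → ℕ} (hv : v ∈ Fintype.piFinset fun _ ↦ I) (i : Fin m) :
      v i ∈ I := Fintype.mem_piFinset.1 hv i
  calc _ ≤ ∑ v ∈ Fintype.piFinset fun _ : Fin m ↦ J,
        (∏ i, d (v i)) * 𝔼 A ∈ P.powerset, primeSign A (∏ i, v i) := by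
        refine sum_le_sum fun v hv ↦
          mul_le_mul_of_nonneg_right ?_ (expect_primeSign_nonneg P _)
        exact prod_le_prod (fun i _ ↦ hc _ (hmem hv i)) fun i _ ↦ hcd _ (hmem hv i)
    _ ≤ _ := by
        refine sum_le_sum_of_subset_of_nonneg
          (Fintype.piFinset_subset _ _ fun _ ↦ hJ) fun v hv _ ↦ ?_
        exact mul_nonneg (prod_nonneg fun i _ ↦ hd _ (hmem hv i)) (expect_primeSign_nonneg P _)

lemma expect_pow_sum_mul_primeSign_le_of_hasSum {S : Set ℕ} (h0 : 0 ∉ S) (hd : ∀ n ∈ S, 0 ≤ d n)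
    {F : Finset ℕ → ℝ}
    (hF : ∀ A ∈ P.powerset, HasSum (fun n : S ↦ d n * primeSign A n) (F A)) (hJ : ∀ n ∈ J, n ∈ S)
    (hc : ∀ n ∈ J, 0 ≤ c n) (hcd : ∀ n ∈ J, c n ≤ d n) (m : ℕ) :
    𝔼 A ∈ P.powerset, (∑ n ∈ J, c n * primeSign A n) ^ m ≤ 𝔼 A ∈ P.powerset, F A ^ m := by
  have hlim : Filter.Tendsto
      (fun U : Finset S ↦ 𝔼 A ∈ P.powerset, (∑ n ∈ U, d n * primeSign A n) ^ m) Filter.atTop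
      (nhds (𝔼 A ∈ P.powerset, F A ^ m)) := by
    simp only [expect_eq_sum_div_card]
    exact (tendsto_finsetSum _ fun A hA ↦ (hF A hA).pow m).div_const _
  refine ge_of_tendsto hlim ?_
  filter_upwards [Filter.eventually_ge_atTop (J.subtype (· ∈ S))] with U hU
  have hmap (A : Finset ℕ) : ∑ n ∈ U, d n * primeSign A n =
      ∑ n ∈ U.map (Function.Embedding.subtype _), d n * primeSign A n := by rw [sum_map]; rfl
  have hmem {n : ℕ} (hn : n ∈ U.map (Function.Embedding.subtype (· ∈ S))) : n ∈ S := by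
    obtain ⟨a, -, rfl⟩ := mem_map.1 hn
    exact a.2
  simp_rw [hmap]
  refine expect_pow_sum_mul_primeSign_mono P (fun h ↦ h0 (hmem h)) m (fun n hn ↦ ?_) hc hcd
    fun n hn ↦ hd n (hmem hn)
  exact mem_map.2 ⟨⟨n, hJ n hn⟩, hU (mem_subtype.2 hn), rfl⟩

end Moments

/-! ### Random Euler products -/

/-- The random Euler product `∏_{q ∈ P} (1 - f(q) q^{-σ})⁻¹` of the random multiplicative function
`f = primeSign A`. -/
noncomputable def randomEulerProduct (P : Finset ℕ) (σ : ℝ) (A : Finset ℕ) : ℝ :=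
  ∏ q ∈ P, if q ∈ A then (1 + (q : ℝ) ^ (-σ))⁻¹ else (1 - (q : ℝ) ^ (-σ))⁻¹

/-- The completely multiplicative function `n ↦ n^{-σ} f(n)` for `f = primeSign A`, bundled as a
monoid homomorphism so that Mathlib's Euler products apply. -/
noncomputable def rpowMulPrimeSignHom (A : Finset ℕ) (σ : ℝ) (hσ : 0 < σ) : ℕ →* ℝ where
  toFun n := (n : ℝ) ^ (-σ) * primeSign A n
  map_one' := by simp
  map_mul' m n := by
    have h0 : (0 : ℝ) ^ (-σ) = 0 := Real.zero_rpow (by linarith)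
    rcases eq_or_ne m 0 with rfl | hm
    · simp [h0]
    rcases eq_or_ne n 0 with rfl | hn
    · simp [h0]
    rw [primeSign_mul hm hn, Nat.cast_mul, Real.mul_rpow m.cast_nonneg n.cast_nonneg]
    ring

section EulerProduct

variable {P J : Finset ℕ} {σ : ℝ}

lemma rpow_neg_lt_one_of_prime {q : ℕ} (hq : q.Prime) (hσ : 0 < σ) : (q : ℝ) ^ (-σ) < 1 :=
  Real.rpow_lt_one_of_one_lt_of_neg (by exact_mod_cast hq.one_lt) (by linarith)

lemma two_rpow_neg_three_fifths_le : (2 : ℝ) ^ (-(3 / 5) : ℝ) ≤ 7 / 10 := by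
  rw [← pow_le_pow_iff_left₀ (by positivity) (by norm_num) (by norm_num : 5 ≠ 0),
    ← Real.rpow_natCast, ← Real.rpow_mul (by norm_num)]
  norm_num

lemma rpow_neg_le_of_prime {q : ℕ} (hq : q.Prime) (hσ : 3 / 5 ≤ σ) : (q : ℝ) ^ (-σ) ≤ 7 / 10 := by
  have h2 : (2 : ℝ) ≤ q := by exact_mod_cast hq.two_le
  calc (q : ℝ) ^ (-σ) ≤ (2 : ℝ) ^ (-σ) :=
        Real.rpow_le_rpow_of_nonpos (by norm_num) h2 (by linarith)
    _ ≤ (2 : ℝ) ^ (-(3 / 5) : ℝ) :=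
        Real.rpow_le_rpow_of_exponent_le (by norm_num) (by linarith)
    _ ≤ 7 / 10 := two_rpow_neg_three_fifths_le

lemma randomEulerProduct_pos (hP : ∀ p ∈ P, p.Prime) (hσ : 0 < σ) (A : Finset ℕ) :
    0 < randomEulerProduct P σ A := by
  refine prod_pos fun q hq ↦ ?_
  have h1 := rpow_neg_lt_one_of_prime (hP q hq) hσ
  split_ifs
  · positivity
  · exact inv_pos.2 (by linarith)

lemma hasSum_randomEulerProduct (hP : ∀ p ∈ P, p.Prime) (hσ : 0 < σ) (A : Finset ℕ) :
    HasSum (fun n : Nat.factoredNumbers P ↦ (n : ℝ) ^ (-σ) * primeSign A n)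
      (randomEulerProduct P σ A) := by
  have hnorm {p : ℕ} (hp : p.Prime) : ‖rpowMulPrimeSignHom A σ hσ p‖ < 1 := by
    change |(p : ℝ) ^ (-σ) * primeSign A p| < 1
    rw [abs_mul, abs_primeSign, mul_one, abs_of_nonneg (by positivity)]
    exact rpow_neg_lt_one_of_prime hp hσ
  have h := (EulerProduct.summable_and_hasSum_factoredNumbers_prod_filter_prime_geometric
    hnorm P).2
  convert! h using 1
  rw [randomEulerProduct, filter_true_of_mem hP]
  refine prod_congr rfl fun q hq ↦ ?_
  change _ = (1 - (q : ℝ) ^ (-σ) * primeSign A q)⁻¹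
  rw [primeSign_of_prime (hP q hq)]
  split_ifs <;> ring_nf

/-- Subtracting `e` removes (part of) the term `n = 1` of the Euler product. -/
lemma hasSum_randomEulerProduct_sub (hP : ∀ p ∈ P, p.Prime) (hσ : 0 < σ) (e : ℝ) (A : Finset ℕ) :
    HasSum (fun n : Nat.factoredNumbers P ↦
      ((n : ℝ) ^ (-σ) - if (n : ℕ) = 1 then e else 0) * primeSign A n)
      (randomEulerProduct P σ A - e) := by
  let one : Nat.factoredNumbers P :=
    ⟨1, Nat.mem_factoredNumbers'.2 fun p hp h ↦ absurd h hp.not_dvd_one⟩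
  have hone : HasSum (fun n ↦ if n = one then e else 0) e := hasSum_ite_eq one e
  convert! (hasSum_randomEulerProduct hP hσ A).sub hone using 1
  funext n
  simp only [one, Subtype.ext_iff]
  split_ifs with h
  · simp [h]
  · ring

lemma expect_pow_sum_mul_primeSign_le_randomEulerProduct (hP : ∀ p ∈ P, p.Prime) (hσ : 0 < σ)
    (hJ : ∀ n ∈ J, n ∈ Nat.factoredNumbers P) {c : ℕ → ℝ} {e : ℝ} (he : e ≤ 1) (m : ℕ)
    (hc : ∀ n ∈ J, 0 ≤ c n) (hcd : ∀ n ∈ J, c n ≤ (n : ℝ) ^ (-σ) - if n = 1 then e else 0) :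
    𝔼 A ∈ P.powerset, (∑ n ∈ J, c n * primeSign A n) ^ m ≤
      𝔼 A ∈ P.powerset, (randomEulerProduct P σ A - e) ^ m := by
  refine expect_pow_sum_mul_primeSign_le_of_hasSum (S := Nat.factoredNumbers P)
    (d := fun n ↦ (n : ℝ) ^ (-σ) - if n = 1 then e else 0) (fun h ↦ h.1 rfl) (fun n _ ↦ ?_)
    (fun A _ ↦ hasSum_randomEulerProduct_sub hP hσ e A) hJ hc hcd m
  split_ifs with h
  · simpa [h] using he
  · rw [sub_zero]
    positivity

lemma add_pow_add_sub_pow_div_two_le_cosh {h : ℝ} (h0 : 0 ≤ h) (h1 : h ≤ 1) (m : ℕ) :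
    ((1 + h) ^ m + (1 - h) ^ m) / 2 ≤ Real.cosh (m * h) := by
  have hadd : (1 + h) ^ m ≤ Real.exp (m * h) := by
    rw [Real.exp_nat_mul]
    gcongr
    linarith [Real.add_one_le_exp h]
  have hsub : (1 - h) ^ m ≤ Real.exp (-(m * h)) := by
    rw [← mul_neg, Real.exp_nat_mul]
    exact pow_le_pow_left₀ (by linarith) (by linarith [Real.add_one_le_exp (-h)]) m
  rw [Real.cosh_eq]
  linarith

lemma inv_one_sub_sq_le_exp {h : ℝ} (hh : h ^ 2 ≤ 1 / 2) :
    (1 - h ^ 2)⁻¹ ≤ Real.exp (2 * h ^ 2) := by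
  refine le_trans ?_ (Real.add_one_le_exp (2 * h ^ 2))
  rw [inv_le_iff_one_le_mul₀ (by linarith)]
  nlinarith [sq_nonneg h]

lemma inv_pow_average_le {h : ℝ} (h0 : 0 ≤ h) (h1 : h ≤ 7 / 10) (m : ℕ) :
    ((1 + h)⁻¹ ^ m + (1 - h)⁻¹ ^ m) / 2 ≤ Real.exp (2 * m * h ^ 2) * Real.cosh (m * h) := by
  have hpos : 0 < 1 - h := by linarith
  have : 0 < 1 + h := by linarith
  have hsq : 0 < 1 - h ^ 2 := by nlinarith
  calc ((1 + h)⁻¹ ^ m + (1 - h)⁻¹ ^ m) / 2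
      = (1 - h ^ 2)⁻¹ ^ m * (((1 + h) ^ m + (1 - h) ^ m) / 2) := by
        rw [show 1 - h ^ 2 = (1 + h) * (1 - h) by ring, mul_inv, mul_pow, inv_pow, inv_pow]
        field_simp
        ring
    _ ≤ Real.exp (2 * h ^ 2) ^ m * Real.cosh (m * h) := by
        gcongr
        · exact inv_one_sub_sq_le_exp (by nlinarith)
        · exact add_pow_add_sub_pow_div_two_le_cosh h0 (by linarith) m
    _ = _ := by rw [← Real.exp_nat_mul]; ring_nf

lemma expect_randomEulerProduct_pow_le (hP : ∀ p ∈ P, p.Prime) (hσ : 3 / 5 ≤ σ) (m : ℕ)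
    {u : ℕ → ℝ} (hu : ∀ q ∈ P, Real.cosh (m * (q : ℝ) ^ (-σ)) ≤ Real.exp (u q)) :
    𝔼 A ∈ P.powerset, randomEulerProduct P σ A ^ m ≤
      Real.exp (∑ q ∈ P, (2 * m * ((q : ℝ) ^ (-σ)) ^ 2 + u q)) := by
  simp_rw [randomEulerProduct, ← prod_pow, ite_pow]
  rw [expect_powerset_prod_ite, Real.exp_sum]
  refine prod_le_prod (fun q hq ↦ ?_) fun q hq ↦ ?_
  · have := inv_nonneg.2 (sub_nonneg.2 (rpow_neg_lt_one_of_prime (hP q hq)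
      (by linarith : 0 < σ)).le)
    positivity
  · rw [Real.exp_add]
    refine (inv_pow_average_le (by positivity) (rpow_neg_le_of_prime (hP q hq) hσ) m).trans ?_
    gcongr
    exact hu q hq

lemma expect_inv_randomEulerProduct_pow_le (hP : ∀ p ∈ P, p.Prime) (hσ : 0 < σ) (m : ℕ) :
    𝔼 A ∈ P.powerset, (randomEulerProduct P σ A)⁻¹ ^ m ≤
      Real.exp (∑ q ∈ P, (m * (q : ℝ) ^ (-σ)) ^ 2 / 2) := by
  simp_rw [randomEulerProduct, ← prod_inv_distrib, ← prod_pow, apply_ite (·⁻¹), inv_inv, ite_pow]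
  rw [expect_powerset_prod_ite, Real.exp_sum]
  refine prod_le_prod (fun q hq ↦ ?_) fun q hq ↦ ?_ <;>
    have hlt := rpow_neg_lt_one_of_prime (hP q hq) hσ
  · have : 0 ≤ 1 - (q : ℝ) ^ (-σ) := by linarith
    positivity
  · exact (add_pow_add_sub_pow_div_two_le_cosh (by positivity) hlt.le m).trans
      (Real.cosh_le_exp_half_sq _)

end EulerProduct

/-! ### Moments of sums of random signs -/

/-- The largest divisor of `n` composed of primes in `P`. -/
noncomputable def primePart (P : Finset ℕ) (n : ℕ) : ℕ :=
  (n.factorization.filter (· ∈ P)).prod fun q e ↦ q ^ e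

/-- The number of `n ≤ t` whose `P`-part is `b`. -/
noncomputable def primePartCount (P : Finset ℕ) (t b : ℕ) : ℕ :=
  #{n ∈ Icc 1 t | primePart P n = b}

section PrimePart

variable {P A : Finset ℕ} {n : ℕ}

lemma factorization_primePart (P : Finset ℕ) (n : ℕ) :
    (primePart P n).factorization = n.factorization.filter (· ∈ P) := by
  refine Nat.prod_pow_factorization_eq_self fun q hq ↦ ?_
  rw [Finsupp.support_filter, mem_filter, Nat.support_factorization] at hq
  exact Nat.prime_of_mem_primeFactors hq.1

lemma primePart_ne_zero (P : Finset ℕ) (n : ℕ) : primePart P n ≠ 0 := by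
  rw [primePart, Finsupp.prod]
  refine prod_ne_zero_iff.2 fun q hq ↦ ?_
  rw [Finsupp.support_filter, mem_filter, Nat.support_factorization] at hq
  exact pow_ne_zero _ (Nat.prime_of_mem_primeFactors hq.1).ne_zero

lemma primePart_one (P : Finset ℕ) : primePart P 1 = 1 := by
  rw [primePart, Nat.factorization_one, Finsupp.filter_zero, Finsupp.prod_zero_index]

lemma primePart_dvd (P : Finset ℕ) (hn : n ≠ 0) : primePart P n ∣ n := by
  rw [← Nat.factorization_le_iff_dvd (primePart_ne_zero P n) hn, factorization_primePart]
  intro q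
  rw [Finsupp.filter_apply]
  split_ifs <;> simp

lemma primePart_mem_factoredNumbers (P : Finset ℕ) (n : ℕ) :
    primePart P n ∈ Nat.factoredNumbers P := by
  refine Nat.mem_factoredNumbers_of_primeFactors_subset (primePart_ne_zero P n) fun q hq ↦ ?_
  rw [← Nat.support_factorization, factorization_primePart, Finsupp.support_filter,
    mem_filter] at hq
  exact hq.2

lemma primeSign_primePart (hA : A ⊆ P) (n : ℕ) : primeSign A (primePart P n) = primeSign A n := by
  refine prod_congr rfl fun q hq ↦ ?_
  rw [factorization_primePart, Finsupp.filter_apply, if_pos (hA hq)]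

lemma sum_primeSign_eq_sum_primePartCount_mul (hA : A ⊆ P) (t : ℕ) :
    ∑ n ∈ Icc 1 t, primeSign A n =
      ∑ b ∈ (Icc 1 t).image (primePart P), primePartCount P t b * primeSign A b := by
  rw [← sum_fiberwise_of_maps_to (g := primePart P) fun n hn ↦ mem_image_of_mem _ hn]
  refine sum_congr rfl fun b _ ↦ ?_
  rw [primePartCount, ← nsmul_eq_mul, ← sum_const]
  refine sum_congr rfl fun n hn ↦ ?_
  rw [← (mem_filter.1 hn).2, primeSign_primePart hA]

lemma primePartCount_le_div (P : Finset ℕ) (t b : ℕ) : primePartCount P t b ≤ t / b := by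
  rw [← Nat.Ioc_filter_dvd_card_eq_div]
  refine card_le_card fun n hn ↦ ?_
  obtain ⟨hnt, rfl⟩ := mem_filter.1 hn
  exact mem_filter.2 ⟨hnt, primePart_dvd P (Nat.one_le_iff_ne_zero.1 (mem_Icc.1 hnt).1)⟩

lemma primePartCount_one_le_card_smoothNumbersUpTo (z t : ℕ) :
    primePartCount {q ∈ Ioc z t | q.Prime} t 1 ≤ #(Nat.smoothNumbersUpTo t (z + 1)) := by
  refine card_le_card fun n hn ↦ ?_
  obtain ⟨hnt, hn1⟩ := mem_filter.1 hn
  obtain ⟨hn0, hnt⟩ := mem_Icc.1 hnt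
  refine Nat.mem_smoothNumbersUpTo.2 ⟨hnt, Nat.mem_smoothNumbers'.2 fun p hp hpn ↦ ?_⟩
  by_contra! hlt
  have hpP : p ∈ ({q ∈ Ioc z t | q.Prime} : Finset ℕ) :=
    mem_filter.2 ⟨mem_Ioc.2 ⟨hlt, (Nat.le_of_dvd hn0 hpn).trans hnt⟩, hp⟩
  have hfac := DFunLike.congr_fun (factorization_primePart {q ∈ Ioc z t | q.Prime} n) p
  rw [hn1, Nat.factorization_one, Finsupp.filter_apply, if_pos hpP] at hfac
  exact (hp.factorization_pos_of_dvd (by omega) hpn).ne hfac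

end PrimePart

lemma sub_one_pow_le_of_one_le {G : ℝ} (hG : 1 ≤ G) {s : ℕ} (hs : 1 ≤ s) (m : ℕ) :
    (G - 1) ^ m ≤ (s : ℝ)⁻¹ ^ m * G ^ (m * s) := by
  have hbern := one_add_mul_le_pow (show (-2 : ℝ) ≤ G - 1 by linarith) s
  have hle : G - 1 ≤ (s : ℝ)⁻¹ * G ^ s := by
    rw [add_sub_cancel] at hbern
    rw [inv_mul_eq_div, le_div_iff₀ (by positivity)]
    linarith
  calc (G - 1) ^ m ≤ ((s : ℝ)⁻¹ * G ^ s) ^ m := pow_le_pow_left₀ (by linarith) hle m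
    _ = _ := by rw [mul_pow, ← pow_mul, mul_comm s]

lemma sub_one_pow_le {F : ℝ} (hF : 0 < F) {s m : ℕ} (hs : 1 ≤ s) (hm : Even m) :
    (F - 1) ^ m ≤ (s : ℝ)⁻¹ ^ m * (F ^ (m * s) + F⁻¹ ^ (m * s)) := by
  have hpow : 0 ≤ F ^ (m * s) := by positivity
  have hinv : 0 ≤ F⁻¹ ^ (m * s) := by positivity
  rcases le_total 1 F with h | h
  · refine (sub_one_pow_le_of_one_le h hs m).trans ?_
    gcongr
    linarith
  · have hF1 : 1 ≤ F⁻¹ := (one_le_inv₀ hF).2 h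
    have hle : (F - 1) ^ m ≤ (F⁻¹ - 1) ^ m := by
      rw [← hm.neg_pow, neg_sub]
      refine pow_le_pow_left₀ (by linarith) ?_ m
      nlinarith [mul_inv_cancel₀ hF.ne']
    refine hle.trans ((sub_one_pow_le_of_one_le hF1 hs m).trans ?_)
    gcongr
    linarith

lemma add_mul_pow_le {a b T : ℝ} (Y : ℝ) {m : ℕ} (ha : 0 ≤ a) (hab : a ≤ b) (hT : 0 ≤ T)
    (hm : Even m) :
    (a + T * Y) ^ m ≤ (2 * b) ^ m + (2 * T) ^ m * Y ^ m := by
  calc (a + T * Y) ^ m = |a + T * Y| ^ m := (hm.pow_abs _).symm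
    _ ≤ (b + T * |Y|) ^ m := by
        gcongr
        calc |a + T * Y| ≤ |a| + |T * Y| := abs_add_le _ _
          _ ≤ b + T * |Y| := by rw [abs_mul, abs_of_nonneg ha, abs_of_nonneg hT]; gcongr
    _ ≤ 2 ^ (m - 1) * (b ^ m + (T * |Y|) ^ m) := add_pow_le (ha.trans hab) (by positivity) m
    _ ≤ 2 ^ m * (b ^ m + (T * |Y|) ^ m) := by
        have := ha.trans hab
        gcongr
        · norm_num
        · omega
    _ = _ := by rw [mul_pow T, hm.pow_abs]; ring

lemma sum_inv_sq_Ioc_prime_le {z : ℕ} (hz : 1 ≤ z) (t : ℕ) :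
    ∑ q ∈ Ioc z t with q.Prime, (q : ℝ)⁻¹ ^ 2 ≤ (z : ℝ)⁻¹ := by
  rcases le_total z t with h | h
  · calc ∑ q ∈ Ioc z t with q.Prime, (q : ℝ)⁻¹ ^ 2 ≤ ∑ q ∈ Ioc z t, (q : ℝ)⁻¹ ^ 2 :=
          sum_le_sum_of_subset_of_nonneg (filter_subset _ _) fun _ _ _ ↦ by positivity
      _ ≤ (z : ℝ)⁻¹ - (t : ℝ)⁻¹ := by
          simp_rw [inv_pow]
          exact sum_Ioc_inv_sq_le_sub (by omega) h
      _ ≤ (z : ℝ)⁻¹ := sub_le_self _ (by positivity)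
  · simp [Ioc_eq_empty_of_le h]

lemma two_mul_exp_six_mul_le {k : ℕ} (hk : 1 ≤ k) : 2 * Real.exp (6 * k) ≤ 50 ^ (2 * k) := by
  have hexp : Real.exp 1 ^ 3 ≤ 25 := by
    calc Real.exp 1 ^ 3 ≤ 2.72 ^ 3 := by
          gcongr
          linarith [Real.exp_one_lt_d9]
      _ ≤ 25 := by norm_num
  calc 2 * Real.exp (6 * k) = 2 * (Real.exp 1 ^ 3) ^ (2 * k) := by
        rw [← pow_mul, ← Real.exp_nat_mul]
        push_cast
        ring_nf
    _ ≤ 2 ^ (2 * k) * 25 ^ (2 * k) := by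
        gcongr
        exact le_self_pow₀ (by norm_num) (by omega)
    _ = 50 ^ (2 * k) := by rw [← mul_pow]; norm_num

section SignMoment

variable {P : Finset ℕ} {k s : ℕ}

lemma expect_randomEulerProduct_one_pow_le (hP : ∀ p ∈ P, p.Prime) (hk : 1 ≤ k) (hs : 1 ≤ s)
    (hsum : (s : ℝ) ^ 2 * k * ∑ q ∈ P, (q : ℝ)⁻¹ ^ 2 ≤ 1) :
    𝔼 A ∈ P.powerset, randomEulerProduct P 1 A ^ (2 * k * s) ≤ Real.exp (6 * k) ∧
      𝔼 A ∈ P.powerset, (randomEulerProduct P 1 A)⁻¹ ^ (2 * k * s) ≤ Real.exp (6 * k) := by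
  have hmul : (s : ℝ) ≤ s ^ 2 * k := by
    have : (s : ℝ) * 1 ≤ s * (s * k) := by
      gcongr
      exact_mod_cast Nat.mul_pos hs hk
    linarith
  have hsum0 : 0 ≤ ∑ q ∈ P, (q : ℝ)⁻¹ ^ 2 := sum_nonneg fun _ _ ↦ by positivity
  have hquad : 2 * ((k : ℝ) * s) ^ 2 * ∑ q ∈ P, (q : ℝ)⁻¹ ^ 2 ≤ 2 * k := by
    have := mul_le_mul_of_nonneg_left hsum (by positivity : (0 : ℝ) ≤ 2 * k)
    linarith
  have hlin : 4 * (k : ℝ) * s * ∑ q ∈ P, (q : ℝ)⁻¹ ^ 2 ≤ 4 * k := by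
    have := (mul_le_mul_of_nonneg_right hmul hsum0).trans hsum
    nlinarith [(Nat.cast_nonneg k : (0 : ℝ) ≤ k)]
  constructor
  · refine (expect_randomEulerProduct_pow_le hP (by norm_num) (2 * k * s)
      fun q _ ↦ Real.cosh_le_exp_half_sq _).trans (Real.exp_le_exp.2 ?_)
    calc _ = (4 * (k : ℝ) * s + 2 * (k * s) ^ 2) * ∑ q ∈ P, (q : ℝ)⁻¹ ^ 2 := by
          rw [mul_sum]
          refine sum_congr rfl fun q _ ↦ ?_
          rw [Real.rpow_neg_one]
          push_cast
          ring
      _ ≤ 6 * k := by linarith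
  · refine (expect_inv_randomEulerProduct_pow_le hP one_pos (2 * k * s)).trans
      (Real.exp_le_exp.2 ?_)
    calc _ = 2 * ((k : ℝ) * s) ^ 2 * ∑ q ∈ P, (q : ℝ)⁻¹ ^ 2 := by
          rw [mul_sum]
          refine sum_congr rfl fun q _ ↦ ?_
          rw [Real.rpow_neg_one]
          push_cast
          ring
      _ ≤ 6 * k := by linarith [(Nat.cast_nonneg k : (0 : ℝ) ≤ k)]

lemma expect_randomEulerProduct_sub_one_pow_le (hP : ∀ p ∈ P, p.Prime) (hk : 1 ≤ k) (hs : 1 ≤ s)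
    (hsum : (s : ℝ) ^ 2 * k * ∑ q ∈ P, (q : ℝ)⁻¹ ^ 2 ≤ 1) :
    𝔼 A ∈ P.powerset, (randomEulerProduct P 1 A - 1) ^ (2 * k) ≤ (50 / s) ^ (2 * k) := by
  obtain ⟨hpow, hinv⟩ := expect_randomEulerProduct_one_pow_le hP hk hs hsum
  calc 𝔼 A ∈ P.powerset, (randomEulerProduct P 1 A - 1) ^ (2 * k)
      ≤ 𝔼 A ∈ P.powerset, (s : ℝ)⁻¹ ^ (2 * k) *
          (randomEulerProduct P 1 A ^ (2 * k * s) + (randomEulerProduct P 1 A)⁻¹ ^ (2 * k * s)) :=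
        expect_le_expect fun A _ ↦
          sub_one_pow_le (randomEulerProduct_pos hP one_pos A) hs (even_two_mul k)
    _ ≤ (s : ℝ)⁻¹ ^ (2 * k) * (2 * Real.exp (6 * k)) := by
        rw [← mul_expect, expect_add_distrib, two_mul (Real.exp _)]
        gcongr
    _ ≤ (s : ℝ)⁻¹ ^ (2 * k) * 50 ^ (2 * k) := by
        gcongr
        exact two_mul_exp_six_mul_le hk
    _ = (50 / s) ^ (2 * k) := by rw [← mul_pow, div_eq_inv_mul]

/-- The term `b = 1`, which is not random, is the number of `n ≤ t` free of primes in `P`; the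
others are dominated by `t (F - 1)`, `F` the random Euler product at `σ = 1`. -/
lemma signMoment_le_primePartCount (hP : ∀ p ∈ P, p.Prime) {t : ℕ} (ht : 1 ≤ t) (hk : 1 ≤ k)
    (hs : 1 ≤ s) (hsum : (s : ℝ) ^ 2 * k * ∑ q ∈ P, (q : ℝ)⁻¹ ^ 2 ≤ 1) :
    signMoment P t (2 * k) ≤
      (2 * (primePartCount P t 1 : ℝ)) ^ (2 * k) + (100 * t / s) ^ (2 * k) := by
  have ht0 : (0 : ℝ) < t := by exact_mod_cast ht
  set J := (Icc 1 t).image (primePart P)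
  have h1J : 1 ∈ J := mem_image.2 ⟨1, mem_Icc.2 ⟨le_rfl, ht⟩, primePart_one P⟩
  have hsplit (A : Finset ℕ) (hA : A ∈ P.powerset) :
      ∑ n ∈ Icc 1 t, primeSign A n = primePartCount P t 1 +
        t * ∑ b ∈ J.erase 1, (primePartCount P t b / t : ℝ) * primeSign A b := by
    rw [sum_primeSign_eq_sum_primePartCount_mul (mem_powerset.1 hA), ← add_sum_erase _ _ h1J,
      primeSign_one, mul_one, mul_sum]
    simp_rw [← mul_assoc, mul_div_cancel₀ _ ht0.ne']
  have hrandom : 𝔼 A ∈ P.powerset,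
      (∑ b ∈ J.erase 1, (primePartCount P t b / t : ℝ) * primeSign A b) ^ (2 * k) ≤
        (50 / s) ^ (2 * k) := by
    refine (expect_pow_sum_mul_primeSign_le_randomEulerProduct hP one_pos (fun b hb ↦ ?_) le_rfl _
      (fun b _ ↦ by positivity) fun b hb ↦ ?_).trans
      (expect_randomEulerProduct_sub_one_pow_le hP hk hs hsum)
    · obtain ⟨n, -, rfl⟩ := mem_image.1 (mem_of_mem_erase hb)
      exact primePart_mem_factoredNumbers P n
    · rw [if_neg (ne_of_mem_erase hb), sub_zero, Real.rpow_neg_one, div_le_iff₀ ht0,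
        inv_mul_eq_div]
      exact (Nat.cast_le.2 (primePartCount_le_div P t b)).trans Nat.cast_div_le
  calc signMoment P t (2 * k)
      ≤ 𝔼 A ∈ P.powerset, ((2 * (primePartCount P t 1 : ℝ)) ^ (2 * k) + (2 * t) ^ (2 * k) *
          (∑ b ∈ J.erase 1, (primePartCount P t b / t : ℝ) * primeSign A b) ^ (2 * k)) := by
        refine expect_le_expect fun A hA ↦ ?_
        rw [hsplit A hA]
        exact add_mul_pow_le _ (Nat.cast_nonneg _) le_rfl ht0.le (even_two_mul k)
    _ ≤ (2 * (primePartCount P t 1 : ℝ)) ^ (2 * k) + (2 * t) ^ (2 * k) * (50 / s) ^ (2 * k) := by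
        rw [expect_add_distrib, expect_const (powerset_nonempty P), ← mul_expect]
        gcongr
    _ = _ := by rw [← mul_pow (2 * t : ℝ)]; ring_nf

theorem signMoment_Ioc_prime_le {z : ℕ} (t : ℕ) (hk : 1 ≤ k) (hs : 1 ≤ s) (hz : s ^ 2 * k ≤ z) :
    signMoment {q ∈ Ioc z t | q.Prime} t (2 * k) ≤
      (2 * (#(Nat.smoothNumbersUpTo t (z + 1)) : ℝ)) ^ (2 * k) + (100 * t / s) ^ (2 * k) := by
  rcases Nat.eq_zero_or_pos t with rfl | ht
  · have h0 : 2 * k ≠ 0 := by omega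
    simp only [signMoment, Icc_eq_empty_of_lt one_pos, sum_empty, zero_pow h0, expect_const_zero]
    positivity
  have hz1 : 1 ≤ z := (Nat.mul_pos (Nat.pow_pos hs) hk).trans_le hz
  refine (signMoment_le_primePartCount (fun p hp ↦ (mem_filter.1 hp).2) ht hk hs ?_).trans ?_
  · calc (s : ℝ) ^ 2 * k * ∑ q ∈ Ioc z t with q.Prime, (q : ℝ)⁻¹ ^ 2 ≤ z * (z : ℝ)⁻¹ := by
          gcongr
          · exact_mod_cast hz
          · exact sum_inv_sq_Ioc_prime_le hz1 t
      _ = 1 := mul_inv_cancel₀ (by positivity)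
  · gcongr
    exact primePartCount_one_le_card_smoothNumbersUpTo z t

lemma cosh_le_exp_rpow {a β : ℝ} (ha : 0 ≤ a) (h1 : 1 ≤ β) (h2 : β ≤ 2) :
    Real.cosh a ≤ Real.exp (a ^ β) := by
  rcases le_total a 1 with h | h
  · refine (Real.cosh_le_exp_half_sq _).trans (Real.exp_le_exp.2 ?_)
    calc a ^ 2 / 2 ≤ a ^ (2 : ℝ) := by rw [Real.rpow_two]; nlinarith [sq_nonneg a]
      _ ≤ a ^ β := Real.rpow_le_rpow_of_exponent_ge' ha h (by linarith) h2
  · have hcosh : Real.cosh a ≤ Real.exp a := by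
      rw [Real.cosh_eq]
      linarith [Real.exp_le_exp.2 (by linarith : -a ≤ a)]
    exact hcosh.trans (Real.exp_le_exp.2 (Real.self_le_rpow_of_one_le h h1))

lemma moment_exponent_le {k q : ℝ} (hk : 1 ≤ k) (hq : 1 ≤ q) :
    2 * (2 * k) * (q ^ (-(3 / 5) : ℝ)) ^ 2 + (2 * k * q ^ (-(3 / 5) : ℝ)) ^ (7 / 4 : ℝ) ≤
      8 * k ^ (7 / 4 : ℝ) * q ^ (-(21 / 20) : ℝ) := by
  have hquad : (q ^ (-(3 / 5) : ℝ)) ^ 2 ≤ q ^ (-(21 / 20) : ℝ) := by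
    rw [← Real.rpow_natCast, ← Real.rpow_mul (by positivity)]
    exact Real.rpow_le_rpow_of_exponent_le hq (by norm_num)
  have hk' : k ≤ k ^ (7 / 4 : ℝ) := Real.self_le_rpow_of_one_le hk (by norm_num)
  have htwo : (2 : ℝ) ^ (7 / 4 : ℝ) ≤ 4 := by
    calc (2 : ℝ) ^ (7 / 4 : ℝ) ≤ 2 ^ (2 : ℝ) :=
          Real.rpow_le_rpow_of_exponent_le (by norm_num) (by norm_num)
      _ = 4 := by norm_num
  have hrpow : (2 * k * q ^ (-(3 / 5) : ℝ)) ^ (7 / 4 : ℝ) ≤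
      4 * k ^ (7 / 4 : ℝ) * q ^ (-(21 / 20) : ℝ) := by
    rw [Real.mul_rpow (by positivity) (by positivity), ← Real.rpow_mul (by positivity),
      Real.mul_rpow (by norm_num) (by positivity)]
    norm_num only
    gcongr
  have hmul : k * (q ^ (-(3 / 5) : ℝ)) ^ 2 ≤ k ^ (7 / 4 : ℝ) * q ^ (-(21 / 20) : ℝ) := by gcongr
  linarith

lemma exists_expect_randomEulerProduct_three_fifths_pow_le :
    ∃ C : ℝ, 0 < C ∧ ∀ P : Finset ℕ, (∀ p ∈ P, p.Prime) → ∀ k : ℕ, 1 ≤ k →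
      𝔼 A ∈ P.powerset, randomEulerProduct P (3 / 5) A ^ (2 * k) ≤
        Real.exp (C * (k : ℝ) ^ (7 / 4 : ℝ)) := by
  have hS : Summable fun n : ℕ ↦ (n : ℝ) ^ (-(21 / 20) : ℝ) := by
    rw [Real.summable_nat_rpow]
    norm_num
  set S := ∑' n : ℕ, (n : ℝ) ^ (-(21 / 20) : ℝ)
  refine ⟨8 * S + 1, add_pos_of_nonneg_of_pos (by positivity) one_pos, fun P hP k hk ↦ ?_⟩
  refine (expect_randomEulerProduct_pow_le hP le_rfl (2 * k) (u := fun q ↦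
      (((2 * k : ℕ) : ℝ) * (q : ℝ) ^ (-(3 / 5) : ℝ)) ^ (7 / 4 : ℝ)) fun q _ ↦
    cosh_le_exp_rpow (by positivity) (by norm_num) (by norm_num)).trans (Real.exp_le_exp.2 ?_)
  calc _ ≤ ∑ q ∈ P, 8 * (k : ℝ) ^ (7 / 4 : ℝ) * (q : ℝ) ^ (-(21 / 20) : ℝ) := by
        refine sum_le_sum fun q hq ↦ ?_
        push_cast
        exact moment_exponent_le (by exact_mod_cast hk) (by exact_mod_cast (hP q hq).one_lt.le)
    _ ≤ 8 * (k : ℝ) ^ (7 / 4 : ℝ) * S := by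
        rw [← mul_sum]
        gcongr
        exact hS.sum_le_tsum _ fun n _ ↦ by positivity
    _ ≤ (8 * S + 1) * (k : ℝ) ^ (7 / 4 : ℝ) := by
        have : 0 ≤ (k : ℝ) ^ (7 / 4 : ℝ) := by positivity
        linarith

theorem exists_signMoment_primesLE_le : ∃ C : ℝ, 0 < C ∧ ∀ t k : ℕ, 1 ≤ k →
    signMoment (Nat.primesLE t) t (2 * k) ≤
      (t : ℝ) ^ (6 / 5 * k : ℝ) * Real.exp (C * (k : ℝ) ^ (7 / 4 : ℝ)) := by
  obtain ⟨C, hC, hbound⟩ := exists_expect_randomEulerProduct_three_fifths_pow_le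
  refine ⟨C, hC, fun t k hk ↦ ?_⟩
  rcases Nat.eq_zero_or_pos t with rfl | ht
  · have h0 : 2 * k ≠ 0 := by omega
    simp only [signMoment, Icc_eq_empty_of_lt one_pos, sum_empty, zero_pow h0, expect_const_zero]
    positivity
  have ht0 : (0 : ℝ) < t := by exact_mod_cast ht
  have hP : ∀ p ∈ Nat.primesLE t, p.Prime := fun p hp ↦ (Nat.mem_primesLE.1 hp).2
  have hscaled : 𝔼 A ∈ (Nat.primesLE t).powerset,
      (∑ n ∈ Icc 1 t, (t : ℝ) ^ (-(3 / 5) : ℝ) * primeSign A n) ^ (2 * k) ≤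
        𝔼 A ∈ (Nat.primesLE t).powerset,
          randomEulerProduct (Nat.primesLE t) (3 / 5) A ^ (2 * k) := by
    simpa only [sub_zero] using expect_pow_sum_mul_primeSign_le_randomEulerProduct hP
      (by norm_num) (J := Icc 1 t) (e := 0)
      (fun n hn ↦ Nat.mem_factoredNumbers'.2 fun p hp hpn ↦ Nat.mem_primesLE.2
        ⟨(Nat.le_of_dvd (mem_Icc.1 hn).1 hpn).trans (mem_Icc.1 hn).2, hp⟩)
      zero_le_one (2 * k) (fun n _ ↦ by positivity) fun n hn ↦ by
        rw [ite_self, sub_zero]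
        exact Real.rpow_le_rpow_of_nonpos (by exact_mod_cast (mem_Icc.1 hn).1)
          (by exact_mod_cast (mem_Icc.1 hn).2) (by norm_num)
  have hscale : ((t : ℝ) ^ (-(3 / 5) : ℝ)) ^ (2 * k) * (t : ℝ) ^ (6 / 5 * k : ℝ) = 1 := by
    rw [← Real.rpow_natCast, ← Real.rpow_mul ht0.le, ← Real.rpow_add ht0]
    push_cast
    rw [show -(3 / 5) * (2 * k) + 6 / 5 * k = (0 : ℝ) by ring, Real.rpow_zero]
  calc signMoment (Nat.primesLE t) t (2 * k)
      = (t : ℝ) ^ (6 / 5 * k : ℝ) * 𝔼 A ∈ (Nat.primesLE t).powerset,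
          (∑ n ∈ Icc 1 t, (t : ℝ) ^ (-(3 / 5) : ℝ) * primeSign A n) ^ (2 * k) := by
        simp_rw [signMoment, ← mul_sum, mul_pow, ← mul_expect, ← mul_assoc]
        rw [mul_comm (_ ^ (6 / 5 * k : ℝ)), hscale, one_mul]
    _ ≤ _ := by
        gcongr
        exact hscaled.trans (hbound _ hP k hk)

end SignMoment

/-! ### Chebyshev and Mertens estimates -/

lemma factorization_centralBinom_mul_log_le {n p : ℕ} (hn : 2 < n) :
    n.centralBinom.factorization p * Real.log p ≤
      (if p ≤ (2 * n).sqrt then Real.log (2 * n) else 0) +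
        (if p ≤ 2 * n / 3 then Real.log p else 0) + (if n < p then Real.log p else 0) := by
  have hlog : 0 ≤ Real.log p := Real.log_natCast_nonneg p
  have hlog2n : 0 ≤ Real.log (2 * n) := by exact_mod_cast Real.log_natCast_nonneg (2 * n)
  rcases le_or_gt p (2 * n).sqrt with hsqrt | hsqrt
  · have hpow : n.centralBinom.factorization p * Real.log p ≤ Real.log (2 * n) := by
      rcases Nat.eq_zero_or_pos p with rfl | hp
      · simpa using hlog2n
      rw [← Real.log_pow]
      refine Real.log_le_log (by positivity) ?_
      exact_mod_cast Nat.pow_factorization_choose_le (p := p) (n := 2 * n) (k := n) (by omega)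
    rw [if_pos hsqrt]
    refine hpow.trans ?_
    rw [add_assoc, le_add_iff_nonneg_right]
    split_ifs <;> linarith
  · have hfactor : (n.centralBinom.factorization p : ℝ) ≤ 1 := by
      exact_mod_cast Nat.factorization_choose_le_one (Nat.sqrt_lt'.1 hsqrt)
    have hle : n.centralBinom.factorization p * Real.log p ≤ Real.log p :=
      mul_le_of_le_one_left hlog hfactor
    rw [if_neg hsqrt.not_ge, zero_add]
    split_ifs with h1 h2 h2
    · linarith
    · linarith
    · linarith
    · rw [Nat.factorization_centralBinom_of_two_mul_self_lt_three_mul hn (by omega) (by omega),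
        Nat.cast_zero, zero_mul, add_zero]

lemma log_centralBinom_le {n : ℕ} (hn : 2 < n) :
    Real.log n.centralBinom ≤ (2 * n).sqrt * Real.log (2 * n) + 2 * n / 3 * Real.log 4 +
      #{q ∈ Ioc n (2 * n) | q.Prime} * Real.log (2 * n) := by
  have hlog : 0 ≤ Real.log (2 * n) := by exact_mod_cast Real.log_natCast_nonneg (2 * n)
  have hsum : Real.log n.centralBinom =
      ∑ p ∈ Nat.primesLE (2 * n), n.centralBinom.factorization p * Real.log p := by
    rw [Real.log_nat_eq_sum_factorization]
    refine Finsupp.sum_of_support_subset _ (fun p hp ↦ ?_) _ fun p _ ↦ by simp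
    rw [Nat.support_factorization] at hp
    exact Nat.mem_primesLE.2 ⟨Nat.le_two_mul_of_factorization_centralBinom_pos
      ((Nat.prime_of_mem_primeFactors hp).factorization_pos_of_dvd n.centralBinom_ne_zero
        (Nat.dvd_of_mem_primeFactors hp)), Nat.prime_of_mem_primeFactors hp⟩
  rw [hsum]
  refine (sum_le_sum fun p _ ↦ factorization_centralBinom_mul_log_le hn).trans ?_
  rw [sum_add_distrib, sum_add_distrib, ← sum_filter, ← sum_filter, ← sum_filter]
  refine add_le_add (add_le_add ?_ ?_) ?_
  · rw [sum_const, nsmul_eq_mul]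
    gcongr
    refine (card_le_card fun p hp ↦ ?_).trans_eq (Nat.card_Icc 1 (2 * n).sqrt)
    obtain ⟨hp, hle⟩ := mem_filter.1 hp
    exact mem_Icc.2 ⟨(Nat.one_lt_of_mem_primesLE hp).le, hle⟩
  · have hfilter : {p ∈ Nat.primesLE (2 * n) | p ≤ 2 * n / 3} = Nat.primesLE (2 * n / 3) := by
      ext p
      simp only [mem_filter, Nat.mem_primesLE]
      exact ⟨fun h ↦ ⟨h.2, h.1.2⟩, fun h ↦ ⟨⟨by omega, h.2⟩, h.1⟩⟩
    rw [hfilter, ← Chebyshev.theta_eq_sum_primesLE_log]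
    refine (Chebyshev.theta_le_log4_mul_x (by positivity)).trans ?_
    rw [mul_comm]
    gcongr
    exact_mod_cast Nat.cast_div_le (α := ℝ) (m := 2 * n) (n := 3)
  · have hfilter : {p ∈ Nat.primesLE (2 * n) | n < p} = {q ∈ Ioc n (2 * n) | q.Prime} := by
      ext p
      simp only [mem_filter, Nat.mem_primesLE, mem_Ioc]
      tauto
    rw [hfilter, ← nsmul_eq_mul]
    refine sum_le_card_nsmul _ _ _ fun p hp ↦ ?_
    obtain ⟨hp, hprime⟩ := mem_filter.1 hp
    exact Real.log_le_log (by exact_mod_cast hprime.pos) (by exact_mod_cast (mem_Ioc.1 hp).2)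

lemma filter_prime_Ioc_floor_subset_primesIn {x : ℝ} (hx : 0 ≤ x) :
    {q ∈ Ioc ⌊x⌋₊ (2 * ⌊x⌋₊) | q.Prime} ⊆ primesIn x := by
  intro p hp
  obtain ⟨hp, hprime⟩ := mem_filter.1 hp
  have hle : (p : ℝ) ≤ 2 * x := by
    have : (p : ℝ) ≤ 2 * ⌊x⌋₊ := by exact_mod_cast (mem_Ioc.1 hp).2
    linarith [Nat.floor_le hx]
  exact mem_filter.2 ⟨mem_range.2 (Nat.lt_succ_of_le (Nat.le_floor hle)), hprime,
    (Nat.floor_lt hx).1 (mem_Ioc.1 hp).1, hle⟩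

lemma eventually_sqrt_mul_log_le {c : ℝ} (hc : 0 < c) :
    ∀ᶠ y in Filter.atTop, √y * Real.log y ≤ c * y := by
  filter_upwards [(isLittleO_log_rpow_atTop one_half_pos).bound hc, Filter.eventually_ge_atTop 1]
    with y hlog hy
  rw [← Real.sqrt_eq_rpow, Real.norm_of_nonneg (Real.log_nonneg hy),
    Real.norm_of_nonneg (Real.sqrt_nonneg y)] at hlog
  calc √y * Real.log y ≤ √y * (c * √y) := by gcongr
    _ = c * y := by rw [mul_left_comm, Real.mul_self_sqrt (by linarith)]

lemma eventually_le_card_primes_Ioc_mul_log : ∀ᶠ n : ℕ in Filter.atTop,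
    (n : ℝ) / 4 ≤ #{q ∈ Ioc n (2 * n) | q.Prime} * Real.log (2 * n) := by
  have htwo : Filter.Tendsto (fun n : ℕ ↦ (2 * n : ℝ)) Filter.atTop Filter.atTop :=
    tendsto_natCast_atTop_atTop.const_mul_atTop two_pos
  filter_upwards [htwo.eventually (eventually_sqrt_mul_log_le (c := 1 / 50) (by norm_num)),
    Filter.eventually_ge_atTop 3] with n hsmall hn
  have hn' : (3 : ℝ) ≤ n := by exact_mod_cast hn
  have hbinom : n * Real.log 4 ≤ Real.log (2 * n) + Real.log n.centralBinom := by
    have hle : (4 : ℝ) ^ n ≤ 2 * n * n.centralBinom := by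
      exact_mod_cast Nat.four_pow_le_two_mul_self_mul_centralBinom n (by omega)
    have hne : (n.centralBinom : ℝ) ≠ 0 := by exact_mod_cast n.centralBinom_ne_zero
    rw [← Real.log_pow, ← Real.log_mul (by positivity) hne]
    exact Real.log_le_log (by positivity) hle
  have hlog : 0 ≤ Real.log (2 * n) := Real.log_nonneg (by linarith)
  have hsqrt : ((2 * n).sqrt : ℝ) * Real.log (2 * n) ≤ √(2 * n) * Real.log (2 * n) := by
    gcongr
    exact_mod_cast Real.nat_sqrt_le_real_sqrt (a := 2 * n)
  have hone : Real.log (2 * n) ≤ √(2 * n) * Real.log (2 * n) :=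
    le_mul_of_one_le_left hlog (Real.one_le_sqrt.2 (by linarith))
  have hlog4 : (1 : ℝ) ≤ Real.log 4 := by
    rw [Real.le_log_iff_exp_le (by norm_num)]
    linarith [Real.exp_one_lt_d9]
  nlinarith [log_centralBinom_le hn]

theorem eventually_div_log_le_card_primesIn : ∀ᶠ x : ℝ in Filter.atTop,
    x / (20 * Real.log x) ≤ #(primesIn x) := by
  filter_upwards [tendsto_nat_floor_atTop.eventually eventually_le_card_primes_Ioc_mul_log,
    Filter.eventually_ge_atTop 5] with x hcard hx
  have hlog : 0 < Real.log x := Real.log_pos (by linarith)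
  have hfloor : (⌊x⌋₊ : ℝ) ≤ x := Nat.floor_le (by linarith)
  have hlt : x - 1 < ⌊x⌋₊ := Nat.sub_one_lt_floor x
  have hlog2 : Real.log (2 * ⌊x⌋₊) ≤ 2 * Real.log x := by
    rw [two_mul (Real.log x), ← Real.log_mul (by positivity) (by positivity)]
    exact Real.log_le_log (by linarith) (by nlinarith)
  have hsub : (#{q ∈ Ioc ⌊x⌋₊ (2 * ⌊x⌋₊) | q.Prime} : ℝ) ≤ #(primesIn x) := by
    exact_mod_cast card_le_card (filter_prime_Ioc_floor_subset_primesIn (by linarith))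
  have hmul : (⌊x⌋₊ : ℝ) / 4 ≤ #(primesIn x) * (2 * Real.log x) := by
    refine hcard.trans ?_
    gcongr
    exact Real.log_nonneg (by linarith)
  rw [div_le_iff₀ (by positivity)]
  linarith

lemma log_four_le_two : Real.log 4 ≤ 2 := by
  rw [Real.log_le_iff_le_exp (by norm_num), show (2 : ℝ) = 1 + 1 by norm_num, Real.exp_add]
  nlinarith [Real.exp_one_gt_d9]

lemma sum_primesLE_dvd_log_le {m n : ℕ} (hm : m ∈ Ioc 0 n) :
    ∑ p ∈ Nat.primesLE n with p ∣ m, Real.log p ≤ Real.log n := by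
  obtain ⟨hm0, hmn⟩ := mem_Ioc.1 hm
  calc ∑ p ∈ Nat.primesLE n with p ∣ m, Real.log p
      ≤ ∑ p ∈ m.primeFactors, Real.log p := by
        refine sum_le_sum_of_subset_of_nonneg (fun p hp ↦ ?_) fun p _ _ ↦
          Real.log_natCast_nonneg p
        obtain ⟨hp, hdvd⟩ := mem_filter.1 hp
        exact Nat.mem_primeFactors.2 ⟨Nat.prime_of_mem_primesLE hp, hdvd, hm0.ne'⟩
    _ = Real.log (∏ p ∈ m.primeFactors, p : ℕ) := by
        rw [Nat.cast_prod, Real.log_prod]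
        exact fun p hp ↦ by exact_mod_cast (Nat.prime_of_mem_primeFactors hp).ne_zero
    _ ≤ Real.log n := by
        refine Real.log_le_log ?_ ?_
        · exact_mod_cast prod_pos fun p hp ↦ (Nat.prime_of_mem_primeFactors hp).pos
        · exact_mod_cast (Nat.le_of_dvd hm0 (Nat.prod_primeFactors_dvd m)).trans hmn

/- Summing `∑ p ∣ m, log p ≤ log n` over `m ≤ n` counts each `log p` about `n / p` times; the
rounding errors are absorbed by Chebyshev's bound on `θ n`. -/
theorem sum_primesLE_log_div_le (n : ℕ) :
    ∑ p ∈ Nat.primesLE n, Real.log p / p ≤ Real.log n + 2 := by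
  rcases Nat.eq_zero_or_pos n with rfl | hn
  · simp
  have hn0 : (0 : ℝ) < n := by exact_mod_cast hn
  have hmultiples : ∑ p ∈ Nat.primesLE n, Real.log p * (n / p : ℕ) ≤ n * Real.log n := by
    calc ∑ p ∈ Nat.primesLE n, Real.log p * (n / p : ℕ)
        = ∑ m ∈ Ioc 0 n, ∑ p ∈ Nat.primesLE n with p ∣ m, Real.log p := by
          simp_rw [sum_filter]
          rw [sum_comm]
          refine sum_congr rfl fun p _ ↦ ?_
          rw [← sum_filter, sum_const, Nat.Ioc_filter_dvd_card_eq_div, nsmul_eq_mul, mul_comm]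
      _ ≤ ∑ _ ∈ Ioc 0 n, Real.log n := sum_le_sum fun _ ↦ sum_primesLE_dvd_log_le
      _ = n * Real.log n := by simp
  have htheta : ∑ p ∈ Nat.primesLE n, Real.log p ≤ 2 * n := by
    rw [← Chebyshev.theta_eq_sum_primesLE_log]
    exact (Chebyshev.theta_le_log4_mul_x hn0.le).trans (by gcongr; exact log_four_le_two)
  refine le_of_mul_le_mul_left ?_ hn0
  calc n * ∑ p ∈ Nat.primesLE n, Real.log p / p
      ≤ ∑ p ∈ Nat.primesLE n, (Real.log p * (n / p : ℕ) + Real.log p) := by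
        rw [mul_sum]
        refine sum_le_sum fun p _ ↦ ?_
        have hfloor : (n : ℝ) / p ≤ (n / p : ℕ) + 1 := by
          rw [← Nat.floor_div_eq_div (K := ℝ)]
          exact (Nat.lt_floor_add_one _).le
        calc n * (Real.log p / p) = Real.log p * (n / p) := by ring
          _ ≤ Real.log p * ((n / p : ℕ) + 1) := by
              gcongr
          _ = _ := by ring
    _ ≤ n * (Real.log n + 2) := by
        rw [sum_add_distrib]
        linarith

lemma one_sub_log_div_log_le {a b : ℝ} (ha : 0 < a) (hb : 0 < b) :
    1 - a / b ≤ Real.log b - Real.log a := by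
  rw [← Real.log_div hb.ne' ha.ne', ← inv_div]
  exact Real.one_sub_inv_le_log_of_pos (div_pos hb ha)

/- Abel summation of `∑ (log p / p) * (1 / log p)`, carried out by induction. -/
lemma sum_primesLE_inv_le_sum_log_div {n : ℕ} (hn : 2 ≤ n) :
    ∑ p ∈ Nat.primesLE n, (1 : ℝ) / p ≤ (∑ p ∈ Nat.primesLE n, Real.log p / p) / Real.log n +
      (Real.log (Real.log n) - Real.log (Real.log 2)) +
        2 * (1 / Real.log 2 - 1 / Real.log n) := by
  induction n, hn using Nat.le_induction with
  | base =>
    have hprimes : Nat.primesLE 2 = {2} := by decide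
    have hlog : Real.log 2 ≠ 0 := (Real.log_pos one_lt_two).ne'
    rw [hprimes, sum_singleton, sum_singleton, Nat.cast_two, sub_self, sub_self, mul_zero, add_zero,
      add_zero, div_div, mul_comm, ← div_div, div_self hlog]
  | succ n hn ih =>
    have hlog : 0 < Real.log n := Real.log_pos (by exact_mod_cast hn)
    have hle : Real.log n ≤ Real.log (n + 1 : ℕ) :=
      Real.log_le_log (by positivity) (by push_cast; linarith)
    have hlog' : 0 < Real.log (n + 1 : ℕ) := hlog.trans_le hle
    have hstep : ∑ p ∈ Nat.primesLE (n + 1), (1 : ℝ) / p - ∑ p ∈ Nat.primesLE n, (1 : ℝ) / p =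
        (∑ p ∈ Nat.primesLE (n + 1), Real.log p / p - ∑ p ∈ Nat.primesLE n, Real.log p / p) /
          Real.log (n + 1 : ℕ) := by
      rw [Nat.primesLE_succ]
      split_ifs
      · rw [sum_insert (Nat.notMem_primesLE n), sum_insert (Nat.notMem_primesLE n)]
        field_simp
        ring
      · simp only [sub_self, zero_div]
    have hmertens := sum_primesLE_log_div_le n
    set A := ∑ p ∈ Nat.primesLE n, Real.log p / p
    set A' := ∑ p ∈ Nat.primesLE (n + 1), Real.log p / p
    set a := Real.log n
    set b := Real.log (n + 1 : ℕ)
    have hdecrement : A * (1 / a - 1 / b) ≤ (1 - a / b) + 2 * (1 / a - 1 / b) :=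
      calc A * (1 / a - 1 / b) ≤ (a + 2) * (1 / a - 1 / b) :=
            mul_le_mul_of_nonneg_right hmertens (sub_nonneg.2 (one_div_le_one_div_of_le hlog hle))
        _ = (1 - a / b) + 2 * (1 / a - 1 / b) := by field_simp
    have hsplit : (A' - A) / b = A' / b - A / a + A * (1 / a - 1 / b) := by ring
    linarith [one_sub_log_div_log_le hlog hlog']

theorem exists_sum_primesLE_inv_le : ∃ C : ℝ, ∀ n : ℕ, 2 ≤ n →
    ∑ p ∈ Nat.primesLE n, (1 : ℝ) / p ≤ Real.log (Real.log n) + C := by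
  refine ⟨1 + 2 / Real.log 2 - Real.log (Real.log 2) + 2 / Real.log 2, fun n hn ↦ ?_⟩
  have hlog2 : 0 < Real.log 2 := Real.log_pos one_lt_two
  have hle : Real.log 2 ≤ Real.log n := Real.log_le_log two_pos (by exact_mod_cast hn)
  have hlog : 0 < Real.log n := hlog2.trans_le hle
  have hratio : (∑ p ∈ Nat.primesLE n, Real.log p / p) / Real.log n ≤ 1 + 2 / Real.log 2 :=
    calc (∑ p ∈ Nat.primesLE n, Real.log p / p) / Real.log n
        ≤ (Real.log n + 2) / Real.log n := by gcongr; exact sum_primesLE_log_div_le n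
      _ = 1 + 2 / Real.log n := by field_simp
      _ ≤ 1 + 2 / Real.log 2 := by gcongr
  have hpos : 0 < 1 / Real.log n := by positivity
  have htwo : 2 * (1 / Real.log 2) = 2 / Real.log 2 := by ring
  linarith [sum_primesLE_inv_le_sum_log_div hn]

/-! ### Smooth numbers -/

section SmoothNumbers

variable {t z n : ℕ} {α : ℝ}

lemma pos_of_mem_smoothNumbersUpTo {k : ℕ} (hn : n ∈ Nat.smoothNumbersUpTo t k) : 0 < n :=
  Nat.pos_of_ne_zero (Nat.ne_zero_of_mem_smoothNumbers (Nat.mem_smoothNumbersUpTo.1 hn).2)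

lemma sum_smoothNumbersUpTo_sum_divisors (t k : ℕ) (f : ℕ → ℝ) :
    ∑ n ∈ Nat.smoothNumbersUpTo t k, ∑ d ∈ n.divisors, f d =
      ∑ m ∈ Nat.smoothNumbersUpTo t k, ∑ d ∈ Nat.smoothNumbersUpTo (t / m) k, f d := by
  rw [sum_sigma', sum_sigma']
  refine sum_nbij' (fun x ↦ ⟨x.1 / x.2, x.2⟩) (fun x ↦ ⟨x.1 * x.2, x.2⟩) ?_ ?_ ?_ ?_
    fun _ _ ↦ rfl
  · rintro ⟨n, d⟩ h
    simp only [mem_sigma, Nat.mem_divisors] at h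
    obtain ⟨hn, ⟨m, rfl⟩, hne⟩ := h
    obtain ⟨hle, hsmooth⟩ := Nat.mem_smoothNumbersUpTo.1 hn
    have hd0 : 0 < d := Nat.pos_of_ne_zero (left_ne_zero_of_mul hne)
    have hm0 : 0 < m := Nat.pos_of_ne_zero (right_ne_zero_of_mul hne)
    simp only [mem_sigma, Nat.mem_smoothNumbersUpTo, Nat.mul_div_cancel_left m hd0]
    exact ⟨⟨(Nat.le_mul_of_pos_left m hd0).trans hle,
      Nat.mem_smoothNumbers_of_dvd hsmooth (dvd_mul_left m d)⟩,
      (Nat.le_div_iff_mul_le hm0).2 hle, Nat.mem_smoothNumbers_of_dvd hsmooth (dvd_mul_right d m)⟩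
  · rintro ⟨m, d⟩ h
    obtain ⟨hm, hd⟩ := mem_sigma.1 h
    have hm0 := pos_of_mem_smoothNumbersUpTo hm
    rw [Nat.mem_smoothNumbersUpTo] at hm hd
    have hmul := Nat.mul_mem_smoothNumbers hm.2 hd.2
    exact mem_sigma.2 ⟨Nat.mem_smoothNumbersUpTo.2
      ⟨by rw [mul_comm]; exact (Nat.le_div_iff_mul_le hm0).1 hd.1, hmul⟩,
      Nat.mem_divisors.2 ⟨dvd_mul_left d m, Nat.ne_zero_of_mem_smoothNumbers hmul⟩⟩
  · rintro ⟨n, d⟩ h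
    have hdvd := Nat.dvd_of_mem_divisors (mem_sigma.1 h).2
    simp only [Nat.div_mul_cancel hdvd]
  · rintro ⟨m, d⟩ h
    have hd0 := pos_of_mem_smoothNumbersUpTo (mem_sigma.1 h).2
    simp only [Nat.mul_div_cancel m hd0]

lemma sum_log_smoothNumbersUpTo (t k : ℕ) :
    ∑ n ∈ Nat.smoothNumbersUpTo t k, Real.log n = ∑ m ∈ Nat.smoothNumbersUpTo t k,
      ∑ d ∈ Nat.smoothNumbersUpTo (t / m) k, ArithmeticFunction.vonMangoldt d := by
  simp_rw [← ArithmeticFunction.vonMangoldt_sum]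
  exact sum_smoothNumbersUpTo_sum_divisors t k _

lemma min_le_rpow_mul_rpow {a b : ℝ} (ha : 0 < a) (hb : 0 < b) (h0 : 0 ≤ α) (h1 : α ≤ 1) :
    min a b ≤ a ^ (1 - α) * b ^ α := by
  have hmin : 0 < min a b := lt_min ha hb
  calc min a b = min a b ^ (1 - α) * min a b ^ α := by
        rw [← Real.rpow_add hmin, sub_add_cancel, Real.rpow_one]
    _ ≤ a ^ (1 - α) * b ^ α := by
        exact mul_le_mul
          (Real.rpow_le_rpow hmin.le (min_le_left a b) (by linarith))
          (Real.rpow_le_rpow hmin.le (min_le_right a b) h0) (by positivity) (by positivity)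

lemma sum_vonMangoldt_smooth_prime_le (hz : 0 < z) (hn : 0 < n) (h0 : 0 ≤ α) (h1 : α ≤ 1) :
    ∑ d ∈ Nat.smoothNumbersUpTo n (z + 1) with d.Prime, ArithmeticFunction.vonMangoldt d ≤
      2 * ((n : ℝ) ^ (1 - α) * (z : ℝ) ^ α) := by
  calc ∑ d ∈ Nat.smoothNumbersUpTo n (z + 1) with d.Prime, ArithmeticFunction.vonMangoldt d
      = ∑ d ∈ Nat.smoothNumbersUpTo n (z + 1) with d.Prime, Real.log d :=
        sum_congr rfl fun d hd ↦ ArithmeticFunction.vonMangoldt_apply_prime (mem_filter.1 hd).2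
    _ ≤ ∑ d ∈ Nat.primesLE (min n z), Real.log d := by
        refine sum_le_sum_of_subset_of_nonneg (fun p hp ↦ ?_) fun p _ _ ↦
          Real.log_natCast_nonneg p
        obtain ⟨hp, hprime⟩ := mem_filter.1 hp
        obtain ⟨hpn, hsmooth⟩ := Nat.mem_smoothNumbersUpTo.1 hp
        exact Nat.mem_primesLE.2 ⟨le_min hpn
          (Nat.lt_succ_iff.1 (Nat.mem_smoothNumbers'.1 hsmooth p hprime dvd_rfl)), hprime⟩
    _ ≤ Real.log 4 * (min n z : ℕ) := by
        rw [← Chebyshev.theta_eq_sum_primesLE_log]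
        exact Chebyshev.theta_le_log4_mul_x (by positivity)
    _ ≤ 2 * ((n : ℝ) ^ (1 - α) * (z : ℝ) ^ α) := by
        rw [Nat.cast_min]
        gcongr
        · exact log_four_le_two
        · exact min_le_rpow_mul_rpow (by exact_mod_cast hn) (by exact_mod_cast hz) h0 h1

lemma sum_vonMangoldt_smooth_not_prime_le (k n : ℕ) :
    ∑ d ∈ Nat.smoothNumbersUpTo n k with ¬ d.Prime, ArithmeticFunction.vonMangoldt d ≤
      Chebyshev.psi n - Chebyshev.theta n := by
  rw [Chebyshev.psi_sub_theta_eq_sum_not_prime, Nat.floor_natCast]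
  refine sum_le_sum_of_subset_of_nonneg (fun d hd ↦ ?_) fun _ _ _ ↦
    ArithmeticFunction.vonMangoldt_nonneg
  obtain ⟨hd, hprime⟩ := mem_filter.1 hd
  exact mem_filter.2 ⟨mem_Ioc.2 ⟨pos_of_mem_smoothNumbersUpTo hd,
    (Nat.mem_smoothNumbersUpTo.1 hd).1⟩, hprime⟩

lemma exists_sum_vonMangoldt_smoothNumbersUpTo_le : ∃ C : ℝ, 0 < C ∧ ∀ z n : ℕ, ∀ α : ℝ,
    0 < z → 0 < n → 0 ≤ α → α ≤ 1 / 2 →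
      ∑ d ∈ Nat.smoothNumbersUpTo n (z + 1), ArithmeticFunction.vonMangoldt d ≤
        C * ((n : ℝ) ^ (1 - α) * (z : ℝ) ^ α) := by
  obtain ⟨C, hC⟩ := Chebyshev.psi_sub_theta_le_mul_sqrt
  refine ⟨2 + |C|, by positivity, fun z n α hz hn h0 h1 ↦ ?_⟩
  have hsqrt : √n ≤ (n : ℝ) ^ (1 - α) * (z : ℝ) ^ α :=
    calc √n = (n : ℝ) ^ (1 / 2 : ℝ) := Real.sqrt_eq_rpow _
      _ ≤ (n : ℝ) ^ (1 - α) :=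
          Real.rpow_le_rpow_of_exponent_le (by exact_mod_cast hn) (by linarith)
      _ ≤ (n : ℝ) ^ (1 - α) * (z : ℝ) ^ α :=
          le_mul_of_one_le_right (by positivity) (Real.one_le_rpow (by exact_mod_cast hz) h0)
  rw [← sum_filter_add_sum_filter_not _ Nat.Prime, add_mul]
  refine add_le_add (sum_vonMangoldt_smooth_prime_le hz hn h0 (by linarith)) ?_
  calc _ ≤ Chebyshev.psi n - Chebyshev.theta n := sum_vonMangoldt_smooth_not_prime_le (z + 1) n
    _ ≤ C * √n := hC n
    _ ≤ |C| * ((n : ℝ) ^ (1 - α) * (z : ℝ) ^ α) := by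
        gcongr
        exact le_abs_self C

lemma sum_smoothNumbersUpTo_rpow_le (t z : ℕ) {σ : ℝ} (hσ : 0 < σ) :
    ∑ m ∈ Nat.smoothNumbersUpTo t (z + 1), (m : ℝ) ^ (-σ) ≤
      ∏ q ∈ Nat.primesLE z, (1 - (q : ℝ) ^ (-σ))⁻¹ := by
  have hsum := hasSum_randomEulerProduct (fun p ↦ Nat.prime_of_mem_primesLE (n := z)) hσ ∅
  simp only [primeSign, prod_empty, mul_one, randomEulerProduct, notMem_empty, if_false] at hsum
  have hmem : ∀ m ∈ Nat.smoothNumbersUpTo t (z + 1), m ∈ Nat.factoredNumbers (Nat.primesLE z) :=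
    fun m hm ↦ by
      have := (Nat.mem_smoothNumbersUpTo.1 hm).2
      rwa [Nat.smoothNumbers_eq_factoredNumbers_primesBelow] at this
  rw [← sum_subtype_of_mem _ hmem]
  exact sum_le_hasSum _ (fun m _ ↦ by positivity) hsum

lemma inv_one_sub_le_exp {h : ℝ} (h0 : 0 ≤ h) (h1 : h ≤ 7 / 10) :
    (1 - h)⁻¹ ≤ Real.exp (h + 2 * h ^ 2) := by
  refine le_trans ?_ (Real.quadratic_le_exp_of_nonneg (by positivity))
  rw [inv_le_iff_one_le_mul₀ (by linarith)]
  nlinarith [pow_nonneg h0 2, pow_nonneg h0 3, pow_nonneg h0 4, pow_nonneg h0 5,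
    mul_nonneg (pow_nonneg h0 2) (sub_nonneg.2 h1)]

/- The exponential function lies below its chord between `0` and `α log z`. -/
lemma rpow_le_one_add_log_div_log_mul_rpow {x z : ℝ} (hx : 1 < x) (hxz : x ≤ z) (α : ℝ) :
    x ^ α ≤ 1 + Real.log x / Real.log z * z ^ α := by
  have hlogx : 0 < Real.log x := Real.log_pos hx
  have hlogz : Real.log x ≤ Real.log z := Real.log_le_log (by linarith) hxz
  have hw1 : Real.log x / Real.log z ≤ 1 := (div_le_one (hlogx.trans_le hlogz)).2 hlogz
  have hconv := convexOn_exp.2 (Set.mem_univ 0) (Set.mem_univ (Real.log z * α))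
    (sub_nonneg.2 hw1) (div_nonneg hlogx.le (hlogx.trans_le hlogz).le) (sub_add_cancel _ _)
  have hmul : Real.log x / Real.log z * (Real.log z * α) = Real.log x * α := by
    rw [← mul_assoc, div_mul_cancel₀ _ (hlogx.trans_le hlogz).ne']
  simp only [smul_eq_mul, mul_zero, zero_add, Real.exp_zero, mul_one, hmul] at hconv
  rw [Real.rpow_def_of_pos (by linarith), Real.rpow_def_of_pos (by linarith)]
  linarith [div_nonneg hlogx.le (hlogx.trans_le hlogz).le]

lemma exists_sum_primesLE_rpow_le : ∃ C : ℝ, ∀ z : ℕ, ∀ α : ℝ, 3 ≤ z →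
    ∑ q ∈ Nat.primesLE z, (q : ℝ) ^ (-(1 - α)) ≤
      Real.log (Real.log z) + C + 3 * (z : ℝ) ^ α := by
  obtain ⟨C, hC⟩ := exists_sum_primesLE_inv_le
  refine ⟨C, fun z α hz ↦ ?_⟩
  have hlogz : 1 ≤ Real.log z := by
    rw [Real.le_log_iff_exp_le (by positivity)]
    have : (3 : ℝ) ≤ z := by exact_mod_cast hz
    linarith [Real.exp_one_lt_d9]
  have hterm : ∀ q ∈ Nat.primesLE z, (q : ℝ) ^ (-(1 - α)) ≤
      1 / q + (z : ℝ) ^ α / Real.log z * (Real.log q / q) := fun q hq ↦ by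
    have hq1 : (1 : ℝ) < q := by exact_mod_cast Nat.one_lt_of_mem_primesLE hq
    have hqz : (q : ℝ) ≤ z := by exact_mod_cast Nat.le_of_mem_primesLE hq
    calc (q : ℝ) ^ (-(1 - α)) = (q : ℝ) ^ α * (1 / q) := by
          rw [neg_sub, Real.rpow_sub_one (by positivity), mul_one_div]
      _ ≤ (1 + Real.log q / Real.log z * (z : ℝ) ^ α) * (1 / q) := by
          gcongr
          exact rpow_le_one_add_log_div_log_mul_rpow hq1 hqz α
      _ = _ := by ring
  calc _ ≤ ∑ q ∈ Nat.primesLE z, (1 : ℝ) / q +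
        (z : ℝ) ^ α / Real.log z * ∑ q ∈ Nat.primesLE z, Real.log q / q := by
        rw [mul_sum, ← sum_add_distrib]
        exact sum_le_sum hterm
    _ ≤ (Real.log (Real.log z) + C) + (z : ℝ) ^ α / Real.log z * (3 * Real.log z) := by
        gcongr
        · exact hC z (by omega)
        · linarith [sum_primesLE_log_div_le z]
    _ = _ := by field_simp

lemma exists_sum_primesLE_rpow_sq_le : ∃ C : ℝ, ∀ z : ℕ, ∀ α : ℝ, α ≤ 2 / 5 →
    ∑ q ∈ Nat.primesLE z, ((q : ℝ) ^ (-(1 - α))) ^ 2 ≤ C := by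
  have hS : Summable fun n : ℕ ↦ (n : ℝ) ^ (-(6 / 5) : ℝ) := by
    rw [Real.summable_nat_rpow]
    norm_num
  refine ⟨_, fun z α hα ↦ (sum_le_sum fun q hq ↦ ?_).trans
    (hS.sum_le_tsum (Nat.primesLE z) fun n _ ↦ by positivity)⟩
  rw [← Real.rpow_natCast, ← Real.rpow_mul q.cast_nonneg]
  exact Real.rpow_le_rpow_of_exponent_le
    (by exact_mod_cast (Nat.one_lt_of_mem_primesLE hq).le) (by push_cast; linarith)

lemma exists_prod_primesLE_inv_one_sub_rpow_le : ∃ C : ℝ, 0 < C ∧ ∀ z : ℕ, ∀ α : ℝ,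
    3 ≤ z → α ≤ 2 / 5 → ∏ q ∈ Nat.primesLE z, (1 - (q : ℝ) ^ (-(1 - α)))⁻¹ ≤
      C * (Real.log z * Real.exp (3 * (z : ℝ) ^ α)) := by
  obtain ⟨C₁, hC₁⟩ := exists_sum_primesLE_rpow_le
  obtain ⟨C₂, hC₂⟩ := exists_sum_primesLE_rpow_sq_le
  refine ⟨Real.exp (C₁ + 2 * C₂), Real.exp_pos _, fun z α hz h1 ↦ ?_⟩
  have hlogz : 0 < Real.log z := Real.log_pos (by exact_mod_cast (by omega : 1 < z))
  have hq : ∀ q ∈ Nat.primesLE z, (q : ℝ) ^ (-(1 - α)) ≤ 7 / 10 := fun q hq ↦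
    rpow_neg_le_of_prime (Nat.prime_of_mem_primesLE hq) (by linarith)
  calc ∏ q ∈ Nat.primesLE z, (1 - (q : ℝ) ^ (-(1 - α)))⁻¹
      ≤ Real.exp (∑ q ∈ Nat.primesLE z,
          ((q : ℝ) ^ (-(1 - α)) + 2 * ((q : ℝ) ^ (-(1 - α))) ^ 2)) := by
        rw [Real.exp_sum]
        exact prod_le_prod (fun q h ↦ inv_nonneg.2 (by linarith [hq q h]))
          fun q h ↦ inv_one_sub_le_exp (by positivity) (hq q h)
    _ ≤ Real.exp ((C₁ + 2 * C₂) + (Real.log (Real.log z) + 3 * (z : ℝ) ^ α)) := by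
        rw [sum_add_distrib, ← mul_sum]
        refine Real.exp_le_exp.2 ?_
        linarith [hC₁ z α hz, hC₂ z α h1]
    _ = _ := by rw [Real.exp_add, Real.exp_add (Real.log _), Real.exp_log hlogz]

lemma exists_log_add_sum_vonMangoldt_smooth_le : ∃ C : ℝ, 0 < C ∧ ∀ t z m : ℕ, ∀ α : ℝ,
    0 < z → 0 < m → m ≤ t → 0 ≤ α → α ≤ 2 / 5 →
      ∑ d ∈ Nat.smoothNumbersUpTo (t / m) (z + 1), ArithmeticFunction.vonMangoldt d +
        Real.log (t / m) ≤ C * ((t : ℝ) ^ (1 - α) * (z : ℝ) ^ α) * (m : ℝ) ^ (-(1 - α)) := by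
  obtain ⟨C, hC, hbound⟩ := exists_sum_vonMangoldt_smoothNumbersUpTo_le
  refine ⟨C + 2, by positivity, fun t z m α hz hm hmt h0 h1 ↦ ?_⟩
  have hzα : 1 ≤ (z : ℝ) ^ α := Real.one_le_rpow (by exact_mod_cast hz) h0
  have hdiv : (t : ℝ) ^ (1 - α) * (m : ℝ) ^ (-(1 - α)) = ((t : ℝ) / m) ^ (1 - α) := by
    rw [Real.div_rpow t.cast_nonneg m.cast_nonneg, Real.rpow_neg m.cast_nonneg, div_eq_mul_inv]
  have hlog : Real.log (t / m) ≤ 2 * ((t : ℝ) / m) ^ (1 - α) := by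
    refine (Real.log_le_rpow_div (by positivity) (by linarith : 0 < 1 - α)).trans ?_
    rw [div_le_iff₀ (by linarith)]
    have : 0 ≤ ((t : ℝ) / m) ^ (1 - α) := by positivity
    nlinarith
  have hfloor : ((t / m : ℕ) : ℝ) ^ (1 - α) ≤ ((t : ℝ) / m) ^ (1 - α) :=
    Real.rpow_le_rpow (Nat.cast_nonneg _) Nat.cast_div_le (by linarith)
  have hsum := hbound z (t / m) α hz (Nat.div_pos hmt hm) h0 (by linarith)
  calc _ ≤ C * (((t : ℝ) / m) ^ (1 - α) * (z : ℝ) ^ α) + 2 * ((t : ℝ) / m) ^ (1 - α) := by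
        refine add_le_add (hsum.trans ?_) hlog
        gcongr
    _ ≤ (C + 2) * (((t : ℝ) / m) ^ (1 - α) * (z : ℝ) ^ α) := by
        have : 0 ≤ ((t : ℝ) / m) ^ (1 - α) := by positivity
        nlinarith
    _ = _ := by rw [← hdiv]; ring

/- Rankin's method applied to `∑ n, log n = ∑ n, ∑ d ∣ n, Λ d`. -/
theorem exists_card_smoothNumbersUpTo_mul_log_le : ∃ C : ℝ, 0 < C ∧ ∀ t z : ℕ, ∀ α : ℝ,
    3 ≤ z → 0 ≤ α → α ≤ 2 / 5 → #(Nat.smoothNumbersUpTo t (z + 1)) * Real.log t ≤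
      C * ((t : ℝ) ^ (1 - α) * (z : ℝ) ^ α) * (Real.log z * Real.exp (3 * (z : ℝ) ^ α)) := by
  obtain ⟨C₁, hC₁, hterm⟩ := exists_log_add_sum_vonMangoldt_smooth_le
  obtain ⟨C₂, hC₂, hprod⟩ := exists_prod_primesLE_inv_one_sub_rpow_le
  refine ⟨C₁ * C₂, by positivity, fun t z α hz h0 h1 ↦ ?_⟩
  calc #(Nat.smoothNumbersUpTo t (z + 1)) * Real.log t
      = ∑ n ∈ Nat.smoothNumbersUpTo t (z + 1), (Real.log n + Real.log (t / n)) := by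
        rw [← nsmul_eq_mul, ← sum_const]
        refine sum_congr rfl fun n hn ↦ ?_
        have hn0 := pos_of_mem_smoothNumbersUpTo hn
        have ht0 : 0 < t := hn0.trans_le (Nat.mem_smoothNumbersUpTo.1 hn).1
        rw [Real.log_div (by positivity) (by positivity), add_sub_cancel]
    _ ≤ ∑ m ∈ Nat.smoothNumbersUpTo t (z + 1),
          C₁ * ((t : ℝ) ^ (1 - α) * (z : ℝ) ^ α) * (m : ℝ) ^ (-(1 - α)) := by
        rw [sum_add_distrib, sum_log_smoothNumbersUpTo, ← sum_add_distrib]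
        exact sum_le_sum fun m hm ↦ hterm t z m α (by omega) (pos_of_mem_smoothNumbersUpTo hm)
          (Nat.mem_smoothNumbersUpTo.1 hm).1 h0 h1
    _ ≤ C₁ * ((t : ℝ) ^ (1 - α) * (z : ℝ) ^ α) *
          (C₂ * (Real.log z * Real.exp (3 * (z : ℝ) ^ α))) := by
        rw [← mul_sum]
        gcongr
        exact (sum_smoothNumbersUpTo_rpow_le t z (by linarith)).trans (hprod z α hz h1)
    _ = _ := by ring

end SmoothNumbers

/-! ### Selberg weights -/

section SelbergWeights

open ArithmeticFunction (moebius)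

/-- The odd squarefree integers of `[1, D]`, the support of the Selberg weights. -/
noncomputable def oddSquarefreeUpTo (D : ℕ) : Finset ℕ := {n ∈ Icc 1 D | Odd n ∧ Squarefree n}

/-- The normalising sum `∑ 1 / φ(l)` of the Selberg sieve of level `D`. -/
noncomputable def selbergSum (D : ℕ) : ℝ := ∑ l ∈ oddSquarefreeUpTo D, 1 / (l.totient : ℝ)

/-- The Selberg weights of level `D`: they minimise the quadratic form of `sum_sum_selbergWeight`
subject to the value `1` at `1`. -/
noncomputable def selbergWeight (D d : ℕ) : ℝ :=
  (moebius d : ℝ) * d / selbergSum D * ∑ l ∈ oddSquarefreeUpTo D with d ∣ l, 1 / (l.totient : ℝ)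

variable {D d n : ℕ}

lemma mem_oddSquarefreeUpTo :
    n ∈ oddSquarefreeUpTo D ↔ (1 ≤ n ∧ n ≤ D) ∧ Odd n ∧ Squarefree n := by
  simp [oddSquarefreeUpTo]

lemma pos_of_mem_oddSquarefreeUpTo (hn : n ∈ oddSquarefreeUpTo D) : 0 < n :=
  (mem_oddSquarefreeUpTo.1 hn).1.1

lemma mem_oddSquarefreeUpTo_of_dvd (hn : n ∈ oddSquarefreeUpTo D) (hd : d ∣ n) :
    d ∈ oddSquarefreeUpTo D := by
  have hn0 := pos_of_mem_oddSquarefreeUpTo hn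
  obtain ⟨⟨_, hnD⟩, hodd, hsq⟩ := mem_oddSquarefreeUpTo.1 hn
  exact mem_oddSquarefreeUpTo.2 ⟨⟨Nat.pos_of_dvd_of_pos hd hn0, (Nat.le_of_dvd hn0 hd).trans hnD⟩,
    Odd.of_dvd_nat hodd hd, hsq.squarefree_of_dvd hd⟩

lemma exists_eq_oddSquarefree_mul_sq (hn : n ∈ Icc 1 D) :
    ∃ q ∈ (oddSquarefreeUpTo D ×ˢ ({1, 2} : Finset ℕ)) ×ˢ Icc 1 D,
      n = q.1.1 * q.1.2 * q.2 ^ 2 := by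
  obtain ⟨hn1, hnD⟩ := mem_Icc.1 hn
  obtain ⟨a, b, hab, hsq⟩ := Nat.sq_mul_squarefree n
  have hb0 : 0 < b := Nat.pos_of_ne_zero fun h ↦ by simp [h] at hab; omega
  have ha0 : 0 < a := Nat.pos_of_ne_zero fun h ↦ by simp [h] at hab; omega
  have hbD : b ≤ D := calc
    b ≤ b ^ 2 := Nat.le_self_pow two_ne_zero b
    _ ≤ b ^ 2 * a := Nat.le_mul_of_pos_right _ ha0
    _ ≤ D := hab.le.trans hnD
  have haD : a ≤ D := calc
    a ≤ b ^ 2 * a := Nat.le_mul_of_pos_left _ (by positivity)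
    _ ≤ D := hab.le.trans hnD
  simp only [mem_product, mem_oddSquarefreeUpTo, mem_Icc, Prod.exists]
  rcases Nat.even_or_odd a with heven | hodd
  · obtain ⟨c, rfl⟩ := heven.two_dvd
    have hc : Odd c := by
      by_contra hc
      obtain ⟨e, rfl⟩ := (Nat.not_odd_iff_even.1 hc).two_dvd
      simpa using hsq 2 ⟨e, by ring⟩
    exact ⟨c, 2, b, ⟨⟨⟨⟨by omega, by omega⟩, hc, hsq.squarefree_of_dvd (dvd_mul_left c 2)⟩,
      by simp⟩, hb0, hbD⟩, by rw [← hab]; ring⟩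
  · exact ⟨a, 1, b, ⟨⟨⟨⟨ha0, haD⟩, hodd, hsq⟩, by simp⟩, hb0, hbD⟩, by rw [← hab]; ring⟩

lemma sum_inv_le_sum_oddSquarefreeUpTo (D : ℕ) :
    ∑ n ∈ Icc 1 D, 1 / (n : ℝ) ≤
      (∑ l ∈ oddSquarefreeUpTo D, 1 / (l : ℝ)) * (3 / 2) * ∑ m ∈ Icc 1 D, 1 / (m : ℝ) ^ 2 := by
  choose! φ hφmem hφ using fun n hn ↦ exists_eq_oddSquarefree_mul_sq (D := D) (n := n) hn
  calc ∑ n ∈ Icc 1 D, 1 / (n : ℝ)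
      = ∑ q ∈ (Icc 1 D).image φ, 1 / (q.1.1 : ℝ) * (1 / (q.1.2 : ℝ)) * (1 / (q.2 : ℝ) ^ 2) := by
        have hinj : Set.InjOn φ (Icc 1 D) := fun a ha b hb hab ↦ by rw [hφ a ha, hφ b hb, hab]
        rw [sum_image hinj]
        refine sum_congr rfl fun n hn ↦ ?_
        conv_lhs => rw [hφ n hn]
        push_cast
        simp only [one_div, mul_inv]
    _ ≤ ∑ q ∈ (oddSquarefreeUpTo D ×ˢ ({1, 2} : Finset ℕ)) ×ˢ Icc 1 D,
          1 / (q.1.1 : ℝ) * (1 / (q.1.2 : ℝ)) * (1 / (q.2 : ℝ) ^ 2) :=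
        sum_le_sum_of_subset_of_nonneg (image_subset_iff.2 hφmem) fun _ _ _ ↦ by positivity
    _ = _ := by
        rw [sum_product, sum_product]
        simp only [← mul_sum, ← sum_mul]
        norm_num

lemma sum_inv_sq_le_two (D : ℕ) : ∑ m ∈ Icc 1 D, 1 / (m : ℝ) ^ 2 ≤ 2 := by
  rcases Nat.eq_zero_or_pos D with rfl | hD
  · simp
  have hsum := sum_Ioc_inv_sq_le_sub (α := ℝ) one_ne_zero (Nat.one_le_iff_ne_zero.2 hD.ne')
  have hD0 : (0 : ℝ) ≤ (D : ℝ)⁻¹ := by positivity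
  rw [← Ioc_insert_left hD, sum_insert left_notMem_Ioc]
  norm_num at hsum ⊢
  linarith

lemma log_le_three_mul_selbergSum (hD : 1 ≤ D) : Real.log D ≤ 3 * selbergSum D := by
  have hharmonic : Real.log D ≤ ∑ n ∈ Icc 1 D, 1 / (n : ℝ) := calc
    Real.log D ≤ Real.log (D + 1 : ℕ) := Real.log_le_log (by positivity) (by push_cast; linarith)
    _ ≤ harmonic D := log_add_one_le_harmonic D
    _ = ∑ n ∈ Icc 1 D, 1 / (n : ℝ) := by simp [harmonic_eq_sum_Icc]
  have htotient : ∑ l ∈ oddSquarefreeUpTo D, 1 / (l : ℝ) ≤ selbergSum D :=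
    sum_le_sum fun l hl ↦ one_div_le_one_div_of_le
      (by exact_mod_cast Nat.totient_pos.2 (pos_of_mem_oddSquarefreeUpTo hl))
      (by exact_mod_cast Nat.totient_le l)
  have hpos : 0 ≤ ∑ l ∈ oddSquarefreeUpTo D, 1 / (l : ℝ) := sum_nonneg fun _ _ ↦ by positivity
  nlinarith [sum_inv_le_sum_oddSquarefreeUpTo D, sum_inv_sq_le_two D]

lemma selbergSum_pos (hD : 1 ≤ D) : 0 < selbergSum D := by
  refine sum_pos (fun l hl ↦ ?_) ⟨1, mem_oddSquarefreeUpTo.2 (by simp [hD])⟩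
  have := Nat.totient_pos.2 (pos_of_mem_oddSquarefreeUpTo hl)
  positivity

lemma selbergWeight_one (hD : 1 ≤ D) : selbergWeight D 1 = 1 := by
  have hV := selbergSum_pos hD
  simp only [selbergWeight, one_dvd, filter_true]
  rw [← selbergSum]
  simp [hV.ne']

lemma abs_selbergWeight_le (hD : 1 ≤ D) (hd : d ≤ D) : |selbergWeight D d| ≤ D := by
  have hV := selbergSum_pos hD
  have hle : ∑ l ∈ oddSquarefreeUpTo D with d ∣ l, 1 / (l.totient : ℝ) ≤ selbergSum D :=
    sum_le_sum_of_subset_of_nonneg (filter_subset _ _) fun _ _ _ ↦ by positivity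
  have hmu : |(moebius d : ℝ)| ≤ 1 := by
    exact_mod_cast ArithmeticFunction.abs_moebius_le_one (n := d)
  have hpos : 0 ≤ ∑ l ∈ oddSquarefreeUpTo D with d ∣ l, 1 / (l.totient : ℝ) :=
    sum_nonneg fun _ _ ↦ by positivity
  rw [selbergWeight, abs_mul, abs_div, abs_mul, abs_of_pos hV, Nat.abs_cast, abs_of_nonneg hpos]
  calc _ ≤ 1 * (D : ℝ) / selbergSum D * selbergSum D := by gcongr
    _ = D := by field_simp

lemma sum_divisors_moebius (m : ℕ) :
    ∑ e ∈ m.divisors, (moebius e : ℝ) = if m = 1 then 1 else 0 := by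
  have h := congrArg (fun f ↦ f m) ArithmeticFunction.coe_zeta_mul_moebius
  simp only [ArithmeticFunction.coe_zeta_mul_apply, ArithmeticFunction.one_apply] at h
  exact_mod_cast h

lemma sum_moebius_multiples_dvd {g l : ℕ} (hg : 0 < g) (hl : l ∈ oddSquarefreeUpTo D) :
    ∑ d ∈ oddSquarefreeUpTo D with g ∣ d ∧ d ∣ l, (moebius d : ℝ) =
      if l = g then (moebius g : ℝ) else 0 := by
  by_cases hgl : g ∣ l
  swap
  · rw [if_neg (by rintro rfl; exact hgl dvd_rfl), filter_false_of_mem, sum_empty]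
    exact fun d _ h ↦ hgl (h.1.trans h.2)
  obtain ⟨m, rfl⟩ := hgl
  have hm0 : m ≠ 0 := right_ne_zero_of_mul (pos_of_mem_oddSquarefreeUpTo hl).ne'
  have hcop : Nat.Coprime g m := Nat.coprime_of_squarefree_mul (mem_oddSquarefreeUpTo.1 hl).2.2
  have himage : {d ∈ oddSquarefreeUpTo D | g ∣ d ∧ d ∣ g * m} = m.divisors.image (g * ·) := by
    ext d
    simp only [mem_filter, mem_image, Nat.mem_divisors]
    constructor
    · rintro ⟨_, ⟨e, rfl⟩, hdvd⟩
      exact ⟨e, ⟨Nat.dvd_of_mul_dvd_mul_left hg hdvd, hm0⟩, rfl⟩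
    · rintro ⟨e, ⟨he, _⟩, rfl⟩
      have hdvd := Nat.mul_dvd_mul_left g he
      exact ⟨mem_oddSquarefreeUpTo_of_dvd hl hdvd, dvd_mul_right g e, hdvd⟩
  calc _ = ∑ e ∈ m.divisors, (moebius (g * e) : ℝ) := by
        rw [himage, sum_image fun a _ b _ h ↦ Nat.eq_of_mul_eq_mul_left hg h]
    _ = ∑ e ∈ m.divisors, (moebius g : ℝ) * moebius e := by
        refine sum_congr rfl fun e he ↦ ?_
        rw [ArithmeticFunction.isMultiplicative_moebius.map_mul_of_coprime
          (hcop.coprime_dvd_right (Nat.dvd_of_mem_divisors he)), Int.cast_mul]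
    _ = if g * m = g then (moebius g : ℝ) else 0 := by
        rw [← mul_sum, sum_divisors_moebius]
        simp [Nat.mul_eq_left hg.ne']

lemma sum_selbergWeight_div {g : ℕ} (hg : g ∈ oddSquarefreeUpTo D) :
    ∑ d ∈ oddSquarefreeUpTo D with g ∣ d, selbergWeight D d / d =
      (moebius g : ℝ) / (selbergSum D * g.totient) := by
  calc ∑ d ∈ oddSquarefreeUpTo D with g ∣ d, selbergWeight D d / d
      = ∑ d ∈ oddSquarefreeUpTo D with g ∣ d, ∑ l ∈ oddSquarefreeUpTo D with d ∣ l,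
          (moebius d : ℝ) * (1 / (selbergSum D * l.totient)) := by
        refine sum_congr rfl fun d hd ↦ ?_
        have hd0 := pos_of_mem_oddSquarefreeUpTo (mem_filter.1 hd).1
        rw [selbergWeight, mul_sum, sum_div]
        refine sum_congr rfl fun l _ ↦ ?_
        field_simp
    _ = ∑ l ∈ oddSquarefreeUpTo D, ∑ d ∈ oddSquarefreeUpTo D with g ∣ d ∧ d ∣ l,
          (moebius d : ℝ) * (1 / (selbergSum D * l.totient)) := by
        refine sum_comm' fun d l ↦ ?_
        simp only [mem_filter]
        tauto
    _ = ∑ l ∈ oddSquarefreeUpTo D, if l = g then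
          (moebius g : ℝ) / (selbergSum D * g.totient) else 0 := by
        refine sum_congr rfl fun l hl ↦ ?_
        rw [← sum_mul, sum_moebius_multiples_dvd (pos_of_mem_oddSquarefreeUpTo hg) hl]
        split_ifs with h
        · rw [h, mul_one_div]
        · rw [zero_mul]
    _ = _ := by rw [sum_ite_eq', if_pos hg]

lemma selbergWeight_mul_div_lcm {e : ℕ} (hd : d ∈ oddSquarefreeUpTo D)
    (he : e ∈ oddSquarefreeUpTo D) :
    selbergWeight D d * selbergWeight D e / (Nat.lcm d e : ℝ) =
      ∑ g ∈ oddSquarefreeUpTo D, (g.totient : ℝ) *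
        ((if g ∣ d then selbergWeight D d / d else 0) *
          (if g ∣ e then selbergWeight D e / e else 0)) := by
  have hd0 := pos_of_mem_oddSquarefreeUpTo hd
  have he0 := pos_of_mem_oddSquarefreeUpTo he
  have := Nat.lcm_pos hd0 he0
  have hmul : (Nat.gcd d e : ℝ) * Nat.lcm d e = d * e := by exact_mod_cast Nat.gcd_mul_lcm d e
  have hgcd : (Nat.gcd d e : ℝ) =
      ∑ g ∈ oddSquarefreeUpTo D with g ∣ d ∧ g ∣ e, (g.totient : ℝ) := by
    have hdivisors : (Nat.gcd d e).divisors = {g ∈ oddSquarefreeUpTo D | g ∣ d ∧ g ∣ e} := by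
      ext g
      simp only [Nat.mem_divisors, mem_filter, Nat.dvd_gcd_iff]
      exact ⟨fun h ↦ ⟨mem_oddSquarefreeUpTo_of_dvd hd h.1.1, h.1⟩,
        fun h ↦ ⟨h.2, Nat.gcd_ne_zero_left hd0.ne'⟩⟩
    rw [← hdivisors]
    exact_mod_cast (Nat.sum_totient (Nat.gcd d e)).symm
  calc selbergWeight D d * selbergWeight D e / (Nat.lcm d e : ℝ)
      = (Nat.gcd d e : ℝ) * (selbergWeight D d / d * (selbergWeight D e / e)) := by
        field_simp
        linear_combination (-selbergWeight D d * selbergWeight D e) * hmul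
    _ = _ := by
        rw [hgcd, sum_mul, sum_filter]
        refine sum_congr rfl fun g _ ↦ ?_
        by_cases h₁ : g ∣ d <;> by_cases h₂ : g ∣ e <;> simp [h₁, h₂]

lemma sum_sum_selbergWeight (D : ℕ) :
    ∑ d ∈ oddSquarefreeUpTo D, ∑ e ∈ oddSquarefreeUpTo D,
      selbergWeight D d * selbergWeight D e / (Nat.lcm d e : ℝ) = 1 / selbergSum D := by
  calc ∑ d ∈ oddSquarefreeUpTo D, ∑ e ∈ oddSquarefreeUpTo D,
        selbergWeight D d * selbergWeight D e / (Nat.lcm d e : ℝ)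
      = ∑ d ∈ oddSquarefreeUpTo D, ∑ e ∈ oddSquarefreeUpTo D, ∑ g ∈ oddSquarefreeUpTo D,
          (g.totient : ℝ) * ((if g ∣ d then selbergWeight D d / d else 0) *
            (if g ∣ e then selbergWeight D e / e else 0)) :=
        sum_congr rfl fun d hd ↦ sum_congr rfl fun e he ↦ selbergWeight_mul_div_lcm hd he
    _ = ∑ g ∈ oddSquarefreeUpTo D, (g.totient : ℝ) *
          (∑ d ∈ oddSquarefreeUpTo D with g ∣ d, selbergWeight D d / d) ^ 2 := by
        rw [sum_congr rfl fun d _ ↦ sum_comm, sum_comm]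
        refine sum_congr rfl fun g _ ↦ ?_
        rw [sq, sum_filter, sum_mul_sum, mul_sum]
        exact sum_congr rfl fun d _ ↦ (mul_sum _ _ _).symm
    _ = ∑ g ∈ oddSquarefreeUpTo D, 1 / selbergSum D ^ 2 * (1 / (g.totient : ℝ)) := by
        refine sum_congr rfl fun g hg ↦ ?_
        have hφ := Nat.totient_pos.2 (pos_of_mem_oddSquarefreeUpTo hg)
        have hmu : (moebius g : ℝ) ^ 2 = 1 := by
          exact_mod_cast ArithmeticFunction.moebius_sq_eq_one_of_squarefree
            (mem_oddSquarefreeUpTo.1 hg).2.2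
        rw [sum_selbergWeight_div hg, div_pow, hmu]
        field_simp
    _ = 1 / selbergSum D := by
        rw [← mul_sum, ← selbergSum, sq, div_mul_eq_mul_div, one_mul, div_self_mul_self', one_div]

end SelbergWeights

/-! ### Cancellation in sums of Jacobi symbols -/

section JacobiSums

/-- The Jacobi symbol `(n / l)` as a real number; for a prime `l` this is the quadratic character
modulo `l`. -/
noncomputable def quadChar (l n : ℕ) : ℝ := ((jacobiSym n l : ℤ) : ℝ)

variable {n m b c q : ℕ}

lemma exists_prime_odd_factorization (hn : n ≠ 0) (h : ¬ IsSquare n) :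
    ∃ q, q.Prime ∧ Odd (n.factorization q) := by
  contrapose! h
  refine ⟨∏ q ∈ n.primeFactors, q ^ (n.factorization q / 2), ?_⟩
  rw [← prod_mul_distrib]
  conv_lhs => rw [← Nat.prod_factorization_pow_eq_self hn, Finsupp.prod, Nat.support_factorization]
  refine prod_congr rfl fun q hq ↦ ?_
  obtain ⟨e, he⟩ := Nat.not_odd_iff_even.1 (h q (Nat.prime_of_mem_primeFactors hq))
  rw [← pow_add, he]
  congr 1
  omega

lemma jacobiSym_eq_one_of_modEq_one (hm : Odd m) (hb : b % 4 = 1) (h : b ≡ 1 [MOD m]) :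
    jacobiSym m b = 1 := by
  rw [← jacobiSym.quadratic_reciprocity_one_mod_four hb hm, ← jacobiSym.one_left m]
  exact jacobiSym.mod_left' (by exact_mod_cast h)

lemma exists_jacobiSym_two_eq_neg_one (hm : Odd m) :
    ∃ b, Odd b ∧ jacobiSym 2 b = -1 ∧ jacobiSym m b = 1 := by
  have hcop : Nat.Coprime 8 m := (Nat.coprime_two_left.2 hm).pow_left 3
  obtain ⟨b, hb5 : b % 8 = 5, hb1⟩ := Nat.chineseRemainder hcop 5 1
  have hodd : Odd b := Nat.odd_iff.2 (by omega)
  refine ⟨b, hodd, ?_, jacobiSym_eq_one_of_modEq_one hm (by omega) hb1⟩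
  rw [jacobiSym.at_two hodd, ZMod.χ₈_nat_eq_if_mod_eight]
  simp [hb5, show b % 2 ≠ 0 by omega]

lemma exists_jacobiSym_odd_prime_eq_neg_one (hq : q.Prime) (hq2 : q ≠ 2) (hm : Odd m)
    (hqm : ¬ q ∣ m) :
    ∃ b, Odd b ∧ jacobiSym q b = -1 ∧ jacobiSym 2 b = 1 ∧ jacobiSym m b = 1 := by
  have : Fact q.Prime := ⟨hq⟩
  obtain ⟨r, hr⟩ := FiniteField.exists_nonsquare (F := ZMod q)
    (by rwa [ZMod.ringChar_zmod_n])
  have hcop : Nat.Coprime (8 * m) q := by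
    rw [Nat.coprime_comm, hq.coprime_iff_not_dvd, hq.dvd_mul, not_or]
    exact ⟨fun h ↦ hq2 ((Nat.prime_dvd_prime_iff_eq hq Nat.prime_two).1
      (hq.dvd_of_dvd_pow (show q ∣ 2 ^ 3 from h))), hqm⟩
  obtain ⟨b, hb1, hbr⟩ := Nat.chineseRemainder hcop 1 r.val
  have hb8 : b % 8 = 1 := hb1.of_mul_right m
  have hodd : Odd b := Nat.odd_iff.2 (by omega)
  refine ⟨b, hodd, ?_, ?_, jacobiSym_eq_one_of_modEq_one hm (by omega) (hb1.of_mul_left 8)⟩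
  · have hbcast : ((b : ℤ) : ZMod q) = r := by
      rw [Int.cast_natCast, (ZMod.natCast_eq_natCast_iff _ _ _).2 hbr, ZMod.natCast_zmod_val]
    rw [← jacobiSym.quadratic_reciprocity_one_mod_four (by omega) (hq.odd_of_ne_two hq2),
      ← jacobiSym.legendreSym.to_jacobiSym, legendreSym.eq_neg_one_iff, hbcast]
    exact hr
  · rw [jacobiSym.at_two hodd, ZMod.χ₈_nat_eq_if_mod_eight]
    simp [hb8, show b % 2 ≠ 0 by omega]

lemma exists_jacobiSym_prime_eq_neg_one (hq : q.Prime) (hqm : ¬ q ∣ m) :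
    ∃ b, Odd b ∧ jacobiSym q b = -1 ∧ jacobiSym m b = 1 := by
  have hm : m ≠ 0 := by
    rintro rfl
    exact hqm (dvd_zero q)
  by_cases hq2 : q = 2
  · subst hq2
    exact exists_jacobiSym_two_eq_neg_one (Nat.odd_iff.2 (Nat.two_dvd_ne_zero.1 hqm))
  · obtain ⟨a, m', hm', rfl⟩ := Nat.exists_eq_pow_mul_and_not_dvd hm 2 (by norm_num)
    obtain ⟨b, hb, hqb, h2b, hmb⟩ := exists_jacobiSym_odd_prime_eq_neg_one hq hq2
      (Nat.odd_iff.2 (Nat.two_dvd_ne_zero.1 hm')) fun h ↦ hqm (h.mul_left _)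
    refine ⟨b, hb, hqb, ?_⟩
    push_cast
    rw [jacobiSym.mul_left, jacobiSym.pow_left, h2b, hmb, one_pow, one_mul]

lemma exists_jacobiSym_eq_neg_one (hn : n ≠ 0) (h : ¬ IsSquare n) :
    ∃ b, Odd b ∧ jacobiSym n b = -1 := by
  obtain ⟨q, hq, hodd⟩ := exists_prime_odd_factorization hn h
  obtain ⟨b, hb, hqb, hmb⟩ :=
    exists_jacobiSym_prime_eq_neg_one hq (Nat.not_dvd_ordCompl hq hn)
  refine ⟨b, hb, ?_⟩
  rw [← Nat.ordProj_mul_ordCompl_eq_self n q]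
  push_cast
  rw [jacobiSym.mul_left, jacobiSym.pow_left, hqb, ← Nat.cast_pow, ← Int.natCast_div, hmb,
    hodd.neg_one_pow, mul_one]

lemma sum_range_eq_zero_of_periodic {g : ℕ → ℝ} (hc : 0 < c) (hb : Nat.Coprime b c)
    (hper : ∀ n, g (n % c) = g n) (hneg : ∀ n, g (b * n) = -g n) : ∑ n ∈ range c, g n = 0 := by
  have : NeZero c := ⟨hc.ne'⟩
  have hrange : ∑ n ∈ range c, g n = ∑ u : ZMod c, g u.val := by
    refine sum_nbij' (fun n ↦ (n : ZMod c)) ZMod.val ?_ ?_ ?_ ?_ ?_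
    · simp
    · simp [ZMod.val_lt]
    · intro n hn
      rw [ZMod.val_natCast, Nat.mod_eq_of_lt (mem_range.1 hn)]
    · simp
    · intro n _
      rw [ZMod.val_natCast, hper]
  have hunit : ∀ u : ZMod c, g ((ZMod.unitOfCoprime b hb : ZMod c) * u).val = -g u.val := by
    intro u
    rw [ZMod.coe_unitOfCoprime, ← hneg, ← hper (b * u.val)]
    congr 1
    conv_lhs => rw [← ZMod.natCast_zmod_val u, ← Nat.cast_mul, ZMod.val_natCast]
  have hself : ∑ u : ZMod c, g u.val = -∑ u : ZMod c, g u.val := calc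
    ∑ u : ZMod c, g u.val = ∑ u : ZMod c, g ((ZMod.unitOfCoprime b hb : ZMod c) * u).val :=
      (Equiv.sum_comp (Units.mulLeft (ZMod.unitOfCoprime b hb)) fun u ↦ g u.val).symm
    _ = -∑ u : ZMod c, g u.val := by
      rw [← sum_neg_distrib]
      exact sum_congr rfl fun u _ ↦ hunit u
  linarith

lemma abs_sum_range_le_of_periodic {g : ℕ → ℝ} (hc : 0 < c) (hper : ∀ n, g (n % c) = g n)
    (hg : ∀ n, |g n| ≤ 1) (hsum : ∑ n ∈ range c, g n = 0) (m : ℕ) :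
    |∑ n ∈ range m, g n| ≤ c := by
  induction m using Nat.strong_induction_on with
  | _ m ih =>
    rcases lt_or_ge m c with hm | hm
    · calc |∑ n ∈ range m, g n| ≤ ∑ n ∈ range m, |g n| := abs_sum_le_sum_abs _ _
        _ ≤ ∑ n ∈ range m, 1 := sum_le_sum fun n _ ↦ hg n
        _ = m := by simp
        _ ≤ c := by exact_mod_cast hm.le
    · have hshift : ∀ n, g (c + n) = g n := fun n ↦ by
        rw [← hper (c + n), ← hper n, Nat.add_mod_left]
      rw [← Nat.add_sub_of_le hm, sum_range_add, hsum, zero_add]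
      simp only [hshift]
      exact ih _ (by omega)

lemma abs_sum_Ioc_le_of_periodic {g : ℕ → ℝ} (hc : 0 < c) (hper : ∀ n, g (n % c) = g n)
    (hg : ∀ n, |g n| ≤ 1) (hsum : ∑ n ∈ range c, g n = 0) (a b : ℕ) :
    |∑ n ∈ Ioc a b, g n| ≤ 2 * c := by
  rcases le_total b a with hab | hab
  · simp [Ioc_eq_empty_of_le hab]
  have hdiff : ∑ n ∈ Ioc a b, g n = ∑ n ∈ range (b + 1), g n - ∑ n ∈ range (a + 1), g n := by
    rw [← sum_Ico_eq_sub _ (by omega)]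
    congr 1
    ext x
    simp only [mem_Ioc, mem_Ico]
    omega
  calc |∑ n ∈ Ioc a b, g n|
      ≤ |∑ n ∈ range (b + 1), g n| + |∑ n ∈ range (a + 1), g n| := hdiff ▸ abs_sub _ _
    _ ≤ 2 * c := by
        linarith [abs_sum_range_le_of_periodic hc hper hg hsum (a + 1),
          abs_sum_range_le_of_periodic hc hper hg hsum (b + 1)]

lemma abs_quadChar_le_one (l n : ℕ) : |quadChar l n| ≤ 1 := by
  rcases jacobiSym.trichotomy n l with h | h | h <;> simp [quadChar, h]

/- By reciprocity `(n / l)` has period `4n` in odd `l`, and it changes sign under multiplication of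
`l` by some residue. -/
lemma abs_sum_odd_quadChar_le (hn : n ≠ 0) (h : ¬ IsSquare n) (a b : ℕ) :
    |∑ l ∈ Ioc a b with Odd l, quadChar l n| ≤ 8 * n := by
  obtain ⟨q, hq, hj⟩ := exists_jacobiSym_eq_neg_one hn h
  have hq0 : NeZero q := ⟨hq.pos.ne'⟩
  have hper : ∀ l, (if Odd (l % (4 * n)) then quadChar (l % (4 * n)) n else 0) =
      if Odd l then quadChar l n else 0 := fun l ↦ by
    have hodd : Odd (l % (4 * n)) ↔ Odd l := by
      rw [Nat.odd_iff, Nat.odd_iff, Nat.mod_mod_of_dvd _ ⟨2 * n, by ring⟩]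
    simp only [hodd]
    split_ifs with ho
    · rw [quadChar, quadChar, jacobiSym.mod_right (n : ℤ) ho, Int.natAbs_natCast]
    · rfl
  have hcop : Nat.Coprime q (4 * n) := by
    refine Nat.Coprime.mul_right ((Nat.coprime_two_right.2 hq).pow_right 2) ?_
    by_contra hc
    have h0 := (jacobiSym.eq_zero_iff_not_coprime (a := n) (b := q)).2
      fun h ↦ hc (Nat.coprime_comm.1 h)
    omega
  have hneg : ∀ l, (if Odd (q * l) then quadChar (q * l) n else 0) =
      -if Odd l then quadChar l n else 0 := fun l ↦ by
    simp only [Nat.odd_mul, hq, true_and]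
    split_ifs with ho
    · have : NeZero l := ⟨ho.pos.ne'⟩
      rw [quadChar, quadChar, jacobiSym.mul_right, hj]
      push_cast
      ring
    · rw [neg_zero]
  have hle : ∀ l, |if Odd l then quadChar l n else 0| ≤ 1 := fun l ↦ by
    split_ifs
    · exact abs_quadChar_le_one l n
    · simp
  have hc : 0 < 4 * n := by positivity
  rw [sum_filter]
  refine (abs_sum_Ioc_le_of_periodic hc hper hle
    (sum_range_eq_zero_of_periodic hc hcop hper hneg) a b).trans_eq ?_
  push_cast
  ring

end JacobiSums

/-! ### Moments over the primes of an interval -/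

section SieveMoments

variable {D X Y n q : ℕ} {a : ℕ → ℝ}

lemma card_odd_multiples_eq (hq : Odd q) (X Y : ℕ) :
    #{m ∈ Ioc X Y | Odd m ∧ q ∣ m} = #{m ∈ Ioc X Y | m ≡ q [MOD q * 2]} := by
  refine congrArg card (filter_congr fun m _ ↦ ?_)
  rw [← Nat.modEq_and_modEq_iff_modEq_mul (Nat.coprime_two_right.2 hq), and_comm, Nat.ModEq,
    Nat.ModEq, Nat.mod_self, ← Nat.dvd_iff_mod_eq_zero, Nat.odd_iff.1 hq, Nat.odd_iff]

lemma abs_card_odd_multiples_sub_le (hXY : X ≤ Y) (hq : Odd q) :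
    |(#{m ∈ Ioc X Y | Odd m ∧ q ∣ m} : ℝ) - ((Y : ℝ) - X) / (2 * q)| ≤ 1 := by
  have hq0 : 0 < q * 2 := by have := hq.pos; positivity
  have hcard : (#{m ∈ Ioc X Y | Odd m ∧ q ∣ m} : ℤ) =
      ⌊((Y : ℚ) - q) / (q * 2 : ℕ)⌋ - ⌊((X : ℚ) - q) / (q * 2 : ℕ)⌋ := by
    rw [card_odd_multiples_eq hq, Nat.Ioc_filter_modEq_card X Y hq0, max_eq_left]
    exact sub_nonneg.2 (Int.floor_mono (by gcongr))
  have hY := Int.floor_le (((Y : ℚ) - q) / (q * 2 : ℕ))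
  have hY' := Int.lt_floor_add_one (((Y : ℚ) - q) / (q * 2 : ℕ))
  have hX := Int.floor_le (((X : ℚ) - q) / (q * 2 : ℕ))
  have hX' := Int.lt_floor_add_one (((X : ℚ) - q) / (q * 2 : ℕ))
  have hdiff : ((Y : ℚ) - X) / (2 * q) =
      ((Y : ℚ) - q) / (q * 2 : ℕ) - ((X : ℚ) - q) / (q * 2 : ℕ) := by
    push_cast
    ring
  have hrat : |(#{m ∈ Ioc X Y | Odd m ∧ q ∣ m} : ℚ) - ((Y : ℚ) - X) / (2 * q)| ≤ 1 := by
    rw [← Int.cast_natCast, hcard, hdiff, abs_le]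
    push_cast at *
    constructor <;> linarith
  simpa using (Rat.cast_le (K := ℝ)).2 hrat

lemma sum_odd_multiples (hq : Odd q) (X Y : ℕ) (g : ℕ → ℝ) :
    ∑ m ∈ Ioc X Y with Odd m ∧ q ∣ m, g m =
      ∑ m ∈ Ioc (X / q) (Y / q) with Odd m, g (q * m) := by
  have hq0 : 0 < q := hq.pos
  symm
  refine sum_bij (fun m _ ↦ q * m) (fun m hm ↦ ?_)
    (fun _ _ _ _ h ↦ Nat.eq_of_mul_eq_mul_left hq0 h) (fun m hm ↦ ?_) fun _ _ ↦ rfl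
  · simp only [mem_filter, mem_Ioc, Nat.div_lt_iff_lt_mul hq0, Nat.le_div_iff_mul_le hq0] at hm ⊢
    rw [mul_comm q m]
    exact ⟨hm.1, hm.2.mul hq, dvd_mul_left q m⟩
  · simp only [mem_filter, mem_Ioc] at hm
    obtain ⟨hm, hodd, e, rfl⟩ := hm
    refine ⟨e, ?_, rfl⟩
    simp only [mem_filter, mem_Ioc, Nat.div_lt_iff_lt_mul hq0, Nat.le_div_iff_mul_le hq0]
    rw [mul_comm e q]
    exact ⟨hm, (Nat.odd_mul.1 hodd).2⟩

lemma quadChar_one_right (l : ℕ) : quadChar l 1 = 1 := by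
  simp [quadChar, jacobiSym.one_left]

lemma quadChar_mul_right (l m n : ℕ) : quadChar l (m * n) = quadChar l m * quadChar l n := by
  simp only [quadChar, Nat.cast_mul, jacobiSym.mul_left, Int.cast_mul]

lemma quadChar_mul_left {l m : ℕ} (hl : l ≠ 0) (hm : m ≠ 0) (n : ℕ) :
    quadChar (l * m) n = quadChar l n * quadChar m n := by
  have : NeZero l := ⟨hl⟩
  have : NeZero m := ⟨hm⟩
  simp only [quadChar, jacobiSym.mul_right, Int.cast_mul]

lemma quadChar_prod_right {ι : Type*} (l : ℕ) (s : Finset ι) (f : ι → ℕ) :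
    quadChar l (∏ i ∈ s, f i) = ∏ i ∈ s, quadChar l (f i) :=
  prod_hom_rel (r := fun x y ↦ quadChar l x = y) (quadChar_one_right l)
    fun i m y h ↦ by rw [quadChar_mul_right, h]

lemma pow_sum_mul_quadChar (J : Finset ℕ) (a : ℕ → ℝ) (l m : ℕ) :
    (∑ n ∈ J, a n * quadChar l n) ^ m = ∑ v ∈ Fintype.piFinset fun _ : Fin m ↦ J,
      (∏ i, a (v i)) * quadChar l (∏ i, v i) := by
  simp only [sum_pow', prod_mul_distrib, quadChar_prod_right]

lemma card_isSquare_prod_le_signMoment (P : Finset ℕ) (t m : ℕ) :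
    (#{v ∈ Fintype.piFinset fun _ : Fin m ↦ Icc 1 t | IsSquare (∏ i, v i)} : ℝ) ≤
      signMoment P t m := by
  have hexpand := expect_pow_sum_mul_primeSign (J := Icc 1 t) P (fun _ ↦ 1) (by simp) m
  simp only [one_mul, prod_const_one] at hexpand
  rw [signMoment, hexpand, card_filter, Nat.cast_sum]
  refine sum_le_sum fun v _ ↦ ?_
  split_ifs with hs
  · simp only [primeSign_of_isSquare hs]
    rw [expect_const (powerset_nonempty P), Nat.cast_one]
  · simpa using expect_primeSign_nonneg P _

/-- The Selberg majorant of the indicator function of the primes exceeding the level `D`. -/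
noncomputable def selbergMajorant (D m : ℕ) : ℝ :=
  (∑ d ∈ oddSquarefreeUpTo D with d ∣ m, selbergWeight D d) ^ 2

lemma selbergMajorant_nonneg (D m : ℕ) : 0 ≤ selbergMajorant D m := sq_nonneg _

lemma selbergMajorant_of_prime (hD : 1 ≤ D) (hq : q.Prime) (hDq : D < q) :
    selbergMajorant D q = 1 := by
  have hone : {d ∈ oddSquarefreeUpTo D | d ∣ q} = {1} := by
    ext d
    simp only [mem_filter, mem_oddSquarefreeUpTo, mem_singleton]
    constructor
    · rintro ⟨⟨⟨_, hd⟩, _⟩, hdvd⟩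
      exact ((Nat.dvd_prime hq).1 hdvd).resolve_right (by omega)
    · rintro rfl
      simp [hD]
  rw [selbergMajorant, hone, sum_singleton, selbergWeight_one hD, one_pow]

lemma sum_odd_selbergMajorant_mul (D X Y : ℕ) (g : ℕ → ℝ) :
    ∑ m ∈ Ioc X Y with Odd m, selbergMajorant D m * g m =
      ∑ d ∈ oddSquarefreeUpTo D, ∑ e ∈ oddSquarefreeUpTo D,
        selbergWeight D d * selbergWeight D e *
          ∑ m ∈ Ioc X Y with Odd m ∧ Nat.lcm d e ∣ m, g m := by
  have hterm : ∀ m, selbergMajorant D m * g m =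
      ∑ d ∈ oddSquarefreeUpTo D, ∑ e ∈ oddSquarefreeUpTo D,
        selbergWeight D d * selbergWeight D e * (if Nat.lcm d e ∣ m then g m else 0) := by
    intro m
    rw [selbergMajorant, sq, sum_filter, sum_mul_sum, sum_mul]
    refine sum_congr rfl fun d _ ↦ ?_
    rw [sum_mul]
    refine sum_congr rfl fun e _ ↦ ?_
    by_cases hd : d ∣ m <;> by_cases he : e ∣ m <;> simp [hd, he, Nat.lcm_dvd_iff]
  simp_rw [hterm]
  rw [sum_comm]
  refine sum_congr rfl fun d _ ↦ ?_
  rw [sum_comm]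
  refine sum_congr rfl fun e _ ↦ ?_
  rw [← mul_sum, ← filter_filter, sum_filter (fun m ↦ Nat.lcm d e ∣ m)]

lemma sum_sum_abs_selbergWeight_mul_le (hD : 1 ≤ D) :
    ∑ d ∈ oddSquarefreeUpTo D, ∑ e ∈ oddSquarefreeUpTo D,
      |selbergWeight D d * selbergWeight D e| ≤ (D : ℝ) ^ 4 := by
  have hcard : #(oddSquarefreeUpTo D) ≤ D :=
    (card_filter_le _ _).trans_eq (by simp)
  have hsum : ∑ d ∈ oddSquarefreeUpTo D, |selbergWeight D d| ≤ (D : ℝ) ^ 2 := calc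
    _ ≤ ∑ _ ∈ oddSquarefreeUpTo D, (D : ℝ) := sum_le_sum fun _ hd ↦
        abs_selbergWeight_le hD (mem_oddSquarefreeUpTo.1 hd).1.2
    _ ≤ (D : ℝ) ^ 2 := by
      rw [sum_const, nsmul_eq_mul, sq]
      gcongr
  calc _ = (∑ d ∈ oddSquarefreeUpTo D, |selbergWeight D d|) ^ 2 := by
        simp only [sq, sum_mul_sum, abs_mul]
    _ ≤ ((D : ℝ) ^ 2) ^ 2 := by gcongr
    _ = (D : ℝ) ^ 4 := by ring

lemma odd_lcm {d e : ℕ} (hd : d ∈ oddSquarefreeUpTo D) (he : e ∈ oddSquarefreeUpTo D) :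
    Odd (Nat.lcm d e) :=
  Odd.of_dvd_nat ((mem_oddSquarefreeUpTo.1 hd).2.1.mul (mem_oddSquarefreeUpTo.1 he).2.1)
    (Nat.lcm_dvd_mul d e)

lemma sum_odd_selbergMajorant_le (hD : 1 ≤ D) (hXY : X ≤ Y) :
    ∑ m ∈ Ioc X Y with Odd m, selbergMajorant D m ≤
      ((Y : ℝ) - X) / (2 * selbergSum D) + (D : ℝ) ^ 4 := by
  have hterm : ∀ d ∈ oddSquarefreeUpTo D, ∀ e ∈ oddSquarefreeUpTo D,
      selbergWeight D d * selbergWeight D e * (#{m ∈ Ioc X Y | Odd m ∧ Nat.lcm d e ∣ m} : ℝ) ≤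
        ((Y : ℝ) - X) / 2 * (selbergWeight D d * selbergWeight D e / (Nat.lcm d e : ℝ)) +
          |selbergWeight D d * selbergWeight D e| := fun d hd e he ↦ by
    have hcount := abs_card_odd_multiples_sub_le hXY (odd_lcm hd he)
    have herror := (le_abs_self _).trans_eq (abs_mul (selbergWeight D d * selbergWeight D e)
      ((#{m ∈ Ioc X Y | Odd m ∧ Nat.lcm d e ∣ m} : ℝ) - ((Y : ℝ) - X) / (2 * Nat.lcm d e)))
    have hle := herror.trans (mul_le_of_le_one_right (abs_nonneg _) hcount)
    have hmain : ((Y : ℝ) - X) / 2 * (selbergWeight D d * selbergWeight D e / Nat.lcm d e) =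
        selbergWeight D d * selbergWeight D e * (((Y : ℝ) - X) / (2 * Nat.lcm d e)) := by
      ring
    linarith
  have hexpand := sum_odd_selbergMajorant_mul D X Y fun _ ↦ 1
  simp only [mul_one, sum_const, nsmul_eq_mul] at hexpand
  calc _ ≤ ∑ d ∈ oddSquarefreeUpTo D, ∑ e ∈ oddSquarefreeUpTo D,
        (((Y : ℝ) - X) / 2 * (selbergWeight D d * selbergWeight D e / (Nat.lcm d e : ℝ)) +
          |selbergWeight D d * selbergWeight D e|) :=
        hexpand.trans_le (sum_le_sum fun d hd ↦ sum_le_sum fun e he ↦ hterm d hd e he)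
    _ ≤ ((Y : ℝ) - X) / 2 * (1 / selbergSum D) + (D : ℝ) ^ 4 := by
        simp only [sum_add_distrib, ← mul_sum, sum_sum_selbergWeight]
        gcongr
        exact sum_sum_abs_selbergWeight_mul_le hD
    _ = _ := by ring

lemma abs_sum_odd_selbergMajorant_mul_quadChar_le (hD : 1 ≤ D) (hn : n ≠ 0)
    (hs : ¬ IsSquare n) (X Y : ℕ) :
    |∑ m ∈ Ioc X Y with Odd m, selbergMajorant D m * quadChar m n| ≤ 8 * n * (D : ℝ) ^ 4 := by
  have hterm : ∀ d ∈ oddSquarefreeUpTo D, ∀ e ∈ oddSquarefreeUpTo D,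
      |selbergWeight D d * selbergWeight D e *
        ∑ m ∈ Ioc X Y with Odd m ∧ Nat.lcm d e ∣ m, quadChar m n| ≤
          |selbergWeight D d * selbergWeight D e| * (8 * n) := fun d hd e he ↦ by
    have hodd := odd_lcm hd he
    rw [abs_mul, sum_odd_multiples hodd]
    gcongr
    calc _ = |quadChar (Nat.lcm d e) n| *
          |∑ m ∈ Ioc (X / Nat.lcm d e) (Y / Nat.lcm d e) with Odd m, quadChar m n| := by
          rw [← abs_mul, mul_sum]
          refine congrArg abs (sum_congr rfl fun m hm ↦ ?_)
          exact quadChar_mul_left hodd.pos.ne' (mem_filter.1 hm).2.pos.ne' n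
      _ ≤ 1 * (8 * n) := by
          gcongr
          · exact abs_quadChar_le_one _ n
          · exact abs_sum_odd_quadChar_le hn hs _ _
      _ = 8 * n := one_mul _
  rw [sum_odd_selbergMajorant_mul]
  calc _ ≤ ∑ d ∈ oddSquarefreeUpTo D, ∑ e ∈ oddSquarefreeUpTo D,
        |selbergWeight D d * selbergWeight D e| * (8 * n) :=
        (abs_sum_le_sum_abs _ _).trans (sum_le_sum fun d hd ↦
          (abs_sum_le_sum_abs _ _).trans (sum_le_sum fun e he ↦ hterm d hd e he))
    _ ≤ (D : ℝ) ^ 4 * (8 * n) := by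
        simp only [← sum_mul]
        gcongr
        exact sum_sum_abs_selbergWeight_mul_le hD
    _ = _ := mul_comm _ _

lemma abs_sum_odd_selbergMajorant_mul_quadChar_le_ite (hD : 1 ≤ D) (hXY : X ≤ Y) (hn : n ≠ 0) :
    |∑ m ∈ Ioc X Y with Odd m, selbergMajorant D m * quadChar m n| ≤
      (((Y : ℝ) - X) / (2 * selbergSum D) + (D : ℝ) ^ 4) * (if IsSquare n then 1 else 0) +
        8 * n * (D : ℝ) ^ 4 := by
  split_ifs with hs
  · rw [mul_one]
    refine le_add_of_le_of_nonneg ?_ (by positivity)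
    refine (abs_sum_le_sum_abs _ _).trans (le_trans ?_ (sum_odd_selbergMajorant_le hD hXY))
    refine sum_le_sum fun m _ ↦ ?_
    rw [abs_mul, abs_of_nonneg (selbergMajorant_nonneg D m)]
    exact mul_le_of_le_one_right (selbergMajorant_nonneg D m) (abs_quadChar_le_one m n)
  · rw [mul_zero, zero_add]
    exact abs_sum_odd_selbergMajorant_mul_quadChar_le hD hn hs X Y

lemma sum_prime_le_sum_odd_selbergMajorant_mul {B : Finset ℕ} {g : ℕ → ℝ} (hD : 1 ≤ D)
    (hDX : D ≤ X) (hX : 2 ≤ X) (hB : ∀ p ∈ B, p.Prime ∧ X < p ∧ p ≤ Y) (hg : ∀ m, 0 ≤ g m) :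
    ∑ p ∈ B, g p ≤ ∑ m ∈ Ioc X Y with Odd m, selbergMajorant D m * g m := by
  calc ∑ p ∈ B, g p = ∑ p ∈ B, selbergMajorant D p * g p := by
        refine sum_congr rfl fun p hp ↦ ?_
        obtain ⟨hprime, hXp, _⟩ := hB p hp
        rw [selbergMajorant_of_prime hD hprime (by omega), one_mul]
    _ ≤ _ := by
        refine sum_le_sum_of_subset_of_nonneg (fun p hp ↦ ?_) fun m _ _ ↦
          mul_nonneg (selbergMajorant_nonneg D m) (hg m)
        obtain ⟨hprime, hXp, hpY⟩ := hB p hp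
        exact mem_filter.2 ⟨mem_Ioc.2 ⟨hXp, hpY⟩, hprime.odd_of_ne_two (by omega)⟩

/- Only the tuples with square product contribute to the main term, and their number is a lower
bound for the moment of the random signs. -/
lemma sum_prime_pow_sum_mul_quadChar_le (hD : 1 ≤ D) (hDX : D ≤ X) (hX : 2 ≤ X) (hXY : X ≤ Y)
    (P : Finset ℕ) (t k : ℕ) (ha : ∀ n, |a n| ≤ 1) {B : Finset ℕ}
    (hB : ∀ p ∈ B, p.Prime ∧ X < p ∧ p ≤ Y) :
    ∑ p ∈ B, (∑ n ∈ Icc 1 t, a n * quadChar p n) ^ (2 * k) ≤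
      (((Y : ℝ) - X) / (2 * selbergSum D) + (D : ℝ) ^ 4) * signMoment P t (2 * k) +
        8 * (D : ℝ) ^ 4 * (t : ℝ) ^ (4 * k) := by
  set W := ((Y : ℝ) - X) / (2 * selbergSum D) + (D : ℝ) ^ 4
  have hW0 : 0 ≤ W := (sum_nonneg fun m _ ↦ selbergMajorant_nonneg D m).trans
    (sum_odd_selbergMajorant_le hD hXY)
  have hterm : ∀ v ∈ Fintype.piFinset fun _ : Fin (2 * k) ↦ Icc 1 t,
      (∏ i, a (v i)) * ∑ m ∈ Ioc X Y with Odd m, selbergMajorant D m * quadChar m (∏ i, v i) ≤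
        W * (if IsSquare (∏ i, v i) then 1 else 0) + 8 * (t : ℝ) ^ (2 * k) * (D : ℝ) ^ 4 := by
    intro v hv
    have hv : ∀ i, 1 ≤ v i ∧ v i ≤ t := fun i ↦ mem_Icc.1 (Fintype.mem_piFinset.1 hv i)
    have hn : ∏ i, v i ≠ 0 := prod_ne_zero_iff.2 fun i _ ↦ Nat.one_le_iff_ne_zero.1 (hv i).1
    have hle : ((∏ i, v i : ℕ) : ℝ) ≤ (t : ℝ) ^ (2 * k) := by
      exact_mod_cast (prod_le_prod' fun i _ ↦ (hv i).2).trans_eq (by simp)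
    have habs : |∏ i, a (v i)| ≤ 1 := by
      rw [abs_prod]
      exact prod_le_one (fun _ _ ↦ abs_nonneg _) fun i _ ↦ ha _
    calc _ ≤ |∑ m ∈ Ioc X Y with Odd m, selbergMajorant D m * quadChar m (∏ i, v i)| := by
          refine (le_abs_self _).trans ?_
          rw [abs_mul]
          exact mul_le_of_le_one_left (abs_nonneg _) habs
      _ ≤ W * (if IsSquare (∏ i, v i) then 1 else 0) + 8 * ((∏ i, v i : ℕ) : ℝ) * (D : ℝ) ^ 4 :=
          abs_sum_odd_selbergMajorant_mul_quadChar_le_ite hD hXY hn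
      _ ≤ _ := by gcongr
  calc _ ≤ ∑ m ∈ Ioc X Y with Odd m,
          selbergMajorant D m * (∑ n ∈ Icc 1 t, a n * quadChar m n) ^ (2 * k) :=
        sum_prime_le_sum_odd_selbergMajorant_mul hD hDX hX hB fun m ↦ (even_two_mul k).pow_nonneg _
    _ = ∑ v ∈ Fintype.piFinset fun _ : Fin (2 * k) ↦ Icc 1 t, (∏ i, a (v i)) *
          ∑ m ∈ Ioc X Y with Odd m, selbergMajorant D m * quadChar m (∏ i, v i) := by
        simp only [pow_sum_mul_quadChar, mul_sum]
        rw [sum_comm]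
        simp only [mul_left_comm]
    _ ≤ W * #{v ∈ Fintype.piFinset fun _ : Fin (2 * k) ↦ Icc 1 t | IsSquare (∏ i, v i)} +
          8 * (D : ℝ) ^ 4 * (t : ℝ) ^ (4 * k) := by
        refine (sum_le_sum hterm).trans_eq ?_
        simp only [sum_add_distrib, ← mul_sum, sum_boole, sum_const, Fintype.card_piFinset,
          Nat.card_Icc, prod_const, card_univ, Fintype.card_fin, nsmul_eq_mul]
        push_cast
        ring
    _ ≤ _ := by
        gcongr
        exact card_isSquare_prod_le_signMoment P t (2 * k)

end SieveMoments

/-! ### Positivity of `1 * χ` for a quadratic character -/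

section Positivity

variable {n t : ℕ}

lemma quadChar_pow_right (l n i : ℕ) : quadChar l (n ^ i) = quadChar l n ^ i := by
  simpa using quadChar_prod_right l (range i) fun _ ↦ n

lemma quadChar_trichotomy (l n : ℕ) :
    quadChar l n = 0 ∨ quadChar l n = 1 ∨ quadChar l n = -1 := by
  rcases jacobiSym.trichotomy n l with h | h | h <;> simp [quadChar, h]

/-- The arithmetic function `n ↦ quadChar l n`, with the value at `0` set to `0` as required of
arithmetic functions. -/
noncomputable def quadCharArith (l : ℕ) : ArithmeticFunction ℝ :=
  ⟨fun n ↦ if n = 0 then 0 else quadChar l n, if_pos rfl⟩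

lemma quadCharArith_apply (l : ℕ) (hn : n ≠ 0) : quadCharArith l n = quadChar l n := if_neg hn

lemma isMultiplicative_quadCharArith (l : ℕ) : (quadCharArith l).IsMultiplicative := by
  refine ArithmeticFunction.IsMultiplicative.iff_ne_zero.2 ⟨?_, fun {m n} hm hn _ ↦ ?_⟩
  · rw [quadCharArith_apply l one_ne_zero, quadChar_one_right]
  · rw [quadCharArith_apply l hm, quadCharArith_apply l hn,
      quadCharArith_apply l (mul_ne_zero hm hn), quadChar_mul_right]

lemma sum_range_quadChar_pow_nonneg (l n j : ℕ) : 0 ≤ ∑ i ∈ range j, quadChar l n ^ i := by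
  rcases quadChar_trichotomy l n with h | h | h
  · rw [h]
    positivity
  · rw [h]
    positivity
  · rw [h, neg_one_geom_sum]
    positivity

lemma quadCharArith_mul_zeta_nonneg (l n : ℕ) :
    0 ≤ (quadCharArith l * (ArithmeticFunction.zeta : ArithmeticFunction ℝ)) n := by
  rcases eq_or_ne n 0 with rfl | hn
  · simp
  have hmul :
      (quadCharArith l * (ArithmeticFunction.zeta : ArithmeticFunction ℝ)).IsMultiplicative :=
    (isMultiplicative_quadCharArith l).mul ArithmeticFunction.isMultiplicative_zeta.natCast
  rw [hmul.multiplicative_factorization _ hn]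
  refine prod_nonneg fun q hq ↦ ?_
  have hprime : q.Prime := Nat.prime_of_mem_primeFactors (by simpa using hq)
  beta_reduce
  rw [ArithmeticFunction.coe_mul_zeta_apply, Nat.sum_divisors_prime_pow hprime]
  refine (sum_range_quadChar_pow_nonneg l q (n.factorization q + 1)).trans_eq
    (sum_congr rfl fun i _ ↦ ?_)
  rw [quadCharArith_apply l (pow_ne_zero i hprime.ne_zero), quadChar_pow_right]

lemma card_primesLE_add_sum_quadChar_le (l t : ℕ) :
    (#(Nat.primesLE t) : ℝ) + ∑ q ∈ Nat.primesLE t, quadChar l q ≤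
      ∑ n ∈ Icc 1 t, quadChar l n * (t / n : ℕ) := by
  have hprime : ∀ q ∈ Nat.primesLE t,
      (quadCharArith l * (ArithmeticFunction.zeta : ArithmeticFunction ℝ)) q =
        1 + quadChar l q := fun q hq ↦ by
    have hq := Nat.prime_of_mem_primesLE hq
    rw [ArithmeticFunction.coe_mul_zeta_apply, hq.sum_divisors, quadCharArith_apply l hq.ne_zero,
      quadCharArith_apply l one_ne_zero, quadChar_one_right, add_comm]
  calc _ = ∑ q ∈ Nat.primesLE t,
        (quadCharArith l * (ArithmeticFunction.zeta : ArithmeticFunction ℝ)) q := by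
        rw [sum_congr rfl hprime, sum_add_distrib, sum_const, nsmul_one]
    _ ≤ ∑ n ∈ Ioc 0 t, (quadCharArith l * (ArithmeticFunction.zeta : ArithmeticFunction ℝ)) n := by
        rw [Nat.primesLE_eq_filter_Ioc_zero]
        exact sum_le_sum_of_subset_of_nonneg (filter_subset _ _) fun n _ _ ↦
          quadCharArith_mul_zeta_nonneg l n
    _ = ∑ n ∈ Icc 1 t, quadChar l n * (t / n : ℕ) := by
        rw [ArithmeticFunction.sum_Ioc_mul_zeta_eq_sum]
        refine sum_congr rfl fun n hn ↦ ?_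
        rw [quadCharArith_apply l (mem_Ioc.1 hn).1.ne']

/-- The coefficients `(1_{d prime} + {t / d}) / 2` of the character sum that has to be small for the
logarithmic sum `∑ n ≤ t, χ n / n` to be positive; the factor `1 / 2` brings them into `[0, 1]`. -/
noncomputable def twistCoeff (t d : ℕ) : ℝ :=
  ((if d.Prime then 1 else 0) + Int.fract ((t : ℝ) / d)) / 2

lemma abs_twistCoeff_le_one (t d : ℕ) : |twistCoeff t d| ≤ 1 := by
  have hfract := Int.fract_nonneg ((t : ℝ) / d)
  have hlt := Int.fract_lt_one ((t : ℝ) / d)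
  rw [twistCoeff, abs_le]
  split_ifs <;> constructor <;> linarith

lemma card_primesLE_add_two_mul_sum_twistCoeff_le (l t : ℕ) :
    (#(Nat.primesLE t) : ℝ) + 2 * ∑ d ∈ Icc 1 t, twistCoeff t d * quadChar l d ≤
      t * ∑ n ∈ Icc 1 t, quadChar l n / n := by
  have hfloor : ∀ n : ℕ, (t : ℝ) / n = (t / n : ℕ) + Int.fract ((t : ℝ) / n) := fun n ↦ by
    rw [← Nat.floor_div_eq_div (K := ℝ), natCast_floor_eq_intCast_floor (by positivity),
      Int.floor_add_fract]
  have hsplit : t * ∑ n ∈ Icc 1 t, quadChar l n / n =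
      ∑ n ∈ Icc 1 t, quadChar l n * (t / n : ℕ) +
        ∑ n ∈ Icc 1 t, quadChar l n * Int.fract ((t : ℝ) / n) := by
    rw [← sum_add_distrib, mul_sum]
    refine sum_congr rfl fun n _ ↦ ?_
    rw [← mul_add, ← hfloor]
    ring
  have htwist : 2 * ∑ d ∈ Icc 1 t, twistCoeff t d * quadChar l d =
      ∑ q ∈ Nat.primesLE t, quadChar l q +
        ∑ n ∈ Icc 1 t, quadChar l n * Int.fract ((t : ℝ) / n) := by
    rw [Nat.primesLE_eq_filter_Icc_one, sum_filter, ← sum_add_distrib, mul_sum]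
    refine sum_congr rfl fun n _ ↦ ?_
    rw [twistCoeff]
    split_ifs <;> ring
  linarith [card_primesLE_add_sum_quadChar_le l t]

lemma div_four_mul_log_le_card_primesLE (ht : 4 ≤ t) :
    (t : ℝ) / (4 * Real.log t) ≤ #(Nat.primesLE t) := by
  have ht' : (4 : ℝ) ≤ t := by exact_mod_cast ht
  have hlog : 0 < Real.log t := Real.log_pos (by linarith)
  have hsucc : Real.log (t + 1) ≤ (t + 1) / 4 - 1 + 2 * Real.log 2 := by
    have h := Real.log_le_sub_one_of_pos (x := ((t : ℝ) + 1) / 4) (by positivity)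
    rw [Real.log_div (by positivity) (by norm_num), show (4 : ℝ) = 2 ^ 2 by norm_num,
      Real.log_pow] at h
    push_cast at h
    linarith
  have hpi := Chebyshev.pi_ge t
  rw [← Nat.primesLE_card_eq_primeCounting] at hpi
  refine le_trans ?_ hpi
  rw [← div_div]
  gcongr
  nlinarith [Real.log_two_gt_d9, Real.log_two_lt_d9]

lemma one_div_log_le_sum_quadChar_div {l : ℕ} (ht : 4 ≤ t)
    (h : |∑ d ∈ Icc 1 t, twistCoeff t d * quadChar l d| ≤ t / (16 * Real.log t)) :
    1 / (8 * Real.log t) ≤ ∑ n ∈ Icc 1 t, quadChar l n / n := by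
  have ht' : (0 : ℝ) < t := by exact_mod_cast (by omega : 0 < t)
  refine le_of_mul_le_mul_left ?_ ht'
  have hpi : (t : ℝ) * (1 / (8 * Real.log t)) =
      t / (4 * Real.log t) - 2 * (t / (16 * Real.log t)) := by ring
  linarith [neg_le_of_abs_le h, div_four_mul_log_le_card_primesLE ht,
    card_primesLE_add_two_mul_sum_twistCoeff_le l t]

end Positivity

/-! ### A large sieve inequality for quadratic characters -/

section LargeSieve

variable {J B : Finset ℕ} {a s : ℕ → ℝ} {k l T : ℕ}

lemma quadChar_eq_of_modEq {m n : ℕ} (h : m ≡ n [MOD l]) : quadChar l m = quadChar l n := by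
  rw [quadChar, jacobiSym.mod_left' (Int.natCast_modEq_iff.2 h), quadChar]

lemma exists_quadChar_prime_eq_neg_one {q : ℕ} (hq : q.Prime) (hq2 : q ≠ 2) :
    ∃ r, quadChar q r = -1 := by
  have : Fact q.Prime := ⟨hq⟩
  obtain ⟨r, hr⟩ := FiniteField.exists_nonsquare (F := ZMod q) (by rwa [ZMod.ringChar_zmod_n])
  have hsymm : legendreSym q (r.val : ℤ) = -1 :=
    (legendreSym.eq_neg_one_iff q).2 (by simpa using hr)
  exact ⟨r.val, by rw [quadChar, ← jacobiSym.legendreSym.to_jacobiSym, hsymm]; simp⟩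

lemma exists_quadChar_eq_neg_one (hl : Odd l) (h : ¬ IsSquare l) : ∃ b, quadChar l b = -1 := by
  have hl0 : l ≠ 0 := hl.pos.ne'
  obtain ⟨q, hq, hodd⟩ := exists_prime_odd_factorization hl0 h
  have hq2 : q ≠ 2 := by
    rintro rfl
    rw [Nat.factorization_eq_zero_of_not_dvd hl.not_two_dvd_nat] at hodd
    exact absurd hodd (by decide)
  obtain ⟨r, hr⟩ := exists_quadChar_prime_eq_neg_one hq hq2
  obtain ⟨b, hbq, hbm⟩ := Nat.chineseRemainder (Nat.coprime_ordCompl hq hl0) r 1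
  refine ⟨b, ?_⟩
  have hpow : quadChar (q ^ l.factorization q) b = -1 := by
    have : NeZero q := ⟨hq.ne_zero⟩
    rw [quadChar, jacobiSym.pow_right, Int.cast_pow, ← quadChar, quadChar_eq_of_modEq hbq, hr,
      hodd.neg_one_pow]
  rw [← Nat.ordProj_mul_ordCompl_eq_self l q, quadChar_mul_left (pow_ne_zero _ hq.ne_zero)
    (Nat.ordCompl_pos q hl0).ne', hpow, quadChar_eq_of_modEq hbm, quadChar_one_right, mul_one]

lemma coprime_of_quadChar_ne_zero (hl : l ≠ 0) {n : ℕ} (h : quadChar l n ≠ 0) :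
    Nat.Coprime n l := by
  have : NeZero l := ⟨hl⟩
  by_contra hn
  exact h (by rw [quadChar, jacobiSym.eq_zero_iff_not_coprime.2 (by simpa using hn), Int.cast_zero])

lemma abs_sum_Ioc_quadChar_le (hl : Odd l) (h : ¬ IsSquare l) (m n : ℕ) :
    |∑ i ∈ Ioc m n, quadChar l i| ≤ 2 * l := by
  obtain ⟨b, hb⟩ := exists_quadChar_eq_neg_one hl h
  have hper : ∀ n, quadChar l (n % l) = quadChar l n := fun n ↦
    quadChar_eq_of_modEq (Nat.mod_modEq n l)
  refine abs_sum_Ioc_le_of_periodic hl.pos hper (abs_quadChar_le_one l) ?_ m n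
  have hcop : Nat.Coprime b l := coprime_of_quadChar_ne_zero hl.pos.ne' (by norm_num [hb])
  refine sum_range_eq_zero_of_periodic hl.pos hcop hper fun n ↦ ?_
  rw [quadChar_mul_right, hb, neg_one_mul]

lemma not_isSquare_mul_of_prime {p q : ℕ} (hp : p.Prime) (hq : q.Prime) (hpq : p ≠ q) :
    ¬ IsSquare (p * q) := by
  rintro ⟨r, hr⟩
  have hsq : Squarefree (p * q) := (Nat.squarefree_mul ((Nat.coprime_primes hp hq).2 hpq)).2
    ⟨hp.squarefree, hq.squarefree⟩
  have hunit := Nat.isUnit_iff.1 (hsq r (hr ▸ dvd_rfl))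
  exact hp.ne_one (Nat.eq_one_of_mul_eq_one_right (hr.trans (by rw [hunit])))

lemma abs_sum_quadChar_mul_quadChar_le {p q : ℕ} (hp : p.Prime) (hp2 : p ≠ 2) (hq : q.Prime)
    (hq2 : q ≠ 2) (M : ℕ) :
    |∑ m ∈ Icc 1 M, quadChar p m * quadChar q m| ≤
      (if p = q then (M : ℝ) else 0) + 2 * (p * q) := by
  split_ifs with h
  · refine le_add_of_le_of_nonneg ((abs_sum_le_sum_abs _ _).trans ?_) (by positivity)
    refine (sum_le_card_nsmul _ _ 1 fun m _ ↦ ?_).trans_eq (by simp)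
    rw [abs_mul]
    exact mul_le_one₀ (abs_quadChar_le_one p m) (abs_nonneg _) (abs_quadChar_le_one q m)
  · simp only [← quadChar_mul_left hp.ne_zero hq.ne_zero, zero_add]
    exact_mod_cast abs_sum_Ioc_quadChar_le ((hp.odd_of_ne_two hp2).mul (hq.odd_of_ne_two hq2))
      (not_isSquare_mul_of_prime hp hq h) 0 M

lemma sum_sq_sum_mul_quadChar_le (hB : ∀ p ∈ B, p.Prime ∧ p ≠ 2 ∧ p ≤ Z) (hs : ∀ p, |s p| ≤ 1)
    (M : ℕ) :
    ∑ m ∈ Icc 1 M, (∑ p ∈ B, s p * quadChar p m) ^ 2 ≤ (M : ℝ) * #B + 2 * (Z : ℝ) ^ 2 * #B ^ 2 := by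
  have hexpand : ∑ m ∈ Icc 1 M, (∑ p ∈ B, s p * quadChar p m) ^ 2 =
      ∑ p ∈ B, ∑ q ∈ B, s p * s q * ∑ m ∈ Icc 1 M, quadChar p m * quadChar q m := by
    simp only [pow_two, sum_mul_sum]
    rw [sum_comm]
    refine sum_congr rfl fun p _ ↦ ?_
    rw [sum_comm]
    refine sum_congr rfl fun q _ ↦ ?_
    rw [mul_sum]
    exact sum_congr rfl fun m _ ↦ mul_mul_mul_comm _ _ _ _
  have hterm : ∀ p ∈ B, ∀ q ∈ B, s p * s q * ∑ m ∈ Icc 1 M, quadChar p m * quadChar q m ≤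
      (if p = q then (M : ℝ) else 0) + 2 * (Z : ℝ) ^ 2 := fun p hp q hq ↦ by
    obtain ⟨hp, hp2, hpZ⟩ := hB p hp
    obtain ⟨hq, hq2, hqZ⟩ := hB q hq
    have hpqZ : (p : ℝ) * q ≤ (Z : ℝ) ^ 2 := by
      rw [sq]
      exact_mod_cast Nat.mul_le_mul hpZ hqZ
    calc _ ≤ |∑ m ∈ Icc 1 M, quadChar p m * quadChar q m| := by
          refine (le_abs_self _).trans ?_
          rw [abs_mul, abs_mul]
          exact mul_le_of_le_one_left (abs_nonneg _) (mul_le_one₀ (hs p) (abs_nonneg _) (hs q))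
      _ ≤ _ := (abs_sum_quadChar_mul_quadChar_le hp hp2 hq hq2 M).trans (by gcongr)
  calc _ ≤ ∑ p ∈ B, ∑ q ∈ B, ((if p = q then (M : ℝ) else 0) + 2 * (Z : ℝ) ^ 2) :=
        hexpand.trans_le (sum_le_sum fun p hp ↦ sum_le_sum fun q hq ↦ hterm p hp q hq)
    _ = _ := by
        simp only [sum_add_distrib, sum_const, nsmul_eq_mul, sum_ite_eq, sum_ite_mem, inter_self]
        ring

/-- The coefficient of `m` in the `k`-th power of the Dirichlet polynomial with coefficients `a`
supported on `J`. -/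
noncomputable def powCoeff (J : Finset ℕ) (a : ℕ → ℝ) (k m : ℕ) : ℝ :=
  ∑ v ∈ Fintype.piFinset fun _ : Fin k ↦ J with ∏ i, v i = m, ∏ i, a (v i)

lemma sum_piFinset_eq_sum_powCoeff (hJ : J ⊆ Icc 1 T) (a : ℕ → ℝ) (k : ℕ) (g : ℕ → ℝ) :
    ∑ v ∈ Fintype.piFinset fun _ : Fin k ↦ J, (∏ i, a (v i)) * g (∏ i, v i) =
      ∑ m ∈ Icc 1 (T ^ k), powCoeff J a k m * g m := by
  have hmaps : ∀ v ∈ Fintype.piFinset fun _ : Fin k ↦ J, ∏ i, v i ∈ Icc 1 (T ^ k) := fun v hv ↦ by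
    have hv : ∀ i, 1 ≤ v i ∧ v i ≤ T := fun i ↦ mem_Icc.1 (hJ (Fintype.mem_piFinset.1 hv i))
    refine mem_Icc.2 ⟨one_le_prod' fun i _ ↦ (hv i).1, ?_⟩
    exact (prod_le_prod' fun i _ ↦ (hv i).2).trans_eq (by simp)
  rw [← sum_fiberwise_of_maps_to hmaps]
  refine sum_congr rfl fun m _ ↦ ?_
  rw [powCoeff, sum_mul]
  refine sum_congr rfl fun v hv ↦ ?_
  rw [(mem_filter.1 hv).2]

lemma powCoeff_nonneg (ha : ∀ n ∈ J, 0 ≤ a n) (k m : ℕ) : 0 ≤ powCoeff J a k m :=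
  sum_nonneg fun _ hv ↦ prod_nonneg fun i _ ↦
    ha _ (Fintype.mem_piFinset.1 (mem_filter.1 hv).1 i)

lemma pow_sum_mul_primeSign (hJ : J ⊆ Icc 1 T) (a : ℕ → ℝ) (k : ℕ) (A : Finset ℕ) :
    (∑ n ∈ J, a n * primeSign A n) ^ k =
      ∑ m ∈ Icc 1 (T ^ k), powCoeff J a k m * primeSign A m := by
  rw [← sum_piFinset_eq_sum_powCoeff hJ, sum_pow']
  refine sum_congr rfl fun v hv ↦ ?_
  rw [prod_mul_distrib, prod_primeSign univ fun i _ ↦ Nat.one_le_iff_ne_zero.1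
    (mem_Icc.1 (hJ (Fintype.mem_piFinset.1 hv i))).1]

lemma sum_powCoeff_sq_le_signMoment (P : Finset ℕ) (hJ : J ⊆ Icc 1 T) (ha0 : ∀ n ∈ J, 0 ≤ a n)
    (ha1 : ∀ n ∈ J, a n ≤ 1) (k : ℕ) :
    ∑ m ∈ Icc 1 (T ^ k), powCoeff J a k m ^ 2 ≤ signMoment P T (2 * k) := by
  have hexpand : 𝔼 A ∈ P.powerset, (∑ n ∈ J, a n * primeSign A n) ^ (2 * k) =
      ∑ m ∈ Icc 1 (T ^ k), ∑ m' ∈ Icc 1 (T ^ k),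
        powCoeff J a k m * powCoeff J a k m' * 𝔼 A ∈ P.powerset, primeSign A (m * m') := by
    simp only [mul_comm 2 k, pow_mul (∑ _ ∈ J, _), pow_sum_mul_primeSign hJ,
      pow_two (∑ _ ∈ Icc _ _, _), sum_mul_sum, expect_sum_comm, mul_expect]
    refine sum_congr rfl fun m hm ↦ sum_congr rfl fun m' hm' ↦ expect_congr rfl fun A _ ↦ ?_
    rw [primeSign_mul (Nat.one_le_iff_ne_zero.1 (mem_Icc.1 hm).1)
      (Nat.one_le_iff_ne_zero.1 (mem_Icc.1 hm').1), mul_mul_mul_comm]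
  calc ∑ m ∈ Icc 1 (T ^ k), powCoeff J a k m ^ 2
      ≤ 𝔼 A ∈ P.powerset, (∑ n ∈ J, a n * primeSign A n) ^ (2 * k) := by
        rw [hexpand]
        refine sum_le_sum fun m hm ↦ ?_
        refine le_trans (le_of_eq ?_) (single_le_sum (fun m' _ ↦ mul_nonneg
          (mul_nonneg (powCoeff_nonneg ha0 k m) (powCoeff_nonneg ha0 k m'))
          (expect_primeSign_nonneg P (m * m'))) hm)
        simp only [primeSign_of_isSquare (IsSquare.mul_self m)]
        rw [expect_const (powerset_nonempty P), mul_one, sq]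
    _ ≤ 𝔼 A ∈ P.powerset, (∑ n ∈ Icc 1 T, 1 * primeSign A n) ^ (2 * k) :=
        expect_pow_sum_mul_primeSign_mono P (by simp) (2 * k) hJ ha0 ha1 fun _ _ ↦ zero_le_one
    _ = signMoment P T (2 * k) := by simp only [one_mul, signMoment]

lemma pow_mul_card_le_sum_powCoeff_mul (hJ : J ⊆ Icc 1 T) (k : ℕ) {V : ℝ} (hV : 0 ≤ V)
    (hBV : ∀ p ∈ B, V ≤ |∑ n ∈ J, a n * quadChar p n|) :
    ∃ s : ℕ → ℝ, (∀ p, |s p| ≤ 1) ∧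
      V ^ k * #B ≤ ∑ m ∈ Icc 1 (T ^ k), powCoeff J a k m * ∑ p ∈ B, s p * quadChar p m := by
  refine ⟨fun p ↦ SignType.sign ((∑ n ∈ J, a n * quadChar p n) ^ k), fun p ↦ ?_, ?_⟩
  · rcases SignType.trichotomy (SignType.sign ((∑ n ∈ J, a n * quadChar p n) ^ k)) with
      h | h | h <;> simp [h]
  calc V ^ k * #B = ∑ _p ∈ B, V ^ k := by rw [sum_const, nsmul_eq_mul, mul_comm]
    _ ≤ ∑ p ∈ B, SignType.sign ((∑ n ∈ J, a n * quadChar p n) ^ k) *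
          (∑ n ∈ J, a n * quadChar p n) ^ k := sum_le_sum fun p hp ↦ by
        rw [sign_mul_self, abs_pow]
        exact pow_le_pow_left₀ hV (hBV p hp) k
    _ = _ := by
        simp only [mul_sum]
        rw [sum_comm]
        refine sum_congr rfl fun p _ ↦ ?_
        rw [pow_sum_mul_quadChar, sum_piFinset_eq_sum_powCoeff hJ, mul_sum]
        exact sum_congr rfl fun m _ ↦ mul_left_comm _ _ _

theorem sq_pow_mul_card_le_signMoment_mul (P : Finset ℕ) (hJ : J ⊆ Icc 1 T)
    (ha0 : ∀ n ∈ J, 0 ≤ a n) (ha1 : ∀ n ∈ J, a n ≤ 1)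
    (hB : ∀ p ∈ B, p.Prime ∧ p ≠ 2 ∧ p ≤ Z) (k : ℕ) {V : ℝ} (hV : 0 ≤ V)
    (hBV : ∀ p ∈ B, V ≤ |∑ n ∈ J, a n * quadChar p n|) :
    (V ^ k * #B) ^ 2 ≤
      signMoment P T (2 * k) * ((T : ℝ) ^ k * #B + 2 * (Z : ℝ) ^ 2 * #B ^ 2) := by
  obtain ⟨s, hs, hle⟩ := pow_mul_card_le_sum_powCoeff_mul hJ k hV hBV
  calc (V ^ k * #B) ^ 2
      ≤ (∑ m ∈ Icc 1 (T ^ k), powCoeff J a k m * ∑ p ∈ B, s p * quadChar p m) ^ 2 := by gcongr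
    _ ≤ (∑ m ∈ Icc 1 (T ^ k), powCoeff J a k m ^ 2) *
          ∑ m ∈ Icc 1 (T ^ k), (∑ p ∈ B, s p * quadChar p m) ^ 2 := sum_mul_sq_le_sq_mul_sq _ _ _
    _ ≤ _ := by
        have hdual := sum_sq_sum_mul_quadChar_le hB hs (T ^ k)
        rw [Nat.cast_pow] at hdual
        have hcoeff := sum_powCoeff_sq_le_signMoment P hJ ha0 ha1 k
        exact mul_le_mul hcoeff hdual (by positivity)
          ((sum_nonneg fun _ _ ↦ sq_nonneg _).trans hcoeff)

end LargeSieve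

/-! ### Partial sums of `χ(n)/n` over short intervals -/

section Blocks

open Filter (atTop)

variable {A T k : ℕ} {x : ℝ}

lemma eventually_mul_rpow_le (C : ℝ) : ∀ᶠ L : ℝ in atTop, C * L ^ (7 / 8 : ℝ) ≤ 0.0025 * L := by
  filter_upwards [(tendsto_rpow_atTop (y := 1 / 8) (by norm_num)).eventually_ge_atTop
    (C / 0.0025), Filter.eventually_gt_atTop 0] with L hL h0
  rw [div_le_iff₀ (by norm_num)] at hL
  calc C * L ^ (7 / 8 : ℝ) ≤ L ^ (1 / 8 : ℝ) * 0.0025 * L ^ (7 / 8 : ℝ) := by gcongr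
    _ = 0.0025 * (L ^ (1 / 8 : ℝ) * L ^ (7 / 8 : ℝ)) := by ring
    _ = 0.0025 * L := by rw [← Real.rpow_add h0]; norm_num

lemma eventually_mul_rpow_add_mul_log_le {C : ℝ} (hC : 0 ≤ C) :
    ∀ᶠ L : ℝ in atTop, ∀ k : ℝ, 0 ≤ k → k ≤ 600 * √L →
      C * k ^ (7 / 4 : ℝ) + 10 * k * Real.log L ≤ 0.005 * L := by
  filter_upwards [eventually_mul_rpow_le (C * 600 ^ (7 / 4 : ℝ)),
    eventually_sqrt_mul_log_le (c := 0.0025 / 6000) (by norm_num),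
    Filter.eventually_ge_atTop 1] with L hrpow hlog hL k hk0 hk
  have hk' : k ^ (7 / 4 : ℝ) ≤ 600 ^ (7 / 4 : ℝ) * L ^ (7 / 8 : ℝ) := calc
    k ^ (7 / 4 : ℝ) ≤ (600 * √L) ^ (7 / 4 : ℝ) := by gcongr
    _ = 600 ^ (7 / 4 : ℝ) * L ^ (7 / 8 : ℝ) := by
      rw [Real.mul_rpow (by norm_num) (Real.sqrt_nonneg _), Real.sqrt_eq_rpow,
        ← Real.rpow_mul (by linarith)]
      norm_num
  calc C * k ^ (7 / 4 : ℝ) + 10 * k * Real.log L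
      ≤ C * (600 ^ (7 / 4 : ℝ) * L ^ (7 / 8 : ℝ)) + 10 * (600 * √L) * Real.log L := by
        gcongr
        exact Real.log_nonneg hL
    _ ≤ 0.005 * L := by linarith

lemma eventually_exists_moment_exponent {C : ℝ} (hC : 0 ≤ C) :
    ∀ᶠ L : ℝ in atTop, ∀ l : ℝ, √L / 200 ≤ l → l ≤ 2.1 * L → ∃ k : ℕ, 1 ≤ k ∧
      2.6 * L ≤ k * l ∧ k * l ≤ 4.7 * L ∧
      C * (k : ℝ) ^ (7 / 4 : ℝ) + 10 * k * Real.log L ≤ 0.005 * L := by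
  filter_upwards [eventually_mul_rpow_add_mul_log_le hC, Filter.eventually_ge_atTop 1]
    with L herr hL l hl hlL
  have hL0 : 0 < L := by linarith
  have hsqrt : √L * √L = L := Real.mul_self_sqrt hL0.le
  have hsqrt1 : 1 ≤ √L := Real.one_le_sqrt.2 hL
  have hl0 : 0 < l := by linarith
  have hlower : 2.6 * L ≤ ⌈2.6 * L / l⌉₊ * l := (div_le_iff₀ hl0).1 (Nat.le_ceil _)
  have hupper : (⌈2.6 * L / l⌉₊ : ℝ) < 2.6 * L / l + 1 := Nat.ceil_lt_add_one (by positivity)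
  refine ⟨⌈2.6 * L / l⌉₊, Nat.one_le_ceil_iff.2 (by positivity), hlower, ?_,
    herr _ (Nat.cast_nonneg _) ?_⟩
  · calc ⌈2.6 * L / l⌉₊ * l ≤ (2.6 * L / l + 1) * l := by gcongr
      _ = 2.6 * L + l := by field_simp
      _ ≤ 4.7 * L := by linarith
  · have hquot : 2.6 * L / l ≤ 520 * √L := by
      rw [div_le_iff₀ hl0]
      nlinarith
    linarith

lemma primesIn_spec {p : ℕ} (hx : 2 ≤ x) (hp : p ∈ primesIn x) :
    p.Prime ∧ p ≠ 2 ∧ (p : ℝ) ≤ 2 * x := by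
  obtain ⟨hprime, hlt, hle⟩ := (mem_filter.1 hp).2
  refine ⟨hprime, ?_, hle⟩
  rintro rfl
  norm_num at hlt
  linarith

/-- The primes `p ∈ (x, 2x]` for which `∑ χ_p(n) / n` over the block `A < n ≤ T` has size at
least `v`. -/
noncomputable def badBlockPrimes (x v : ℝ) (A T : ℕ) : Finset ℕ :=
  {p ∈ primesIn x | v ≤ |∑ n ∈ Ioc A T, quadChar p n / n|}

lemma signMoment_two_mul_nonneg (P : Finset ℕ) (t k : ℕ) : 0 ≤ signMoment P t (2 * k) :=
  expect_nonneg fun _ _ ↦ (even_two_mul k).pow_nonneg _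

lemma sq_pow_mul_card_badBlockPrimes_le (hx : 2 ≤ x) {v : ℝ} (hv : 0 ≤ v) (A T k : ℕ) :
    ((A * v) ^ k * #(badBlockPrimes x v A T)) ^ 2 ≤
      signMoment (Nat.primesLE T) T (2 * k) * ((T : ℝ) ^ k * #(badBlockPrimes x v A T) +
        2 * (2 * x) ^ 2 * (#(badBlockPrimes x v A T) : ℝ) ^ 2) := by
  have hsub : Ioc A T ⊆ Icc 1 T := fun n hn ↦ mem_Icc.2 ⟨by have := mem_Ioc.1 hn; omega,
    (mem_Ioc.1 hn).2⟩
  refine (sq_pow_mul_card_le_signMoment_mul (B := badBlockPrimes x v A T) (a := fun n ↦ (A : ℝ) / n)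
    (Z := ⌊2 * x⌋₊) (Nat.primesLE T) hsub
    (fun n _ ↦ by positivity) (fun n hn ↦ ?_) (fun p hp ↦ ?_) k (by positivity)
    fun p hp ↦ ?_).trans ?_
  · exact div_le_one_of_le₀ (by exact_mod_cast (mem_Ioc.1 hn).1.le) (Nat.cast_nonneg n)
  · obtain ⟨hprime, hp2, hle⟩ := primesIn_spec hx (mem_filter.1 hp).1
    exact ⟨hprime, hp2, Nat.le_floor hle⟩
  · have hfactor : ∑ n ∈ Ioc A T, (A : ℝ) / n * quadChar p n =
        A * ∑ n ∈ Ioc A T, quadChar p n / n := by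
      rw [mul_sum]
      exact sum_congr rfl fun n _ ↦ by ring
    rw [hfactor, abs_mul, Nat.abs_cast]
    exact mul_le_mul_of_nonneg_left (mem_filter.1 hp).2 (Nat.cast_nonneg A)
  · have := signMoment_two_mul_nonneg (Nat.primesLE T) T k
    gcongr
    exact Nat.floor_le (by linarith)

lemma mul_le_of_mul_sq_le {W E M z b : ℝ} (hb : 0 ≤ b) (hEM : 0 ≤ E * M)
    (h : W * b ^ 2 ≤ E * (M * b + z * b ^ 2)) (hz : 2 * (E * z) ≤ W) : W * b ≤ 2 * (E * M) := by
  rcases hb.eq_or_lt with rfl | hb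
  · linarith
  · refine le_of_mul_le_mul_right ?_ hb
    nlinarith [mul_le_mul_of_nonneg_right hz (sq_nonneg b)]

lemma exp_le_sq_pow_div_log {L : ℝ} (hL : 2 ≤ L) (hT0 : 0 < T) (hT : T ≤ 2 * A) (k : ℕ) :
    Real.exp (2 * (k * Real.log T) - 10 * k * Real.log L) ≤ ((A * L⁻¹ ^ 4) ^ k) ^ 2 := by
  have hL0 : 0 < L := by linarith
  have hT' : (T : ℝ) ≤ 2 * A := by exact_mod_cast hT
  have hbase : Real.exp (Real.log T - 5 * Real.log L) ≤ A * L⁻¹ ^ 4 := calc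
    Real.exp (Real.log T - 5 * Real.log L) = T / L ^ 5 := by
      rw [Real.exp_sub, Real.exp_log (by exact_mod_cast hT0), mul_comm, Real.exp_mul,
        Real.exp_log hL0]
      norm_cast
    _ ≤ A * L / L ^ 5 := by gcongr; nlinarith
    _ = A * L⁻¹ ^ 4 := by field_simp
  calc Real.exp (2 * (k * Real.log T) - 10 * k * Real.log L)
      = (Real.exp (Real.log T - 5 * Real.log L) ^ k) ^ 2 := by
        rw [← Real.exp_nat_mul, ← Real.exp_nat_mul]
        push_cast
        ring_nf
    _ ≤ ((A * L⁻¹ ^ 4) ^ k) ^ 2 := by gcongr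

lemma sixteen_mul_sq_le_exp (hx : 0 < x) (hL : 200 ≤ Real.log x) :
    16 * x ^ 2 ≤ Real.exp (2.075 * Real.log x) := calc
  16 * x ^ 2 ≤ Real.exp (0.075 * Real.log x) * x ^ 2 := by
    gcongr
    linarith [Real.add_one_le_exp (0.075 * Real.log x)]
  _ = Real.exp (2.075 * Real.log x) := by
    rw [← Real.exp_log (pow_pos hx 2), ← Real.exp_add, Real.log_pow]
    push_cast
    ring_nf

lemma card_badBlockPrimes_le (hx : 2 ≤ x) (hL : 200 ≤ Real.log x) (hT0 : 0 < T) (hT : T ≤ 2 * A)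
    {e : ℝ} (hE : signMoment (Nat.primesLE T) T (2 * k) ≤ Real.exp (1.2 * (k * Real.log T) + e))
    (hk : 2.6 * Real.log x ≤ k * Real.log T) (hk' : k * Real.log T ≤ 4.7 * Real.log x)
    (he : e + 10 * k * Real.log (Real.log x) ≤ 0.005 * Real.log x) :
    #(badBlockPrimes x ((Real.log x)⁻¹ ^ 4) A T) ≤ Real.exp (0.97 * Real.log x) := by
  set L := Real.log x
  set E := signMoment (Nat.primesLE T) T (2 * k)
  set b := (#(badBlockPrimes x (L⁻¹ ^ 4) A T) : ℝ)
  set V := Real.exp (2 * (k * Real.log T) - 10 * k * Real.log L)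
  have hVW : V ≤ ((A * L⁻¹ ^ 4) ^ k) ^ 2 := exp_le_sq_pow_div_log (by linarith) hT0 hT k
  have hsieve : V * b ^ 2 ≤ E * ((T : ℝ) ^ k * b + 2 * (2 * x) ^ 2 * b ^ 2) := calc
    V * b ^ 2 ≤ ((A * L⁻¹ ^ 4) ^ k) ^ 2 * b ^ 2 := by gcongr
    _ = ((A * L⁻¹ ^ 4) ^ k * b) ^ 2 := (mul_pow _ _ 2).symm
    _ ≤ _ := sq_pow_mul_card_badBlockPrimes_le hx (by positivity) A T k
  have hE0 : 0 ≤ E := signMoment_two_mul_nonneg _ T k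
  have hsmall : 2 * (E * (2 * (2 * x) ^ 2)) ≤ V := calc
    2 * (E * (2 * (2 * x) ^ 2)) = E * (16 * x ^ 2) := by ring
    _ ≤ Real.exp (1.2 * (k * Real.log T) + e) * Real.exp (2.075 * L) :=
      mul_le_mul hE (sixteen_mul_sq_le_exp (by linarith) hL) (by positivity) (by positivity)
    _ ≤ V := by
      rw [← Real.exp_add]
      exact Real.exp_le_exp.2 (by linarith)
  refine le_of_mul_le_mul_left ?_ (Real.exp_pos (2 * (k * Real.log T) - 10 * k * Real.log L))
  calc V * b ≤ 2 * (E * (T : ℝ) ^ k) :=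
      mul_le_of_mul_sq_le (Nat.cast_nonneg _) (by positivity) hsieve hsmall
    _ ≤ Real.exp (0.025 * L) *
        (Real.exp (1.2 * (k * Real.log T) + e) * Real.exp (k * Real.log T)) := by
      rw [Real.exp_nat_mul, Real.exp_log (by exact_mod_cast hT0)]
      gcongr
      linarith [Real.add_one_le_exp (0.025 * L)]
    _ ≤ V * Real.exp (0.97 * L) := by
      rw [← Real.exp_add, ← Real.exp_add, ← Real.exp_add]
      exact Real.exp_le_exp.2 (by linarith)

theorem eventually_card_badBlockPrimes_le : ∀ᶠ x : ℝ in atTop, ∀ A T : ℕ, T ≤ 2 * A →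
    √(Real.log x) / 200 ≤ Real.log T → Real.log T ≤ 2.1 * Real.log x →
      #(badBlockPrimes x ((Real.log x)⁻¹ ^ 4) A T) ≤ Real.exp (0.97 * Real.log x) := by
  obtain ⟨C, hC, hmoment⟩ := exists_signMoment_primesLE_le
  filter_upwards [Real.tendsto_log_atTop.eventually (eventually_exists_moment_exponent hC.le),
    Real.tendsto_log_atTop.eventually_ge_atTop 200, Filter.eventually_ge_atTop 2]
    with x hexponent hL hx A T hT hT1 hT2
  obtain ⟨k, hk, hkl1, hkl2, herr⟩ := hexponent (Real.log T) hT1 hT2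
  have hT0 : 0 < T := by
    rw [Nat.pos_iff_ne_zero]
    rintro rfl
    have : 0 < √(Real.log x) := Real.sqrt_pos.2 (by linarith)
    rw [Nat.cast_zero, Real.log_zero] at hT1
    linarith
  refine card_badBlockPrimes_le hx hL hT0 hT ((hmoment T k hk).trans_eq ?_) hkl1 hkl2 herr
  rw [Real.exp_add, Real.rpow_def_of_pos (by exact_mod_cast hT0)]
  ring_nf

end Blocks

/-! ### Positivity at large arguments -/

section LogSum

variable {l R Y : ℕ}

/-- The partial sum `∑_{n ≤ t} χ_l(n) / n` of the Dirichlet series of `χ_l` at `1`. -/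
noncomputable def logSum (l t : ℕ) : ℝ := ∑ n ∈ Icc 1 t, quadChar l n / n

lemma logSum_sub_logSum (l : ℕ) (h : R ≤ Y) :
    logSum l Y - logSum l R = ∑ n ∈ Ioc R Y, quadChar l n / n := by
  rw [logSum, logSum, ← zero_add 1, Icc_add_one_left_eq_Ioc, Icc_add_one_left_eq_Ioc,
    ← sum_Ioc_consecutive _ R.zero_le h, add_sub_cancel_left]

lemma logSum_sub_div_le (l : ℕ) (hR : 0 < R) (h : R ≤ Y) :
    logSum l R - (Y - R) / R ≤ logSum l Y := by
  have hterm (n : ℕ) (hn : n ∈ Ioc R Y) : -(1 / R : ℝ) ≤ quadChar l n / n := by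
    refine neg_le_of_abs_le ?_
    rw [abs_div, Nat.abs_cast]
    exact div_le_div₀ zero_le_one (abs_quadChar_le_one l n) (by exact_mod_cast hR)
      (by exact_mod_cast (mem_Ioc.1 hn).1.le)
  have hsum := card_nsmul_le_sum _ _ _ hterm
  rw [← logSum_sub_logSum l h, Nat.card_Ioc, nsmul_eq_mul, Nat.cast_sub h] at hsum
  linarith [mul_one_div ((Y : ℝ) - R) R]

lemma abs_sum_Ioc_mul_le_of_antitoneOn {f g : ℕ → ℝ} {M : ℝ} (hg : AntitoneOn g (Set.Ioi R))
    (hg0 : ∀ n, 0 ≤ g n) (hM : ∀ Y, |∑ n ∈ Ioc R Y, f n| ≤ M) (h : R ≤ Y) :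
    |∑ n ∈ Ioc R Y, f n * g n| ≤ M * g (R + 1) := by
  have hparts : |∑ n ∈ Ioc R Y, f n * g n - (∑ n ∈ Ioc R Y, f n) * g (Y + 1)| ≤
      M * (g (R + 1) - g (Y + 1)) := by
    induction Y, h using Nat.le_induction with
    | base => simp
    | succ Y hY ih =>
      have hdiff : 0 ≤ g (Y + 1) - g (Y + 2) := sub_nonneg.2 <|
        hg (Set.mem_Ioi.2 (by omega)) (Set.mem_Ioi.2 (by omega)) (by omega)
      have hstep := mul_le_mul_of_nonneg_right (hM (Y + 1)) hdiff
      rw [← abs_of_nonneg hdiff, ← abs_mul, abs_of_nonneg hdiff] at hstep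
      have hadd := abs_add_le (∑ n ∈ Ioc R Y, f n * g n - (∑ n ∈ Ioc R Y, f n) * g (Y + 1))
        ((∑ n ∈ Ioc R (Y + 1), f n) * (g (Y + 1) - g (Y + 2)))
      rw [sum_Ioc_succ_top hY, sum_Ioc_succ_top hY] at *
      ring_nf at *
      linarith
  have hend : |(∑ n ∈ Ioc R Y, f n) * g (Y + 1)| ≤ M * g (Y + 1) := by
    rw [abs_mul, abs_of_nonneg (hg0 _)]
    exact mul_le_mul_of_nonneg_right (hM Y) (hg0 _)
  rw [← sub_add_cancel (∑ n ∈ Ioc R Y, f n * g n) ((∑ n ∈ Ioc R Y, f n) * g (Y + 1))]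
  linarith [abs_add_le (∑ n ∈ Ioc R Y, f n * g n - (∑ n ∈ Ioc R Y, f n) * g (Y + 1))
    ((∑ n ∈ Ioc R Y, f n) * g (Y + 1))]

lemma logSum_sub_two_mul_div_le (hl : Odd l) (hsq : ¬ IsSquare l) (hR : 0 < R) (h : R ≤ Y) :
    logSum l R - 2 * l / R ≤ logSum l Y := by
  have hinv : AntitoneOn (fun n : ℕ ↦ (n : ℝ)⁻¹) (Set.Ioi R) := fun m hm n _ hmn ↦
    inv_anti₀ (by exact_mod_cast hR.trans hm) (by exact_mod_cast hmn)
  have htail := neg_le_of_abs_le <| abs_sum_Ioc_mul_le_of_antitoneOn hinv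
    (fun n ↦ by positivity) (abs_sum_Ioc_quadChar_le hl hsq R) h
  simp only [← div_eq_mul_inv, ← logSum_sub_logSum l h] at htail
  have hmono : 2 * (l : ℝ) / (R + 1 : ℕ) ≤ 2 * l / R := by
    gcongr
    omega
  linarith

section Mesh

variable {t : ℕ → ℕ} {i j : ℕ} {q r : ℝ}

lemma logSum_sub_mul_le (ht : Monotone t) (hij : i ≤ j)
    (hq : ∀ m, i ≤ m → m < j → |∑ n ∈ Ioc (t m) (t (m + 1)), quadChar l n / n| ≤ q) :
    logSum l (t i) - (j - i) * q ≤ logSum l (t j) := by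
  have hdist := dist_le_Ico_sum_of_dist_le (f := fun m ↦ logSum l (t m)) (d := fun _ ↦ q) hij
    fun {m} him hmj ↦ by
      rw [dist_comm, Real.dist_eq, logSum_sub_logSum l (ht m.le_succ)]
      exact hq m him hmj
  rw [sum_const, Nat.card_Ico, nsmul_eq_mul, Nat.cast_sub hij, Real.dist_eq] at hdist
  linarith [le_of_abs_le hdist]

lemma exists_mem_Ico_of_mesh (hij : i ≤ j) (hY : t i ≤ Y) (hY' : Y < t j) :
    ∃ m, i ≤ m ∧ m < j ∧ t m ≤ Y ∧ Y < t (m + 1) := by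
  have hspec : t (Nat.findGreatest (t · ≤ Y) j) ≤ Y :=
    Nat.findGreatest_spec (P := (t · ≤ Y)) hij hY
  have hlt : Nat.findGreatest (t · ≤ Y) j < j := (Nat.findGreatest_le j).lt_of_ne fun h ↦ by
    rw [h] at hspec
    omega
  exact ⟨_, Nat.le_findGreatest hij hY, hlt, hspec,
    not_le.1 <|
    Nat.findGreatest_is_greatest (P := (t · ≤ Y)) (Nat.lt_succ_self _) (Nat.succ_le_of_lt hlt)⟩

lemma le_logSum_of_mesh (ht : Monotone t) (ht0 : ∀ m, 0 < t m) (hij : i ≤ j) (hq0 : 0 ≤ q)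
    (hq : ∀ m, i ≤ m → m < j → |∑ n ∈ Ioc (t m) (t (m + 1)), quadChar l n / n| ≤ q)
    (hr : ∀ m, i ≤ m → m < j → ((t (m + 1) : ℝ) - t m) ≤ r * t m)
    (hY : t i ≤ Y) (hY' : Y < t j) : logSum l (t i) - (j - i) * q - r ≤ logSum l Y := by
  obtain ⟨m, him, hmj, hmY, hYm⟩ := exists_mem_Ico_of_mesh hij hY hY'
  have hgrid := logSum_sub_mul_le (l := l) ht him fun m' hi hm ↦ hq m' hi (hm.trans hmj)
  have hlast := logSum_sub_div_le l (ht0 m) hmY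
  have hmesh : ((Y : ℝ) - t m) / t m ≤ r := by
    rw [div_le_iff₀ (by exact_mod_cast ht0 m)]
    refine le_trans ?_ (hr m him hmj)
    gcongr
  have hcount : ((m : ℝ) - i) * q ≤ (j - i) * q := by gcongr
  linarith

end Mesh

end LogSum

section Grid

open Filter (atTop)

variable {L x : ℝ} {j p Y : ℕ}

/-- The grid points `⌊exp (j / L)⌋`, consecutive ones having ratio about `1 + 1 / L`. -/
noncomputable def gridPoint (L : ℝ) (j : ℕ) : ℕ := ⌊Real.exp (j / L)⌋₊

/-- The index of a grid point close to `exp (√L / 100)`. -/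
noncomputable def gridStart (L : ℝ) : ℕ := ⌈L * √L / 100⌉₊

/-- The index of a grid point close to `exp (2.05 * L)`. -/
noncomputable def gridEnd (L : ℝ) : ℕ := ⌈2.05 * L ^ 2⌉₊

lemma gridPoint_pos (hL : 0 ≤ L) (j : ℕ) : 0 < gridPoint L j :=
  Nat.floor_pos.2 (Real.one_le_exp (by positivity))

lemma gridPoint_mono (hL : 0 ≤ L) : Monotone (gridPoint L) := fun i j hij ↦ by
  unfold gridPoint
  gcongr

lemma gridPoint_succ_sub_le (hL : 2 ≤ L) (hj : L + 1 ≤ Real.exp (j / L)) :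
    (gridPoint L (j + 1) : ℝ) - gridPoint L j ≤ 4 / L * gridPoint L j := by
  have hL0 : 0 < L := by linarith
  have hlt : Real.exp (j / L) < gridPoint L j + 1 := Nat.lt_floor_add_one _
  have hexp : Real.exp (1 / L) ≤ 1 + 2 / L := by
    have := Real.abs_exp_sub_one_le (x := 1 / L) (by
      rw [abs_of_pos (by positivity), div_le_one hL0]
      linarith)
    rw [abs_of_pos (a := 1 / L) (by positivity)] at this
    linarith [le_of_abs_le this, mul_one_div 2 L]
  have hsucc : (gridPoint L (j + 1) : ℝ) ≤ (gridPoint L j + 1) * (1 + 2 / L) := calc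
    (gridPoint L (j + 1) : ℝ) ≤ Real.exp ((j + 1 : ℕ) / L) := Nat.floor_le (Real.exp_pos _).le
    _ = Real.exp (j / L) * Real.exp (1 / L) := by
      rw [← Real.exp_add]
      push_cast
      ring_nf
    _ ≤ (gridPoint L j + 1) * (1 + 2 / L) := by gcongr
  have hsmall : 1 + 2 / L ≤ 2 / L * gridPoint L j := by
    rw [div_mul_eq_mul_div, le_div_iff₀ hL0, add_mul, div_mul_cancel₀ _ hL0.ne']
    linarith
  calc (gridPoint L (j + 1) : ℝ) - gridPoint L j
      ≤ (gridPoint L j + 1) * (1 + 2 / L) - gridPoint L j := by gcongr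
    _ = 2 / L * gridPoint L j + (1 + 2 / L) := by ring
    _ ≤ 2 / L * gridPoint L j + 2 / L * gridPoint L j := by gcongr
    _ = 4 / L * gridPoint L j := by ring

lemma log_gridPoint_le (hL : 0 ≤ L) (j : ℕ) : Real.log (gridPoint L j) ≤ j / L := by
  rw [← Real.log_exp (j / L)]
  exact Real.log_le_log (by exact_mod_cast gridPoint_pos hL j) (Nat.floor_le (Real.exp_pos _).le)

lemma div_sub_one_le_log_gridPoint (hL : 0 ≤ L) (j : ℕ) :
    j / L - 1 ≤ Real.log (gridPoint L j) := by
  have hpos : (1 : ℝ) ≤ gridPoint L j := by exact_mod_cast gridPoint_pos hL j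
  have hlt : Real.exp (j / L) < gridPoint L j + 1 := Nat.lt_floor_add_one _
  have hle : Real.exp (j / L - 1) ≤ gridPoint L j := by
    rw [Real.exp_sub, div_le_iff₀ (Real.exp_pos 1)]
    nlinarith [Real.add_one_le_exp 1]
  simpa using Real.log_le_log (Real.exp_pos _) hle

lemma sqrt_div_le_gridStart_div (hL : 0 < L) : √L / 100 ≤ gridStart L / L := by
  rw [le_div_iff₀ hL]
  linarith [Nat.le_ceil (L * √L / 100), show (gridStart L : ℝ) = ⌈L * √L / 100⌉₊ from rfl]

lemma gridStart_div_le (hL : 0 < L) : gridStart L / L ≤ √L / 100 + 1 / L := by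
  rw [div_le_iff₀ hL, add_mul, div_mul_cancel₀ _ hL.ne']
  linarith [Nat.ceil_lt_add_one (a := L * √L / 100) (by positivity),
    show (gridStart L : ℝ) = ⌈L * √L / 100⌉₊ from rfl]

lemma gridStart_le_gridEnd (hL : 1 ≤ L) : gridStart L ≤ gridEnd L := by
  refine Nat.ceil_mono ?_
  nlinarith [Real.sqrt_le_self_iff.2 (Or.inr hL)]

lemma gridEnd_le (hL : 5 ≤ L) : gridEnd L ≤ 2.1 * L ^ 2 := by
  nlinarith [Nat.ceil_lt_add_one (a := 2.05 * L ^ 2) (by positivity),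
    show (gridEnd L : ℝ) = ⌈2.05 * L ^ 2⌉₊ from rfl]

lemma add_one_le_exp_div_of_gridStart_le (hL : 2 ≤ L) (hlog : 200 * Real.log L ≤ √L)
    (hj : gridStart L ≤ j) : L + 1 ≤ Real.exp (j / L) := calc
  L + 1 ≤ L ^ 2 := by nlinarith
  _ = Real.exp (2 * Real.log L) := by
    rw [mul_comm, Real.exp_mul, Real.exp_log (by linarith)]
    norm_cast
  _ ≤ Real.exp (√L / 100) := Real.exp_le_exp.2 (by linarith)
  _ ≤ Real.exp (gridStart L / L) := Real.exp_le_exp.2 (sqrt_div_le_gridStart_div (by linarith))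
  _ ≤ Real.exp (j / L) := by gcongr

lemma sqrt_div_le_log_gridPoint (hL : 10 ^ 6 ≤ L) (hj : gridStart L ≤ j) :
    √L / 200 ≤ Real.log (gridPoint L j) := by
  have hsqrt : 1000 ≤ √L := Real.le_sqrt_of_sq_le (by linarith)
  have hle : gridStart L / L ≤ j / L := by gcongr
  linarith [sqrt_div_le_gridStart_div (L := L) (by linarith),
    div_sub_one_le_log_gridPoint (L := L) (by linarith) j]

lemma log_gridPoint_gridStart_le (hL : 10 ^ 6 ≤ L) :
    Real.log (gridPoint L (gridStart L)) ≤ √L / 50 := by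
  have hsqrt : 1000 ≤ √L := Real.le_sqrt_of_sq_le (by linarith)
  have hinv : 1 / L ≤ 1 := (div_le_one (by linarith)).2 (by linarith)
  linarith [log_gridPoint_le (L := L) (by linarith) (gridStart L),
    gridStart_div_le (L := L) (by linarith)]

lemma log_gridPoint_le_of_le_gridEnd (hL : 5 ≤ L) (hj : j ≤ gridEnd L) :
    Real.log (gridPoint L j) ≤ 2.1 * L := by
  refine (log_gridPoint_le (by linarith) j).trans ((div_le_iff₀ (by linarith)).2 ?_)
  have hj' : (j : ℝ) ≤ gridEnd L := by exact_mod_cast hj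
  linarith [gridEnd_le hL]

lemma sq_le_gridPoint_gridEnd (hx : 0 < x) (hL : 20 ≤ Real.log x) :
    x ^ 2 ≤ gridPoint (Real.log x) (gridEnd (Real.log x)) := by
  have hpos := gridPoint_pos (L := Real.log x) (by linarith) (gridEnd (Real.log x))
  rw [← Real.log_le_log_iff (by positivity) (by exact_mod_cast hpos), Real.log_pow]
  have hend : 2.05 * Real.log x ≤ gridEnd (Real.log x) / Real.log x := by
    rw [le_div_iff₀ (by linarith), mul_assoc, ← sq]
    exact Nat.le_ceil _
  have := div_sub_one_le_log_gridPoint (L := Real.log x) (by linarith) (gridEnd (Real.log x))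
  push_cast
  linarith

lemma gridEnd_sub_gridStart_mul_le (hL : 5 ≤ L) :
    ((gridEnd L : ℝ) - gridStart L) * L⁻¹ ^ 4 ≤ 3 / L := calc
  ((gridEnd L : ℝ) - gridStart L) * L⁻¹ ^ 4 ≤ 3 * L ^ 3 * L⁻¹ ^ 4 := by
    gcongr
    nlinarith [gridEnd_le hL, Nat.cast_nonneg (α := ℝ) (gridStart L), sq_nonneg L]
  _ = 3 / L := by field_simp

lemma eleven_div_lt_one_div_log_gridPoint (hL : 10 ^ 6 ≤ L) :
    11 / L < 1 / (8 * Real.log (gridPoint L (gridStart L))) := by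
  have hL0 : 0 < L := by linarith
  have hsqrt : 1000 ≤ √L := Real.le_sqrt_of_sq_le (by linarith)
  rw [div_lt_div_iff₀ hL0 (by linarith [sqrt_div_le_log_gridPoint hL le_rfl])]
  nlinarith [log_gridPoint_gridStart_le hL, Real.mul_self_sqrt hL0.le]

lemma logSum_pos_of_forall_notMem_badBlockPrimes (hx : 2 ≤ x) (hL : 10 ^ 6 ≤ Real.log x)
    (hlog : 200 * Real.log (Real.log x) ≤ √(Real.log x)) (hp : p ∈ primesIn x)
    (hgood : ∀ j, gridStart (Real.log x) ≤ j → j < gridEnd (Real.log x) →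
      p ∉ badBlockPrimes x ((Real.log x)⁻¹ ^ 4) (gridPoint (Real.log x) j)
        (gridPoint (Real.log x) (j + 1)))
    (h0 : 1 / (8 * Real.log (gridPoint (Real.log x) (gridStart (Real.log x)))) ≤
      logSum p (gridPoint (Real.log x) (gridStart (Real.log x))))
    (hY : gridPoint (Real.log x) (gridStart (Real.log x)) ≤ Y) : 0 < logSum p Y := by
  set L := Real.log x
  have hL0 : 0 < L := by linarith
  obtain ⟨hprime, hp2, hpx⟩ := primesIn_spec hx hp
  have hgap := eleven_div_lt_one_div_log_gridPoint hL
  have hfour : 0 < 4 / L := by positivity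
  have heleven : 11 / L = 3 / L + 4 / L + 4 / L := by ring
  have hloss := gridEnd_sub_gridStart_mul_le (L := L) (by linarith)
  have hmono : Monotone (gridPoint L) := gridPoint_mono hL0.le
  have hij : gridStart L ≤ gridEnd L := gridStart_le_gridEnd (by linarith)
  have hq (m : ℕ) (hm : gridStart L ≤ m) (hm' : m < gridEnd L) :
      |∑ n ∈ Ioc (gridPoint L m) (gridPoint L (m + 1)), quadChar p n / n| ≤ L⁻¹ ^ 4 :=
    (not_le.1 fun h ↦ hgood m hm hm' (mem_filter.2 ⟨hp, h⟩)).le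
  rcases lt_or_ge Y (gridPoint L (gridEnd L)) with hlt | hge
  · linarith [le_logSum_of_mesh hmono (gridPoint_pos hL0.le) hij (by positivity) hq
      (fun m hm _ ↦ gridPoint_succ_sub_le (by linarith)
        (add_one_le_exp_div_of_gridStart_le (by linarith) hlog hm)) hY hlt]
  · have htail := logSum_sub_two_mul_div_le (hprime.odd_of_ne_two hp2)
      hprime.not_isSquare (gridPoint_pos hL0.le _) hge
    have hsmall : 2 * (p : ℝ) / gridPoint L (gridEnd L) ≤ 4 / L := calc
      2 * (p : ℝ) / gridPoint L (gridEnd L) ≤ 2 * (2 * x) / x ^ 2 := by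
        gcongr
        exact sq_le_gridPoint_gridEnd (by linarith) (by linarith)
      _ = 4 / x := by field_simp; norm_num
      _ ≤ 4 / L := by
        gcongr
        exact Real.log_le_self (by linarith)
    linarith [logSum_sub_mul_le hmono hij hq]

lemma gridPoint_succ_le_two_mul (hL : 4 ≤ L) (hj : L + 1 ≤ Real.exp (j / L)) :
    gridPoint L (j + 1) ≤ 2 * gridPoint L j := by
  have hstep := gridPoint_succ_sub_le (by linarith) hj
  have hratio : 4 / L * gridPoint L j ≤ 1 * gridPoint L j := by
    gcongr
    exact (div_le_one (by linarith)).2 hL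
  exact_mod_cast (by linarith : (gridPoint L (j + 1) : ℝ) ≤ 2 * gridPoint L j)

lemma gridEnd_sub_gridStart_mul_exp_le (hL : 10 ^ 6 ≤ L) (hlog : 200 * Real.log L ≤ √L) :
    ((gridEnd L : ℝ) - gridStart L) * Real.exp (0.97 * L) ≤ Real.exp (0.98 * L) := by
  have hL0 : 0 < L := by linarith
  have hsqrt : 1000 ≤ √L := Real.le_sqrt_of_sq_le (by linarith)
  calc ((gridEnd L : ℝ) - gridStart L) * Real.exp (0.97 * L)
      ≤ Real.exp (2 * Real.log L + 1.1) * Real.exp (0.97 * L) := by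
        have hcube : 2.1 * L ^ 2 ≤ Real.exp (2 * Real.log L + 1.1) := by
          rw [Real.exp_add, two_mul, Real.exp_add, Real.exp_log hL0]
          nlinarith [Real.add_one_le_exp 1.1]
        gcongr
        linarith [gridEnd_le (L := L) (by linarith), Nat.cast_nonneg (α := ℝ) (gridStart L)]
    _ ≤ Real.exp (0.98 * L) := by
        rw [← Real.exp_add]
        exact Real.exp_le_exp.2 (by nlinarith [Real.mul_self_sqrt hL0.le])

lemma card_le_exp_of_card_badBlockPrimes_le (hx : 2 ≤ x) (hL : 10 ^ 6 ≤ Real.log x)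
    (hlog : 200 * Real.log (Real.log x) ≤ √(Real.log x))
    (hblock : ∀ A T : ℕ, T ≤ 2 * A → √(Real.log x) / 200 ≤ Real.log T →
      Real.log T ≤ 2.1 * Real.log x →
        #(badBlockPrimes x ((Real.log x)⁻¹ ^ 4) A T) ≤ Real.exp (0.97 * Real.log x)) {t₀ : ℕ}
    (ht₀ : t₀ = gridPoint (Real.log x) (gridStart (Real.log x))) :
    #{p ∈ primesIn x | 1 / (8 * Real.log t₀) ≤ logSum p t₀ ∧ ∃ Y, t₀ ≤ Y ∧ logSum p Y ≤ 0} ≤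
      Real.exp (0.98 * Real.log x) := by
  subst ht₀
  set L := Real.log x
  have hsub : {p ∈ primesIn x | 1 / (8 * Real.log (gridPoint L (gridStart L))) ≤
      logSum p (gridPoint L (gridStart L)) ∧
        ∃ Y, gridPoint L (gridStart L) ≤ Y ∧ logSum p Y ≤ 0} ⊆
      (Ico (gridStart L) (gridEnd L)).biUnion fun j ↦
        badBlockPrimes x (L⁻¹ ^ 4) (gridPoint L j) (gridPoint L (j + 1)) := fun p hp ↦ by
    obtain ⟨hpx, h0, Y, hY, hneg⟩ := mem_filter.1 hp
    by_contra hbad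
    simp only [mem_biUnion, mem_Ico, not_exists, not_and, and_imp] at hbad
    exact (logSum_pos_of_forall_notMem_badBlockPrimes hx hL hlog hpx hbad h0 hY).not_ge hneg
  have hcard := (card_le_card hsub).trans card_biUnion_le
  refine (Nat.cast_le.2 hcard).trans ?_
  push_cast
  calc _ ≤ ∑ _j ∈ Ico (gridStart L) (gridEnd L), Real.exp (0.97 * L) := by
        refine sum_le_sum fun j hj ↦ hblock _ _ ?_ ?_ ?_
        · exact gridPoint_succ_le_two_mul (by linarith)
            (add_one_le_exp_div_of_gridStart_le (by linarith) hlog (mem_Ico.1 hj).1)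
        · exact sqrt_div_le_log_gridPoint hL ((mem_Ico.1 hj).1.trans j.le_succ)
        · exact log_gridPoint_le_of_le_gridEnd (by linarith) (mem_Ico.1 hj).2
    _ = ((gridEnd L : ℝ) - gridStart L) * Real.exp (0.97 * L) := by
        rw [sum_const, Nat.card_Ico, nsmul_eq_mul,
          Nat.cast_sub (gridStart_le_gridEnd (by linarith))]
    _ ≤ Real.exp (0.98 * L) := gridEnd_sub_gridStart_mul_exp_le hL hlog

theorem eventually_exists_card_logSum_nonpos_le : ∀ᶠ x : ℝ in atTop, ∃ t₀ : ℕ, 4 ≤ t₀ ∧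
    √(Real.log x) / 200 ≤ Real.log t₀ ∧ Real.log t₀ ≤ √(Real.log x) / 50 ∧
    #{p ∈ primesIn x | 1 / (8 * Real.log t₀) ≤ logSum p t₀ ∧ ∃ Y, t₀ ≤ Y ∧ logSum p Y ≤ 0} ≤
      Real.exp (0.98 * Real.log x) := by
  have hlog : ∀ᶠ L : ℝ in atTop, 200 * Real.log L ≤ √L := by
    filter_upwards [eventually_sqrt_mul_log_le (c := 1 / 200) (by norm_num),
      Filter.eventually_gt_atTop 0] with L hL hL0
    refine le_of_mul_le_mul_left ?_ (Real.sqrt_pos.2 hL0)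
    linarith [Real.mul_self_sqrt hL0.le]
  filter_upwards [eventually_card_badBlockPrimes_le, Real.tendsto_log_atTop.eventually hlog,
    Real.tendsto_log_atTop.eventually_ge_atTop (10 ^ 6), Filter.eventually_ge_atTop 2]
    with x hblock hlog hL hx
  have hlower := sqrt_div_le_log_gridPoint hL le_rfl
  refine ⟨gridPoint (Real.log x) (gridStart (Real.log x)), ?_, hlower,
    log_gridPoint_gridStart_le hL, card_le_exp_of_card_badBlockPrimes_le hx hL hlog hblock rfl⟩
  have hsqrt : 1000 ≤ √(Real.log x) := Real.le_sqrt_of_sq_le (by linarith)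
  have hpos := gridPoint_pos (L := Real.log x) (by linarith) (gridStart (Real.log x))
  have hfour : Real.log (4 : ℕ) ≤ Real.log (gridPoint (Real.log x) (gridStart (Real.log x))) := by
    push_cast
    linarith [log_four_le_two]
  exact_mod_cast (Real.log_le_log_iff (by norm_num) (by exact_mod_cast hpos)).1 hfour

end Grid

/-! ### Choice of the smoothness parameter -/

section Parameters

open Filter (atTop)

variable {c ε η τ Z : ℝ}

/-- The function `l ↦ l * log log l / log l`: at `l = log N` the tail probability is at most a
constant times `exp (-exp (tailExponent l / (1 + ε)))`. -/
noncomputable def tailExponent (l : ℝ) : ℝ := l * Real.log (Real.log l) / Real.log l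

lemma eventually_log_le_mul (hc : 0 < c) : ∀ᶠ v in atTop, Real.log v ≤ c * v := by
  filter_upwards [Real.isLittleO_log_id_atTop.bound hc, Filter.eventually_ge_atTop 0] with v hlog hv
  rw [id, Real.norm_of_nonneg hv] at hlog
  exact (Real.le_norm_self _).trans hlog

lemma eventually_exp_log_div_le_mul (hη : 0 < η) (hc : 0 < c) :
    ∀ᶠ v in atTop, Real.exp (Real.log v / (1 + η)) ≤ c * v := by
  filter_upwards [(tendsto_rpow_neg_atTop (y := η / (1 + η)) (by positivity)).eventually
    (eventually_le_nhds hc), Filter.eventually_gt_atTop 0] with v hsmall hv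
  rw [Real.rpow_def_of_pos hv] at hsmall
  calc Real.exp (Real.log v / (1 + η))
      = Real.exp (Real.log v * -(η / (1 + η)) + Real.log v) := by
        congr 1
        field_simp
        ring
    _ ≤ c * v := by
        rw [Real.exp_add, Real.exp_log hv]
        gcongr

lemma eventually_log_div_add_add_exp_le (hη : 0 < η) (M : ℝ) : ∀ᶠ v in atTop,
    Real.log v / (1 + η) + v + 3 * Real.exp (Real.log v / (1 + η)) ≤ (1 + η / 2) * v - M := by
  filter_upwards [eventually_log_le_mul (c := η / 16) (by positivity),
    eventually_exp_log_div_le_mul hη (c := η / 16) (by positivity), Filter.eventually_ge_atTop 1,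
    Filter.eventually_ge_atTop (4 * M / η)] with v hlog hexp hv hM
  have hdiv : Real.log v / (1 + η) ≤ Real.log v :=
    div_le_self (Real.log_nonneg hv) (by linarith)
  rw [div_le_iff₀ hη] at hM
  linarith [mul_pos hη (by linarith : 0 < v)]

lemma tailExponent_le_self (hτ0 : 0 ≤ τ) (hτ : 1 ≤ Real.log τ) : tailExponent τ ≤ τ := by
  rw [tailExponent, div_le_iff₀ (by linarith)]
  gcongr
  exact Real.log_le_self hτ0

lemma log_le_log_log_div_mul_div (hη : 0 < η) (hη1 : η ≤ 1) (hτη : 4 / η ≤ τ)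
    (hτ : 1 ≤ Real.log τ) (hZ0 : 0 < Z) (hZ : Z ≤ tailExponent τ / (1 + η) ^ 2) :
    (1 + η / 2) * Real.log τ ≤ Real.log (Real.log τ) / (1 + η) * ((τ - 1) / Z) := by
  have hτ0 : 0 < τ := (by positivity : 0 < 4 / η).trans_le hτη
  have hshift : (1 + η / 2) * τ ≤ (1 + η) * (τ - 1) := by
    rw [div_le_iff₀ hη] at hτη
    linarith
  rw [tailExponent, le_div_iff₀ (by positivity), le_div_iff₀ (by linarith)] at hZ
  rw [div_mul_div_comm, le_div_iff₀ (by positivity)]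
  refine le_of_mul_le_mul_right ?_ (by positivity : 0 < 1 + η)
  calc (1 + η / 2) * Real.log τ * ((1 + η) * Z) * (1 + η)
      = (1 + η / 2) * (Z * (1 + η) ^ 2 * Real.log τ) := by ring
    _ ≤ (1 + η / 2) * (τ * Real.log (Real.log τ)) := by gcongr
    _ = (1 + η / 2) * τ * Real.log (Real.log τ) := by ring
    _ ≤ (1 + η) * (τ - 1) * Real.log (Real.log τ) := by
        gcongr
        exact Real.log_nonneg hτ
    _ = _ := by ring

lemma eventually_rankin_exponent_le (hη : 0 < η) (hη1 : η ≤ 1) (M : ℝ) :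
    ∀ᶠ τ in atTop, ∀ Z, 0 < Z → Z ≤ tailExponent τ / (1 + η) ^ 2 →
      Real.log (Real.log τ) / (1 + η) - Real.log (Real.log τ) / (1 + η) * ((τ - 1) / Z) +
        Real.log Z + 3 * Real.exp (Real.log (Real.log τ) / (1 + η)) ≤ -M := by
  filter_upwards [Real.tendsto_log_atTop.eventually (eventually_log_div_add_add_exp_le hη M),
    Real.tendsto_log_atTop.eventually_ge_atTop 1, Filter.eventually_ge_atTop (4 / η)]
    with τ hexp hlog hτη Z hZ0 hZ
  have hτ0 : 0 < τ := (by positivity : 0 < 4 / η).trans_le hτη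
  have htail : 0 ≤ tailExponent τ :=
    div_nonneg (mul_nonneg hτ0.le (Real.log_nonneg hlog)) (by linarith)
  have hZτ : Z ≤ τ := hZ.trans <|
    (div_le_self htail (one_le_pow₀ (by linarith))).trans (tailExponent_le_self hτ0.le hlog)
  have hlogZ : Real.log Z ≤ Real.log τ := Real.log_le_log hZ0 hZτ
  linarith [log_le_log_log_div_mul_div hη hη1 hτη hlog hZ0 hZ]

lemma rpow_mul_rpow_mul_log_mul_exp_eq {t z : ℝ} (ht : 0 < t) (hz : 1 < z) (X : ℝ) :
    t ^ (1 - X / Real.log z) * z ^ (X / Real.log z) *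
        (Real.log z * Real.exp (3 * z ^ (X / Real.log z))) =
      t * Real.exp (X - X * (Real.log t / Real.log z) + Real.log (Real.log z) +
        3 * Real.exp X) := by
  have hlogz : 0 < Real.log z := Real.log_pos hz
  have hzX : z ^ (X / Real.log z) = Real.exp X := by
    rw [Real.rpow_def_of_pos (by linarith), mul_div_cancel₀ _ hlogz.ne']
  have htX : t ^ (1 - X / Real.log z) = t * Real.exp (-(X * (Real.log t / Real.log z))) := by
    rw [sub_eq_add_neg, Real.rpow_add ht, Real.rpow_one, Real.rpow_def_of_pos ht]
    ring_nf
  rw [hzX, htX, sub_eq_add_neg, Real.exp_add, Real.exp_add, Real.exp_add, Real.exp_log hlogz]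
  ring

lemma tendsto_log_natCast_add_one :
    Filter.Tendsto (fun t : ℕ ↦ Real.log ((t : ℝ) + 1)) atTop atTop :=
  Real.tendsto_log_atTop.comp
    (Filter.tendsto_atTop_add_const_right _ _ tendsto_natCast_atTop_atTop)

/- Rankin's bound is used with `α = X / log z`, where `exp X = (log log t) ^ (1 / (1 + η))`. -/
theorem eventually_card_smoothNumbersUpTo_mul_log_le (hη : 0 < η) (hη1 : η ≤ 1) (hc : 0 < c) :
    ∀ᶠ t : ℕ in atTop, ∀ z : ℕ, Real.log (t + 1) ≤ z →
      Real.log z ≤ tailExponent (Real.log (t + 1)) / (1 + η) ^ 2 →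
        #(Nat.smoothNumbersUpTo t (z + 1)) * Real.log t ≤ c * t := by
  obtain ⟨C, hC, hsmooth⟩ := exists_card_smoothNumbersUpTo_mul_log_le
  have hloglog := Real.tendsto_log_atTop.eventually
    (eventually_log_le_mul (c := 2 / 5) (by norm_num))
  filter_upwards [tendsto_log_natCast_add_one.eventually
      (eventually_rankin_exponent_le hη hη1 (Real.log (C / c))),
    tendsto_log_natCast_add_one.eventually hloglog,
    tendsto_log_natCast_add_one.eventually_ge_atTop (Real.exp 1),
    tendsto_log_natCast_add_one.eventually_ge_atTop 3, Filter.eventually_ge_atTop 2]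
    with t hrankin hloglog hexp h3 ht z hz hlogz
  have ht2 : (2 : ℝ) ≤ t := by exact_mod_cast ht
  set τ := Real.log (t + 1)
  set X := Real.log (Real.log τ) / (1 + η)
  have hlogτ : 1 ≤ Real.log τ := (Real.le_log_iff_exp_le (by linarith)).2 hexp
  have hX0 : 0 ≤ X := div_nonneg (Real.log_nonneg hlogτ) (by linarith)
  have hX : X ≤ Real.log (Real.log τ) :=
    div_le_self (Real.log_nonneg hlogτ) (by linarith)
  have hlogz0 : Real.log τ ≤ Real.log z := Real.log_le_log (by linarith) hz
  have hlogt : τ - 1 ≤ Real.log t := by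
    have hle : τ ≤ Real.log (2 * t) := Real.log_le_log (by linarith) (by linarith)
    rw [Real.log_mul two_ne_zero (by linarith)] at hle
    linarith [Real.log_two_lt_d9]
  have hα : X / Real.log z ≤ 2 / 5 := by
    rw [div_le_iff₀ (by linarith)]
    linarith
  refine (hsmooth t z (X / Real.log z) (by exact_mod_cast h3.trans hz)
    (div_nonneg hX0 (by linarith)) hα).trans ?_
  rw [mul_assoc C, rpow_mul_rpow_mul_log_mul_exp_eq (by linarith) (by linarith)]
  have hexponent : Real.exp (X - X * (Real.log t / Real.log z) + Real.log (Real.log z) +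
      3 * Real.exp X) ≤ c / C := by
    rw [← inv_div C c, ← Real.exp_log (by positivity : 0 < C / c), ← Real.exp_neg]
    refine Real.exp_le_exp.2 (le_trans ?_ (hrankin _ (by linarith) hlogz))
    gcongr
  calc C * (t * Real.exp _) ≤ C * (t * (c / C)) := by gcongr
    _ = c * t := by field_simp

lemma eventually_mul_log_le_tailExponent (hc : 0 < c) :
    ∀ᶠ τ in atTop, c * Real.log τ ≤ tailExponent τ := by
  filter_upwards [(isLittleO_log_rpow_atTop one_half_pos).bound (c := (c + 1)⁻¹) (by positivity),
    (Real.tendsto_log_atTop.comp Real.tendsto_log_atTop).eventually_ge_atTop 1,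
    Real.tendsto_log_atTop.eventually_gt_atTop 0, Filter.eventually_gt_atTop 0]
    with τ hsmall hloglog hlog hτ
  rw [Function.comp_apply] at hloglog
  rw [Real.norm_of_nonneg hlog.le, Real.norm_of_nonneg (by positivity), ← Real.sqrt_eq_rpow,
    ← div_eq_inv_mul, le_div_iff₀ (by positivity)] at hsmall
  rw [tailExponent, le_div_iff₀ hlog]
  calc c * Real.log τ * Real.log τ ≤ (Real.log τ * (c + 1)) ^ 2 := by nlinarith [sq_nonneg c]
    _ ≤ √τ ^ 2 := by gcongr
    _ = τ := Real.sq_sqrt hτ.le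
    _ ≤ τ * Real.log (Real.log τ) := le_mul_of_one_le_right hτ.le hloglog

lemma tailExponent_le_tailExponent {a b : ℝ} (ha : Real.exp (Real.exp 1) ≤ a) (hab : a ≤ b) :
    tailExponent a ≤ tailExponent b := by
  have hexp : Real.exp 1 ≤ Real.exp (Real.exp 1) :=
    Real.exp_le_exp.2 (Real.one_le_exp zero_le_one)
  have ha0 : 0 < a := (Real.exp_pos _).trans_le ha
  have hloga : Real.exp 1 ≤ Real.log a := (Real.le_log_iff_exp_le ha0).2 ha
  have hloga0 : 0 < Real.log a := (Real.exp_pos _).trans_le hloga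
  have hlogab : Real.log a ≤ Real.log b := Real.log_le_log ha0 hab
  have hquot : a / Real.log a ≤ b / Real.log b := by
    have hanti := Real.log_div_self_antitoneOn (hexp.trans ha) ((hexp.trans ha).trans hab) hab
    rw [div_le_div_iff₀ (by linarith) ha0] at hanti
    rw [div_le_div_iff₀ hloga0 (by linarith)]
    linarith
  have hloglog : 0 ≤ Real.log (Real.log a) :=
    Real.log_nonneg ((Real.one_le_exp zero_le_one).trans hloga)
  calc tailExponent a = a / Real.log a * Real.log (Real.log a) := mul_div_right_comm ..
    _ ≤ b / Real.log b * Real.log (Real.log b) := by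
        gcongr
        exact div_nonneg (by linarith) (by linarith)
    _ = tailExponent b := (mul_div_right_comm ..).symm

lemma exists_one_add_pow_four_le (hε : 0 < ε) : ∃ η : ℝ, 0 < η ∧ η ≤ 1 ∧ (1 + η) ^ 4 ≤ 1 + ε := by
  refine ⟨min 1 (ε / 15), by positivity, min_le_left _ _, ?_⟩
  set η := min 1 (ε / 15)
  have hη1 : η ≤ 1 := min_le_left _ _
  have hηε : η ≤ ε / 15 := min_le_right _ _
  have hη0 : 0 ≤ η := by positivity
  have hpow {n : ℕ} (hn : n ≠ 0) : η ^ n ≤ η := pow_le_of_le_one hη0 hη1 hn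
  linarith [hpow two_ne_zero, hpow three_ne_zero, hpow four_ne_zero]

lemma exists_le_log_sq_mul_le {g : ℝ} (hg : 0 ≤ g) (hη : 0 ≤ η) : ∃ K s : ℕ, Real.exp g ≤ K ∧
    1 ≤ s ∧ Real.exp (g * (η / 2)) ≤ s + 1 ∧ Real.log (s ^ 2 * K : ℕ) ≤ (1 + η) * (g + 1) := by
  have hexp1 : 1 ≤ Real.exp g := Real.one_le_exp hg
  set K := ⌈Real.exp g⌉₊
  have hK : Real.exp g ≤ K := Nat.le_ceil _
  have hK1 : 1 ≤ (K : ℝ) := hexp1.trans hK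
  set s := ⌊(K : ℝ) ^ (η / 2)⌋₊
  have hs : 1 ≤ s := Nat.one_le_floor_iff _ |>.2 (Real.one_le_rpow hK1 (by positivity))
  have hlogK : Real.log K ≤ g + 1 := by
    have hceil : (K : ℝ) ≤ 2 * Real.exp g := by
      linarith [Nat.ceil_lt_add_one (Real.exp_pos g).le]
    have hle := Real.log_le_log (by linarith) hceil
    rw [Real.log_mul two_ne_zero (Real.exp_pos g).ne', Real.log_exp] at hle
    linarith [Real.log_two_lt_d9]
  have hlogs : Real.log s ≤ η / 2 * Real.log K := by
    rw [← Real.log_rpow (by linarith)]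
    exact Real.log_le_log (by exact_mod_cast hs) (Nat.floor_le (by positivity))
  refine ⟨K, s, hK, hs, ?_, ?_⟩
  · rw [Real.exp_mul]
    exact (Real.rpow_le_rpow (Real.exp_pos g).le hK (by positivity)).trans
      (Nat.lt_floor_add_one _).le
  · rw [Nat.cast_mul, Nat.cast_pow, Real.log_mul (by positivity) (by positivity), Real.log_pow]
    push_cast
    nlinarith

lemma one_add_mul_add_one_le {g G : ℝ} (hη : 0 < η) (hη4 : (1 + η) ^ 4 ≤ 1 + ε)
    (hg0 : 0 ≤ g) (hG : g * (1 + ε) = G) (hg : 1 ≤ η * g) :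
    (1 + η) * (g + 1) ≤ G / (1 + η) ^ 2 := by
  rw [le_div_iff₀ (by positivity)]
  calc (1 + η) * (g + 1) * (1 + η) ^ 2 ≤ (1 + η) * (g + η * g) * (1 + η) ^ 2 := by gcongr
    _ = g * (1 + η) ^ 4 := by ring
    _ ≤ g * (1 + ε) := by gcongr
    _ = G := hG

/- The parameters are `K ≈ exp (tailExponent (log t) / (1 + ε))`, `s ≈ K ^ (η / 2)` and
`z = s ^ 2 * K`, where `(1 + η) ^ 4 ≤ 1 + ε`. -/
lemma eventually_exists_sq_mul_parameters (hε : 0 < ε) (hη : 0 < η) (hη4 : (1 + η) ^ 4 ≤ 1 + ε)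
    {a : ℝ} (ha : 0 ≤ a) :
    ∀ᶠ τ in atTop, ∃ K s : ℕ, Real.exp (tailExponent τ / (1 + ε)) ≤ K ∧ τ ≤ K ∧ 1 ≤ s ∧
      a * τ ≤ s ∧ Real.log (s ^ 2 * K : ℕ) ≤ tailExponent τ / (1 + η) ^ 2 := by
  filter_upwards [eventually_mul_log_le_tailExponent (c := 4 * (1 + ε) / η) (by positivity),
    eventually_mul_log_le_tailExponent (c := 1 + ε) (by positivity),
    Real.tendsto_log_atTop.eventually_ge_atTop 1, Filter.eventually_ge_atTop (a + 1)]
    with τ hbig hbig' hlog hτ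
  set g := tailExponent τ / (1 + ε) with hg
  have hgG : g * (1 + ε) = tailExponent τ := div_mul_cancel₀ _ (by positivity)
  have hηg : 2 * Real.log τ ≤ g * (η / 2) := by
    rw [← hgG, div_mul_eq_mul_div, div_le_iff₀ hη] at hbig
    refine le_of_mul_le_mul_right ?_ (by positivity : 0 < 1 + ε)
    linarith
  have hglog : Real.log τ ≤ g := by
    rw [hg, le_div_iff₀ (by positivity)]
    linarith
  obtain ⟨K, s, hK, hs1, hs, hz⟩ := exists_le_log_sq_mul_le (g := g) (by linarith) hη.le
  refine ⟨K, s, hK, ?_, hs1, ?_, hz.trans ?_⟩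
  · rw [← Real.exp_log (by linarith : 0 < τ)]
    exact (Real.exp_le_exp.2 hglog).trans hK
  · have hsq : τ ^ 2 ≤ s + 1 := by
      rw [← Real.exp_log (by linarith : 0 < τ), ← Real.exp_nat_mul]
      exact (Real.exp_le_exp.2 (by exact_mod_cast hηg)).trans hs
    nlinarith
  · exact one_add_mul_add_one_le hη hη4 (by linarith) hgG (by linarith)

theorem eventually_exists_signMoment_Ioc_prime_le (hε : 0 < ε) : ∀ᶠ t : ℕ in atTop, ∃ K z : ℕ,
    Real.exp (tailExponent (Real.log (t + 1)) / (1 + ε)) ≤ K ∧ Real.log t ≤ K ∧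
      ∀ k, 1 ≤ k → k ≤ K → signMoment {q ∈ Ioc z t | q.Prime} t (2 * k) ≤
        2 * (Real.exp (-5) * (t / (16 * Real.log t))) ^ (2 * k) := by
  obtain ⟨η, hη, hη1, hη4⟩ := exists_one_add_pow_four_le hε
  filter_upwards [eventually_card_smoothNumbersUpTo_mul_log_le hη hη1
      (c := Real.exp (-5) / 32) (by positivity),
    tendsto_log_natCast_add_one.eventually (eventually_exists_sq_mul_parameters hε hη hη4
      (a := 1600 * Real.exp 5) (by positivity)), Filter.eventually_ge_atTop 2]
    with t hsmooth hparam ht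
  obtain ⟨K, s, hK, hτK, hs1, hs, hz⟩ := hparam
  have ht2 : (2 : ℝ) ≤ t := by exact_mod_cast ht
  have hlog : 0 < Real.log t := Real.log_pos (by linarith)
  have hlogle : Real.log t ≤ Real.log (t + 1) := Real.log_le_log (by linarith) (by linarith)
  have hs0 : (0 : ℝ) < s := by exact_mod_cast hs1
  refine ⟨K, s ^ 2 * K, hK, hlogle.trans hτK, fun k hk hkK ↦ ?_⟩
  have hcard : 2 * (#(Nat.smoothNumbersUpTo t (s ^ 2 * K + 1)) : ℝ) ≤
      Real.exp (-5) * (t / (16 * Real.log t)) := by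
    have hKz : (K : ℝ) ≤ (s ^ 2 * K : ℕ) := by
      exact_mod_cast Nat.le_mul_of_pos_left K (Nat.pow_pos hs1)
    rw [← mul_div_assoc, le_div_iff₀ (by positivity)]
    linarith [hsmooth _ (hτK.trans hKz) hz]
  have hprimeSq : 100 * t / s ≤ Real.exp (-5) * (t / (16 * Real.log t)) := by
    rw [Real.exp_neg, inv_mul_eq_div, div_div, div_le_div_iff₀ hs0 (by positivity)]
    calc 100 * t * (16 * Real.log t * Real.exp 5)
        = t * (1600 * Real.exp 5 * Real.log t) := by ring
      _ ≤ t * s := by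
          gcongr
          exact le_trans (by gcongr) hs
  rw [two_mul ((_ : ℝ) ^ _)]
  refine (signMoment_Ioc_prime_le t hk hs1 (Nat.mul_le_mul_left _ hkK)).trans ?_
  gcongr

end Parameters

/-! ### Positivity at small arguments -/

section SmallArguments

open Filter (atTop)

variable {x : ℝ} {t k : ℕ}

/-- The primes `p ∈ (x, 2x]` for which the twisted sum of `χ_p` up to `t` is too large for
`one_div_log_le_sum_quadChar_div` to apply. -/
noncomputable def badTwistPrimes (x : ℝ) (t : ℕ) : Finset ℕ :=
  {p ∈ primesIn x | t / (16 * Real.log t) < |∑ d ∈ Icc 1 t, twistCoeff t d * quadChar p d|}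

lemma exists_le_selbergSum {L : ℝ} (hL : 20 ≤ L) :
    ∃ D : ℕ, 1 ≤ D ∧ (D : ℝ) ≤ Real.exp (L / 10) ∧ L / 60 ≤ selbergSum D := by
  set D := ⌊Real.exp (L / 10)⌋₊
  have hDge : Real.exp (L / 20) ≤ D := by
    have hsq : Real.exp (L / 10) = Real.exp (L / 20) ^ 2 := by
      rw [← Real.exp_nat_mul]
      ring_nf
    have htwo : 2 ≤ Real.exp (L / 20) := by linarith [Real.add_one_le_exp (L / 20)]
    nlinarith [Nat.lt_floor_add_one (Real.exp (L / 10))]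
  have hD0 : (0 : ℝ) < D := (Real.exp_pos _).trans_le hDge
  have hD1 : 1 ≤ D := by exact_mod_cast hD0
  have hlog : L / 20 ≤ Real.log D := (Real.le_log_iff_exp_le hD0).2 hDge
  exact ⟨D, hD1, Nat.floor_le (Real.exp_pos _).le, by linarith [log_le_three_mul_selbergSum hD1]⟩

lemma eventually_exists_sieve_level : ∀ᶠ x : ℝ in atTop, ∃ D : ℕ, 1 ≤ D ∧ D ≤ ⌊x⌋₊ ∧
    (D : ℝ) ^ 4 ≤ Real.exp (0.4 * Real.log x) ∧
      ((⌊2 * x⌋₊ : ℝ) - ⌊x⌋₊) / (2 * selbergSum D) + (D : ℝ) ^ 4 ≤ 100 * (x / Real.log x) := by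
  filter_upwards [
    Real.tendsto_log_atTop.eventually (eventually_log_le_mul (c := 0.1) (by norm_num)),
    Real.tendsto_log_atTop.eventually_ge_atTop 20, Filter.eventually_ge_atTop 1] with x hlog hL hx
  set L := Real.log x
  have hexpL : Real.exp L = x := Real.exp_log (by linarith)
  obtain ⟨D, hD1, hDle, hselberg⟩ := exists_le_selbergSum hL
  have hD4 : (D : ℝ) ^ 4 ≤ Real.exp (0.4 * L) := calc
    (D : ℝ) ^ 4 ≤ Real.exp (L / 10) ^ 4 := by gcongr
    _ = Real.exp (0.4 * L) := by
      rw [← Real.exp_nat_mul]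
      ring_nf
  have hexp : Real.exp (0.4 * L) ≤ x / L := by
    rw [le_div_iff₀ (by linarith)]
    calc Real.exp (0.4 * L) * L = Real.exp (0.4 * L + Real.log L) := by
          rw [Real.exp_add, Real.exp_log (by linarith)]
      _ ≤ Real.exp L := Real.exp_le_exp.2 (by linarith)
      _ = x := hexpL
  refine ⟨D, hD1, Nat.le_floor (hDle.trans ?_), hD4, ?_⟩
  · rw [← hexpL]
    exact Real.exp_le_exp.2 (by linarith)
  · calc ((⌊2 * x⌋₊ : ℝ) - ⌊x⌋₊) / (2 * selbergSum D) + (D : ℝ) ^ 4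
        ≤ 2 * x / (2 * (L / 60)) + x / L := by
          gcongr
          · linarith [Nat.floor_le (by linarith : 0 ≤ 2 * x), Nat.cast_nonneg (α := ℝ) ⌊x⌋₊]
          · exact hD4.trans hexp
      _ = 61 * (x / L) := by
        field_simp
        norm_num
      _ ≤ 100 * (x / L) := by
        gcongr
        norm_num

lemma eventually_sum_primesIn_pow_sum_mul_quadChar_le : ∀ᶠ x : ℝ in atTop,
    ∀ (t k : ℕ) (P B : Finset ℕ) (a : ℕ → ℝ), B ⊆ primesIn x → (∀ n, |a n| ≤ 1) →
      ∑ p ∈ B, (∑ n ∈ Icc 1 t, a n * quadChar p n) ^ (2 * k) ≤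
        100 * (x / Real.log x) * signMoment P t (2 * k) +
          8 * Real.exp (0.4 * Real.log x) * (t : ℝ) ^ (4 * k) := by
  filter_upwards [eventually_exists_sieve_level, Filter.eventually_ge_atTop 2]
    with x hlevel hx t k P B a hB ha
  obtain ⟨D, hD, hDx, hD4, hmain⟩ := hlevel
  have hprime (p : ℕ) (hp : p ∈ B) : p.Prime ∧ ⌊x⌋₊ < p ∧ p ≤ ⌊2 * x⌋₊ := by
    obtain ⟨hprime, hlt, hle⟩ := (mem_filter.1 (hB hp)).2
    exact ⟨hprime, (Nat.floor_lt (by linarith)).2 hlt, Nat.le_floor hle⟩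
  refine (sum_prime_pow_sum_mul_quadChar_le hD hDx (Nat.le_floor hx)
    (Nat.floor_le_floor (by linarith)) P t k ha hprime).trans ?_
  have := signMoment_two_mul_nonneg P t k
  gcongr

lemma card_badTwistPrimes_mul_pow_le (x : ℝ) (t k : ℕ) :
    #(badTwistPrimes x t) * (t / (16 * Real.log t)) ^ (2 * k) ≤
      ∑ p ∈ badTwistPrimes x t, (∑ d ∈ Icc 1 t, twistCoeff t d * quadChar p d) ^ (2 * k) := by
  rw [← nsmul_eq_mul]
  refine card_nsmul_le_sum _ _ _ fun p hp ↦ ?_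
  rw [← (even_two_mul k).pow_abs (∑ d ∈ Icc 1 t, _)]
  exact pow_le_pow_left₀ (by positivity) (mem_filter.1 hp).2.le _

lemma eventually_card_badTwistPrimes_le : ∀ᶠ x : ℝ in atTop, ∀ (t k : ℕ) (P : Finset ℕ),
    2 ≤ t → 16 * Real.log t ≤ t → k * Real.log t ≤ Real.log x / 50 →
      signMoment P t (2 * k) ≤ 2 * (Real.exp (-5) * (t / (16 * Real.log t))) ^ (2 * k) →
        #(badTwistPrimes x t) ≤ 200 * (x / Real.log x) * Real.exp (-10 * k) +
          8 * Real.exp (0.48 * Real.log x) := by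
  filter_upwards [eventually_sum_primesIn_pow_sum_mul_quadChar_le, Filter.eventually_ge_atTop 1]
    with x hsieve hx t k P ht ht16 hkt hmoment
  have ht2 : (2 : ℝ) ≤ t := by exact_mod_cast ht
  have hlogt : 0 < Real.log t := Real.log_pos (by linarith)
  have hlogx : 0 ≤ Real.log x := Real.log_nonneg hx
  set L := Real.log x
  set q := t / (16 * Real.log t)
  have hq : 1 ≤ q := (one_le_div (by positivity)).2 ht16
  have hpow : (Real.exp (-5) * q) ^ (2 * k) = Real.exp (-10 * k) * q ^ (2 * k) := by
    rw [mul_pow, ← Real.exp_nat_mul]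
    push_cast
    ring_nf
  have herror : Real.exp (0.4 * L) * (t : ℝ) ^ (4 * k) ≤
      Real.exp (0.48 * L) * q ^ (2 * k) := calc
    Real.exp (0.4 * L) * (t : ℝ) ^ (4 * k)
        = Real.exp (0.4 * L + (4 * k : ℕ) * Real.log t) := by
      rw [Real.exp_add, Real.exp_nat_mul, Real.exp_log (by linarith)]
    _ ≤ Real.exp (0.48 * L) := by
      push_cast
      exact Real.exp_le_exp.2 (by linarith)
    _ ≤ Real.exp (0.48 * L) * q ^ (2 * k) :=
      le_mul_of_one_le_right (Real.exp_pos _).le (one_le_pow₀ hq)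
  refine le_of_mul_le_mul_right ?_ (by positivity : 0 < q ^ (2 * k))
  calc #(badTwistPrimes x t) * q ^ (2 * k)
      ≤ 100 * (x / L) * signMoment P t (2 * k) + 8 * Real.exp (0.4 * L) * (t : ℝ) ^ (4 * k) :=
        (card_badTwistPrimes_mul_pow_le x t k).trans
          (hsieve t k P _ _ (filter_subset _ _) (abs_twistCoeff_le_one t))
    _ ≤ 100 * (x / L) * (2 * (Real.exp (-10 * k) * q ^ (2 * k))) +
          8 * (Real.exp (0.48 * L) * q ^ (2 * k)) := by
        rw [mul_assoc 8]
        rw [hpow] at hmoment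
        gcongr
    _ = _ := by ring

lemma exp_neg_ten_mul_le {w κ : ℝ} (ht : 0 < t) (hw : w ≤ κ) (hκ : Real.log t ≤ κ)
    (hκ0 : 0 ≤ κ) : Real.exp (-10 * κ) ≤ Real.exp (-w) * (1 / (t : ℝ) ^ 2) := by
  have hsq : 1 / (t : ℝ) ^ 2 = Real.exp (-(2 * Real.log t)) := by
    rw [Real.exp_neg, two_mul, Real.exp_add, Real.exp_log (by exact_mod_cast ht), one_div, sq]
  rw [hsq, ← Real.exp_add]
  exact Real.exp_le_exp.2 (by linarith)

/- The moment of order `2k` with `k = min K ⌊√log x⌋` is used. -/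
lemma exists_eventually_card_badTwistPrimes_le {ε : ℝ} (hε : 0 < ε) :
    ∃ t₁ : ℕ, ∀ᶠ x : ℝ in atTop, ∀ (w : ℝ) (t : ℕ), t₁ ≤ t →
      w ≤ Real.exp (tailExponent (Real.log (t + 1)) / (1 + ε)) → w ≤ √(Real.log x) - 1 →
        Real.log t ≤ √(Real.log x) / 50 →
          #(badTwistPrimes x t) ≤ 200 * (x / Real.log x) * Real.exp (-w) * (1 / (t : ℝ) ^ 2) +
            8 * Real.exp (0.48 * Real.log x) := by
  have hlog : ∀ᶠ t : ℕ in atTop, Real.log (t : ℝ) ≤ 1 / 16 * t :=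
    tendsto_natCast_atTop_atTop.eventually (eventually_log_le_mul (by norm_num))
  obtain ⟨t₁, ht₁⟩ := Filter.eventually_atTop.1
    ((eventually_exists_signMoment_Ioc_prime_le hε).and (hlog.and (Filter.eventually_ge_atTop 2)))
  refine ⟨t₁, ?_⟩
  filter_upwards [eventually_card_badTwistPrimes_le, Filter.eventually_ge_atTop 0,
    Real.tendsto_log_atTop.eventually_ge_atTop 4] with x hcard hx hL w t ht hwt hwx htx
  obtain ⟨⟨K, z, hK, htK, hmoment⟩, ht16, ht2⟩ := ht₁ t ht
  have hsqrt : 2 ≤ √(Real.log x) := Real.le_sqrt_of_sq_le (by linarith)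
  have hfloor : √(Real.log x) - 1 ≤ ⌊√(Real.log x)⌋₊ := (Nat.sub_one_lt_floor _).le
  set k := min K ⌊√(Real.log x)⌋₊ with hk
  have hkx : (k : ℝ) ≤ √(Real.log x) :=
    (by exact_mod_cast min_le_right _ _ : (k : ℝ) ≤ ⌊√(Real.log x)⌋₊).trans
      (Nat.floor_le (Real.sqrt_nonneg _))
  have hK1 : 1 ≤ K := by exact_mod_cast (Real.exp_pos _).trans_le hK
  have hk1 : 1 ≤ k := le_min hK1 (Nat.le_floor (by push_cast; linarith))
  have hwk : w ≤ k := by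
    rw [hk, Nat.cast_min]
    exact le_min (hwt.trans hK) (hwx.trans hfloor)
  have htk : Real.log t ≤ k := by
    rw [hk, Nat.cast_min]
    exact le_min htK (by linarith)
  have hklog : k * Real.log t ≤ Real.log x / 50 := calc
    k * Real.log t ≤ √(Real.log x) * (√(Real.log x) / 50) :=
      mul_le_mul hkx htx (Real.log_natCast_nonneg t) (Real.sqrt_nonneg _)
    _ = Real.log x / 50 := by rw [← mul_div_assoc, Real.mul_self_sqrt (by linarith)]
  refine (hcard t k _ ht2 (by linarith) hklog (hmoment k hk1 (min_le_left _ _))).trans ?_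
  rw [mul_assoc _ (Real.exp (-w))]
  gcongr
  exact exp_neg_ten_mul_le (by omega) hwk htk k.cast_nonneg

lemma card_Icc_le_exp {L : ℝ} {t₀ : ℕ} (hL : 10000 ≤ L) (ht₀ : Real.log t₀ ≤ √L / 50) (m : ℕ) :
    #(Icc m t₀) ≤ Real.exp (0.02 * L) := by
  have hsqrt : 100 ≤ √L := Real.le_sqrt_of_sq_le (by linarith)
  have hsq : √L * √L = L := Real.mul_self_sqrt (by linarith)
  have hcard : (#(Icc m t₀) : ℝ) ≤ t₀ + 1 := by
    rw [Nat.card_Icc]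
    exact_mod_cast Nat.sub_le _ _
  have ht : (t₀ : ℝ) ≤ Real.exp (√L / 50) := Real.le_exp_of_log_le ht₀
  have hone : 1 ≤ Real.exp (√L / 50) := Real.one_le_exp (by positivity)
  calc (#(Icc m t₀) : ℝ) ≤ 2 * Real.exp (√L / 50) := by linarith
    _ ≤ Real.exp 1 * Real.exp (√L / 50) := by
        gcongr
        linarith [Real.add_one_le_exp 1]
    _ ≤ Real.exp (0.02 * L) := by
        rw [← Real.exp_add]
        exact Real.exp_le_exp.2 (by nlinarith)

theorem exists_eventually_card_biUnion_badTwistPrimes_le {ε : ℝ} (hε : 0 < ε) :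
    ∃ C : ℝ, 0 < C ∧ ∃ N₀ : ℝ, ∀ᶠ x : ℝ in atTop, ∀ N w : ℝ, N₀ ≤ N →
      w = Real.exp (tailExponent (Real.log N) / (1 + ε)) → w ≤ √(Real.log x) - 1 →
        ∀ t₀ : ℕ, Real.log t₀ ≤ √(Real.log x) / 50 →
          #((Icc ⌊N⌋₊ t₀).biUnion (badTwistPrimes x)) ≤
            C * (x / Real.log x) * Real.exp (-w) + 8 * Real.exp (0.5 * Real.log x) := by
  obtain ⟨t₁, ht₁⟩ := exists_eventually_card_badTwistPrimes_le hε
  have hsum : Summable fun n : ℕ ↦ 1 / (n : ℝ) ^ 2 := Real.summable_one_div_nat_pow.2 one_lt_two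
  have hT0 : 0 ≤ ∑' n : ℕ, 1 / (n : ℝ) ^ 2 := tsum_nonneg fun n ↦ by positivity
  set T := ∑' n : ℕ, 1 / (n : ℝ) ^ 2
  refine ⟨200 * (T + 1), by positivity, max t₁ (Real.exp (Real.exp (Real.exp 1))), ?_⟩
  filter_upwards [ht₁, Real.tendsto_log_atTop.eventually_ge_atTop 10000,
    Filter.eventually_ge_atTop 0] with x hbad hL hx N w hN hw hwx t₀ ht₀
  obtain ⟨hNt₁, hNexp⟩ := max_le_iff.1 hN
  have hN0 : 0 < N := (Real.exp_pos _).trans_le hNexp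
  have hterm (t : ℕ) (ht : t ∈ Icc ⌊N⌋₊ t₀) : (#(badTwistPrimes x t) : ℝ) ≤
      200 * (x / Real.log x) * Real.exp (-w) * (1 / (t : ℝ) ^ 2) +
        8 * Real.exp (0.48 * Real.log x) := by
    obtain ⟨hNt, htt₀⟩ := mem_Icc.1 ht
    have hNt' : N ≤ t + 1 := (Nat.lt_succ_floor N).le.trans (by exact_mod_cast Nat.succ_le_succ hNt)
    have htpos : 0 < t :=
      (Nat.floor_pos.2 ((Real.one_le_exp (Real.exp_pos _).le).trans hNexp)).trans_le hNt
    refine hbad w t ((Nat.le_floor hNt₁).trans hNt) ?_ hwx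
      ((Real.log_le_log (by exact_mod_cast htpos) (by exact_mod_cast htt₀)).trans ht₀)
    rw [hw]
    gcongr
    exact tailExponent_le_tailExponent ((Real.le_log_iff_exp_le hN0).2 hNexp)
      (Real.log_le_log hN0 hNt')
  calc (#((Icc ⌊N⌋₊ t₀).biUnion (badTwistPrimes x)) : ℝ)
      ≤ ∑ t ∈ Icc ⌊N⌋₊ t₀, (#(badTwistPrimes x t) : ℝ) := by exact_mod_cast card_biUnion_le
    _ ≤ 200 * (x / Real.log x) * Real.exp (-w) * ∑ t ∈ Icc ⌊N⌋₊ t₀, 1 / (t : ℝ) ^ 2 +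
          #(Icc ⌊N⌋₊ t₀) * (8 * Real.exp (0.48 * Real.log x)) := by
        rw [mul_sum, ← nsmul_eq_mul, ← sum_const, ← sum_add_distrib]
        exact sum_le_sum hterm
    _ ≤ 200 * (x / Real.log x) * Real.exp (-w) * (T + 1) +
          Real.exp (0.02 * Real.log x) * (8 * Real.exp (0.48 * Real.log x)) := by
        gcongr
        · linarith [hsum.sum_le_tsum (Icc ⌊N⌋₊ t₀) fun i _ ↦ by positivity]
        · exact card_Icc_le_exp hL ht₀ _
    _ = _ := by
        rw [mul_left_comm, ← Real.exp_add, ← add_mul]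
        norm_num
        ring

end SmallArguments

/-! ### The probability bound -/

section Probability

open Filter (atTop)

lemma eventually_tailExponent_mul_log_div_le : ∀ᶠ u : ℝ in atTop,
    tailExponent (u * Real.log u / (3 * Real.log (Real.log u))) ≤ 0.4 * u := by
  have hloglog := Real.tendsto_log_atTop.comp Real.tendsto_log_atTop
  filter_upwards [Real.tendsto_log_atTop.eventually (eventually_log_le_mul one_pos),
    hloglog.eventually (eventually_log_le_mul (c := 1 / 2) (by norm_num)),
    hloglog.eventually_ge_atTop 20, Real.tendsto_log_atTop.eventually_gt_atTop 0,
    Filter.eventually_gt_atTop 0] with u hrm hqr hr hm hu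
  simp only [Function.comp_apply] at hqr hr
  set m := Real.log u
  set r := Real.log m
  set Λ := u * m / (3 * r) with hΛ
  have hlog3 : Real.log 3 ≤ 2 := (Real.log_le_sub_one_of_pos (by norm_num)).trans (by norm_num)
  have hlogΛ : Real.log Λ = m + r - (Real.log 3 + Real.log r) := by
    rw [hΛ, Real.log_div (by positivity) (by positivity), Real.log_mul (by positivity)
      (by positivity), Real.log_mul (by positivity) (by positivity)]
  have hlower : m ≤ Real.log Λ := by linarith
  have hupper : Real.log Λ ≤ 2 * m := by
    linarith [Real.log_nonneg (by norm_num : (1 : ℝ) ≤ 3), Real.log_nonneg (by linarith : 1 ≤ r)]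
  have hloglogΛ : Real.log (Real.log Λ) ≤ 1.1 * r := calc
    Real.log (Real.log Λ) ≤ Real.log (2 * m) := Real.log_le_log (by linarith) hupper
    _ = Real.log 2 + r := by rw [Real.log_mul (by norm_num) hm.ne']
    _ ≤ 1.1 * r := by linarith [Real.log_two_lt_d9]
  calc tailExponent Λ ≤ Λ * (1.1 * r) / m := by
        unfold tailExponent
        gcongr
    _ = 1.1 / 3 * u := by
        rw [hΛ]
        field_simp
    _ ≤ 0.4 * u := by linarith

lemma eventually_mul_log_div_le_exp : ∀ᶠ u : ℝ in atTop,
    u * Real.log u / (3 * Real.log (Real.log u)) ≤ Real.exp (u / 2) / 200 := by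
  filter_upwards [(Real.tendsto_log_atTop.comp Real.tendsto_log_atTop).eventually_ge_atTop 1,
    Filter.eventually_ge_atTop 1000] with u hr hu
  simp only [Function.comp_apply] at hr
  have hpow : (u / 8) ^ 4 ≤ Real.exp (u / 2) := calc
    (u / 8) ^ 4 ≤ Real.exp (u / 8) ^ 4 := by
      gcongr
      linarith [Real.add_one_le_exp (u / 8)]
    _ = Real.exp (u / 2) := by
      rw [← Real.exp_nat_mul]
      ring_nf
  calc u * Real.log u / (3 * Real.log (Real.log u)) ≤ u * u / 1 := by
        gcongr
        · exact Real.log_le_self (by linarith)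
        · linarith
    _ ≤ (u / 8) ^ 4 / 200 := by nlinarith [mul_le_mul hu hu (by norm_num) (by linarith)]
    _ ≤ Real.exp (u / 2) / 200 := by gcongr

lemma eventually_le_sqrt_log_of_le_exp {ε : ℝ} (hε : 0 < ε) : ∀ᶠ x : ℝ in atTop, ∀ N : ℝ,
    Real.exp (Real.exp (Real.exp 1)) ≤ N →
      N ≤ Real.exp (Real.log (Real.log x) * Real.log (Real.log (Real.log x)) /
        (3 * Real.log (Real.log (Real.log (Real.log x))))) →
        Real.exp (tailExponent (Real.log N) / (1 + ε)) ≤ √(Real.log x) - 1 ∧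
          Real.log N ≤ √(Real.log x) / 200 := by
  have hloglog := Real.tendsto_log_atTop.comp Real.tendsto_log_atTop
  filter_upwards [hloglog.eventually eventually_tailExponent_mul_log_div_le,
    hloglog.eventually eventually_mul_log_div_le_exp, hloglog.eventually_ge_atTop 10,
    Real.tendsto_log_atTop.eventually_gt_atTop 0] with x hexponent hexp hu hL N hN hNx
  simp only [Function.comp_apply] at hexponent hexp hu
  set u := Real.log (Real.log x)
  have hsqrt : √(Real.log x) = Real.exp (u / 2) := by
    rw [Real.exp_half, Real.exp_log hL]
  have hN0 : 0 < N := (Real.exp_pos _).trans_le hN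
  have hlogN := (Real.log_le_iff_le_exp hN0).2 hNx
  refine ⟨?_, hsqrt ▸ hlogN.trans hexp⟩
  have htail : tailExponent (Real.log N) / (1 + ε) ≤ 0.4 * u := by
    rw [div_le_iff₀ (by positivity)]
    have := tailExponent_le_tailExponent ((Real.le_log_iff_exp_le hN0).2 hN) hlogN
    nlinarith
  have hone : 1 ≤ Real.exp (0.4 * u) := Real.one_le_exp (by positivity)
  have htwo : 2 ≤ Real.exp (0.1 * u) := by linarith [Real.add_one_le_exp (0.1 * u)]
  have hsplit : √(Real.log x) = Real.exp (0.4 * u) * Real.exp (0.1 * u) := by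
    rw [hsqrt, ← Real.exp_add]
    ring_nf
  nlinarith [Real.exp_le_exp.2 htail]

lemma eventually_exp_mul_log_le : ∀ᶠ x : ℝ in atTop, ∀ w : ℝ, w ≤ √(Real.log x) - 1 →
    9 * Real.exp (0.98 * Real.log x) ≤ Real.exp (-w) * (x / (20 * Real.log x)) := by
  filter_upwards [Real.tendsto_log_atTop.eventually (eventually_log_le_mul (c := 0.001)
    (by norm_num)), Real.tendsto_log_atTop.eventually_ge_atTop 1000000,
    Filter.eventually_gt_atTop 0] with x hlog hL hx w hw
  set L := Real.log x
  have hsq : √L * √L = L := Real.mul_self_sqrt (by linarith)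
  have hsqrt : 1000 ≤ √L := Real.le_sqrt_of_sq_le (by linarith)
  rw [← mul_div_assoc, le_div_iff₀ (by positivity)]
  calc 9 * Real.exp (0.98 * L) * (20 * L)
      = 180 * (Real.exp (0.98 * L) * Real.exp (Real.log L)) := by
        rw [Real.exp_log (by linarith)]
        ring
    _ ≤ Real.exp 180 * (Real.exp (0.98 * L) * Real.exp (Real.log L)) := by
        gcongr
        linarith [Real.add_one_le_exp (180 : ℝ)]
    _ ≤ Real.exp (-w) * Real.exp L := by
        rw [← Real.exp_add, ← Real.exp_add, ← Real.exp_add]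
        exact Real.exp_le_exp.2 (by nlinarith)
    _ = Real.exp (-w) * x := by rw [Real.exp_log hx]

/-- The primes `p ∈ (x, 2x]` for which the partial sums of `∑ χ_p(n)/n` are not all positive from
`N` on. -/
noncomputable def nonposPrimes (x N : ℝ) : Finset ℕ :=
  {p ∈ primesIn x | ∃ y : ℝ, N ≤ y ∧ logSum p ⌊y⌋₊ ≤ 0}

lemma nonposPrimes_subset {x N : ℝ} {t₀ : ℕ} (hN : 4 ≤ ⌊N⌋₊) (hNt₀ : ⌊N⌋₊ ≤ t₀) :
    nonposPrimes x N ⊆ (Icc ⌊N⌋₊ t₀).biUnion (badTwistPrimes x) ∪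
      {p ∈ primesIn x | 1 / (8 * Real.log t₀) ≤ logSum p t₀ ∧ ∃ Y, t₀ ≤ Y ∧ logSum p Y ≤ 0} := by
  intro p hp
  obtain ⟨hpx, y, hNy, hy⟩ := mem_filter.1 hp
  by_contra hcon
  rw [mem_union, not_or, mem_biUnion] at hcon
  obtain ⟨htwist, hlarge⟩ := hcon
  have hlogSum (t : ℕ) (hNt : ⌊N⌋₊ ≤ t) (htt₀ : t ≤ t₀) : 1 / (8 * Real.log t) ≤ logSum p t := by
    refine one_div_log_le_sum_quadChar_div (hN.trans hNt) (not_lt.1 fun hlt ↦ ?_)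
    exact htwist ⟨t, mem_Icc.2 ⟨hNt, htt₀⟩, mem_filter.2 ⟨hpx, hlt⟩⟩
  have hNy' : ⌊N⌋₊ ≤ ⌊y⌋₊ := Nat.floor_le_floor hNy
  rcases le_total ⌊y⌋₊ t₀ with hyt₀ | hty
  · have hlog : 0 < Real.log ⌊y⌋₊ := Real.log_pos (by exact_mod_cast (by omega : 1 < ⌊y⌋₊))
    have : 0 < 1 / (8 * Real.log ⌊y⌋₊) := by positivity
    exact (this.trans_le (hlogSum _ hNy' hyt₀)).not_ge hy
  · exact hlarge (mem_filter.2 ⟨hpx, hlogSum t₀ hNt₀ le_rfl, ⌊y⌋₊, hty, hy⟩)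

theorem exists_eventually_card_nonposPrimes_le {ε : ℝ} (hε : 0 < ε) :
    ∃ C : ℝ, 0 < C ∧ ∃ N₀ : ℝ, ∀ᶠ x : ℝ in atTop, ∀ N w : ℝ, N₀ ≤ N →
      w = Real.exp (tailExponent (Real.log N) / (1 + ε)) → w ≤ √(Real.log x) - 1 →
        Real.log N ≤ √(Real.log x) / 200 →
          #(nonposPrimes x N) ≤ C * (x / Real.log x) * Real.exp (-w) +
            9 * Real.exp (0.98 * Real.log x) := by
  obtain ⟨C, hC, N₀, hsmall⟩ := exists_eventually_card_biUnion_badTwistPrimes_le hε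
  refine ⟨C, hC, max N₀ 4, ?_⟩
  filter_upwards [hsmall, eventually_exists_card_logSum_nonpos_le,
    Real.tendsto_log_atTop.eventually_ge_atTop 0] with x hsmall hlarge hL N w hN hw hwx hNx
  obtain ⟨hN₀, hN4⟩ := max_le_iff.1 hN
  obtain ⟨t₀, ht₀, ht₀_ge, ht₀_le, hlarge⟩ := hlarge
  have hNt₀ : ⌊N⌋₊ ≤ t₀ := Nat.floor_le_of_le
    ((Real.log_le_log_iff (by linarith) (by positivity)).1 (hNx.trans ht₀_ge))
  have hcard := (card_le_card (nonposPrimes_subset (x := x) (Nat.le_floor hN4) hNt₀)).trans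
    (card_union_le _ _)
  have hexp : Real.exp (0.5 * Real.log x) ≤ Real.exp (0.98 * Real.log x) :=
    Real.exp_le_exp.2 (by linarith)
  have hcard' := (Nat.cast_le (α := ℝ)).2 hcard
  push_cast at hcard'
  linarith [hsmall N w hN₀ hw hwx t₀ ht₀_le]

theorem exists_eventually_card_nonposPrimes_div_le {ε : ℝ} (hε : 0 < ε) :
    ∃ C : ℝ, 0 < C ∧ ∃ N₀ : ℝ, ∀ᶠ x : ℝ in atTop, ∀ N : ℝ, N₀ ≤ N →
      N ≤ Real.exp (Real.log (Real.log x) * Real.log (Real.log (Real.log x)) /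
        (3 * Real.log (Real.log (Real.log (Real.log x))))) →
        #(nonposPrimes x N) / (#(primesIn x) : ℝ) ≤
          C * Real.exp (-Real.exp (tailExponent (Real.log N) / (1 + ε))) := by
  obtain ⟨C, hC, N₀, hcard⟩ := exists_eventually_card_nonposPrimes_le hε
  refine ⟨20 * C + 1, by positivity, max N₀ (Real.exp (Real.exp (Real.exp 1))), ?_⟩
  filter_upwards [hcard, eventually_le_sqrt_log_of_le_exp hε, eventually_exp_mul_log_le,
    eventually_div_log_le_card_primesIn, Real.tendsto_log_atTop.eventually_gt_atTop 0,
    Filter.eventually_gt_atTop 0] with x hcard hrange herror hprimes hL hx N hN hNx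
  obtain ⟨hN₀, hNexp⟩ := max_le_iff.1 hN
  obtain ⟨hwx, hlogN⟩ := hrange N hNexp hNx
  set w := Real.exp (tailExponent (Real.log N) / (1 + ε)) with hw
  set L := Real.log x
  have hpos : 0 < x / (20 * L) := by positivity
  rw [div_le_iff₀ (hpos.trans_le hprimes)]
  calc (#(nonposPrimes x N) : ℝ)
      ≤ C * (x / L) * Real.exp (-w) + 9 * Real.exp (0.98 * L) := hcard N w hN₀ hw hwx hlogN
    _ ≤ C * (x / L) * Real.exp (-w) + Real.exp (-w) * (x / (20 * L)) :=
        add_le_add_right (herror w hwx) _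
    _ = (20 * C + 1) * Real.exp (-w) * (x / (20 * L)) := by
        field_simp
    _ ≤ (20 * C + 1) * Real.exp (-w) * #(primesIn x) := by gcongr

lemma exists_forall_le_exp_log_mul_log_div {δ : ℝ} (hδ : 0 < δ) (a : ℝ) :
    ∃ x₀ : ℝ, ∀ x, x₀ ≤ x → a ≤
      Real.exp (Real.log (Real.log (Real.log x)) * Real.log (Real.log (Real.log (Real.log x))) /
        (δ * Real.log (Real.log (Real.log (Real.log (Real.log x)))))) := by
  have hlog₃ := Real.tendsto_log_atTop.comp (Real.tendsto_log_atTop.comp Real.tendsto_log_atTop)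
  have hlog₄ := Real.tendsto_log_atTop.comp hlog₃
  have hlog₅ := Real.tendsto_log_atTop.comp hlog₄
  refine Filter.eventually_atTop.1 ?_
  filter_upwards [hlog₅.eventually_gt_atTop 0, hlog₄.eventually_ge_atTop 0,
    hlog₃.eventually_ge_atTop (δ * a), hlog₃.eventually_ge_atTop 0] with x hq hr hma hm
  simp only [Function.comp_apply] at hq hr hma hm
  set m := Real.log (Real.log (Real.log x))
  calc a ≤ m / δ := by rwa [le_div_iff₀' hδ]
    _ ≤ m * Real.log m / (δ * Real.log (Real.log m)) := by
        rw [mul_div_mul_comm]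
        exact le_mul_of_one_le_right (by positivity) ((one_le_div hq).2 (Real.log_le_self hr))
    _ ≤ _ := by linarith [Real.add_one_le_exp (m * Real.log m / (δ * Real.log (Real.log m)))]

end Probability

theorem stmt15_general :
    ∀ ε > (0 : ℝ), ∃ C > (0 : ℝ), ∃ N₀ x₀ : ℝ, ∀ x : ℝ, x₀ < x → ∀ N : ℝ, N₀ ≤ N →
      N ≤ Real.exp (Real.log (Real.log x) * Real.log (Real.log (Real.log x)) /
          (3 * Real.log (Real.log (Real.log (Real.log x))))) →
      (((primesIn x).filter fun p => ∃ y : ℝ, N ≤ y ∧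
          (∑ n ∈ Finset.Icc 1 ⌊y⌋₊, ((jacobiSym (n : ℤ) p : ℤ) : ℝ) / (n : ℝ)) ≤ 0).card : ℝ) /
          ((primesIn x).card : ℝ) ≤
        C * Real.exp (-(Real.exp (Real.log N * Real.log (Real.log (Real.log N)) /
          ((1 + ε) * Real.log (Real.log N))))) := by
  intro ε hε
  obtain ⟨C, hC, N₀, hbound⟩ := exists_eventually_card_nonposPrimes_div_le hε
  obtain ⟨x₀, hx₀⟩ := Filter.eventually_atTop.1 hbound
  refine ⟨C, hC, N₀, x₀, fun x hx N hN hNx ↦ ?_⟩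
  rw [mul_comm (1 + ε), ← div_div]
  exact hx₀ x hx.le N hN hNx

theorem stmt15 :
    ∀ ε > (0 : ℝ), ∀ δ > (0 : ℝ), ∃ C > (0 : ℝ), ∃ x₀ : ℝ, ∀ x : ℝ, x₀ < x → ∀ N : ℝ,
      Real.exp (Real.log (Real.log (Real.log x)) * Real.log (Real.log (Real.log (Real.log x))) /
          (δ * Real.log (Real.log (Real.log (Real.log (Real.log x)))))) ≤ N →
      N ≤ Real.exp (Real.log (Real.log x) * Real.log (Real.log (Real.log x)) /
          (3 * Real.log (Real.log (Real.log (Real.log x))))) →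
      (((primesIn x).filter fun p => ∃ y : ℝ, N ≤ y ∧
          (∑ n ∈ Finset.Icc 1 ⌊y⌋₊, ((jacobiSym (n : ℤ) p : ℤ) : ℝ) / (n : ℝ)) ≤ 0).card : ℝ) /
          ((primesIn x).card : ℝ) ≤
        C * Real.exp (-(Real.exp (Real.log N * Real.log (Real.log (Real.log N)) /
          ((1 + ε) * Real.log (Real.log N))))) := by
  intro ε hε δ hδ
  obtain ⟨C, hC, N₀, x₁, hbound⟩ := stmt15_general ε hε
  obtain ⟨x₂, hx₂⟩ := exists_forall_le_exp_log_mul_log_div hδ N₀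
  exact ⟨C, hC, max x₁ x₂, fun x hx N hxN ↦
    hbound x ((le_max_left _ _).trans_lt hx) N ((hx₂ x ((le_max_right _ _).trans hx.le)).trans hxN)⟩
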